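/- arXiv:1208.0509 — 2 statements merged into one kernel-verified Lean document; each statement's English description precedes it below -/
import Mathlib

section
/- Let d ≥ 1, let r ≥ 2 be a prime, and let N = (d+1)(r−1). Let f : Δ_N → ℝ^d be a continuous map on the standard N-simplex, whose N+1 vertices are colored with d+2 colors so that the color classes satisfy |C_0| = |C_1| = … = |C_d| = r−1 and |C_{d+1}| = 1. Then the simplex Δ_N has r pairwise disjoint rainbow faces F_1, F_2, …, F_r whose images under f have a non-empty intersection: ⋂_{i=1}^r f(F_i) ≠ ∅. -/
open scoped Classical

/-- The face of the standard `N`-simplex (in `Fin (N+1) → ℝ`) spanned by the set `F`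
of its vertices. -/
def simplexFace (N : ℕ) (F : Finset (Fin (N + 1))) : Set (Fin (N + 1) → ℝ) :=
  {x | x ∈ stdSimplex ℝ (Fin (N + 1)) ∧ ∀ i ∉ F, x i = 0}

/-!
Write `p` for the prime `r` and `G` for `ZMod p`. Suppose that there are no such faces. At each
point of the complex of `p`-tuples of disjoint rainbow faces, the weights of the `p` components and
the coordinates of their images under `f` form a `p × (d + 1)` matrix, and some column of it is not
constant. On a fine subdivision, labelling points by the maximal entries of the column of largest
oscillation then gives a `G`-equivariant chain map from the cells of the complex to the join of
`d + 1` copies of the boundary of the simplex on `G`, equal to `1` on the empty cell.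

No such map exists. The chains of the full join form the exterior algebra of the space of functions
on `Fin (d + 1) × G`, with contraction against the sum of the coordinates as boundary. Without the
vertex of the last color, the complex is the join of `d + 1` chessboard complexes `p × (p - 1)`,
which carries a fundamental cycle. The image of the cycle vanishes, because the last vertex cones
the cycle off while the target has no simplices of the dimension of the cone. On the other hand the
image modulo `p` does not depend on the equivariant map: the difference of two maps is homotopic to
one that is invariant on top cells, whose orbits have `p` elements. Labelling each vertex by its own
row and color maps the cycle to `((p - 1)!) ^ (d + 1)` times a generator, up to sign.
-/

namespace ColoredTverberg

section Contraction

open CliffordAlgebra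

variable {R M : Type*} [CommRing R] [AddCommGroup M] [Module R M] {Q : QuadraticForm R M}

theorem involute_contractLeft (φ : Module.Dual R M) (x : CliffordAlgebra Q) :
    involute (contractLeft φ x) = -contractLeft φ (involute x) := by
  induction x using CliffordAlgebra.left_induction with
  | algebraMap c => simp
  | add x y hx hy => simp only [map_add, hx, hy, neg_add]
  | ι_mul x v hx =>
    simp only [contractLeft_ι_mul, map_sub, map_smul, map_mul, hx, involute_ι, neg_mul, map_neg,
      mul_neg]
    abel

theorem contractLeft_mul (φ : Module.Dual R M) (x y : CliffordAlgebra Q) :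
    contractLeft φ (x * y) = contractLeft φ x * y + involute x * contractLeft φ y := by
  induction x using CliffordAlgebra.left_induction with
  | algebraMap c => simp [contractLeft_algebraMap_mul]
  | add x x' hx hx' => simp only [add_mul, map_add, hx, hx']; abel
  | ι_mul x v hx =>
    simp only [mul_assoc, contractLeft_ι_mul, hx, map_mul, involute_ι, sub_mul, mul_add,
      smul_mul_assoc, neg_mul]
    abel

theorem contractLeft_map {M' : Type*} [AddCommGroup M'] [Module R M'] (φ : Module.Dual R M')
    (f : M →ₗ[R] M') (x : ExteriorAlgebra R M) :
    contractLeft φ (ExteriorAlgebra.map f x) =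
      ExteriorAlgebra.map f (contractLeft (φ ∘ₗ f) x) := by
  induction x using CliffordAlgebra.left_induction with
  | algebraMap c => simp
  | add x y hx hy => simp only [map_add, hx, hy]
  | ι_mul x v hx =>
    rw [map_mul, ExteriorAlgebra.map_apply_ι, contractLeft_ι_mul, contractLeft_ι_mul, hx, map_sub,
      map_smul, map_mul, ExteriorAlgebra.map_apply_ι, LinearMap.comp_apply]

/-- Iterated contraction by a list of functionals, the head of the list being applied first. -/
noncomputable def contractList : List (Module.Dual R M) → CliffordAlgebra Q →ₗ[R] CliffordAlgebra Q
  | [] => LinearMap.id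
  | φ :: l => contractList l ∘ₗ contractLeft φ

@[simp]
theorem contractList_nil (x : CliffordAlgebra Q) : contractList [] x = x := rfl

@[simp]
theorem contractList_cons (φ : Module.Dual R M) (l : List (Module.Dual R M))
    (x : CliffordAlgebra Q) : contractList (φ :: l) x = contractList l (contractLeft φ x) := rfl

theorem contractList_append (l l' : List (Module.Dual R M)) (x : CliffordAlgebra Q) :
    contractList (l ++ l') x = contractList l' (contractList l x) := by
  induction l generalizing x with
  | nil => rfl
  | cons φ _ ih => exact ih _

theorem contractLeft_contractList (φ : Module.Dual R M) (l : List (Module.Dual R M))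
    (x : CliffordAlgebra Q) :
    contractLeft φ (contractList l x) =
      (-1 : R) ^ l.length • contractList l (contractLeft φ x) := by
  induction l generalizing x with
  | nil => simp
  | cons ψ l ih => simp [ih, contractLeft_comm φ ψ, pow_succ]

theorem contractList_eq_zero_iff_of_perm {l l' : List (Module.Dual R M)} (h : l.Perm l')
    (x : CliffordAlgebra Q) : contractList l x = 0 ↔ contractList l' x = 0 := by
  induction h generalizing x with
  | nil => rfl
  | cons φ _ ih => exact ih _
  | swap φ ψ _ => simp [contractLeft_comm φ ψ]
  | trans _ _ ih ih' => exact (ih x).trans (ih' x)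

theorem contractList_eq_zero_of_subperm {l l' : List (Module.Dual R M)} (h : l.Subperm l')
    {x : CliffordAlgebra Q} (hx : contractList l x = 0) : contractList l' x = 0 := by
  obtain ⟨l₀, hl₀, hsub⟩ := h
  obtain ⟨m, hm⟩ := hsub.exists_perm_append
  rw [contractList_eq_zero_iff_of_perm hm, contractList_append,
    (contractList_eq_zero_iff_of_perm hl₀ x).2 hx, map_zero]

theorem contractList_eq_zero_of_mem {φ : Module.Dual R M} {l : List (Module.Dual R M)}
    (hφ : φ ∈ l) {x : CliffordAlgebra Q} (hx : contractLeft φ x = 0) : contractList l x = 0 :=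
  contractList_eq_zero_of_subperm (List.singleton_subperm_iff.2 hφ) hx

theorem contractList_eq_zero_of_not_nodup {l : List (Module.Dual R M)} (h : ¬l.Nodup)
    (x : CliffordAlgebra Q) : contractList l x = 0 := by
  obtain ⟨φ, hφ⟩ := List.exists_duplicate_iff_not_nodup.2 h
  exact contractList_eq_zero_of_subperm (List.duplicate_iff_sublist.1 hφ).subperm
    (contractLeft_contractLeft φ x)

theorem contractLeft_contractList_of_mem {φ : Module.Dual R M} {l : List (Module.Dual R M)}
    (hφ : φ ∈ l) (x : CliffordAlgebra Q) : contractLeft φ (contractList l x) = 0 := by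
  rw [contractLeft_contractList, contractList_eq_zero_of_mem hφ (contractLeft_contractLeft φ x),
    smul_zero]

theorem contractList_mul_of_contractLeft_eq_zero {l : List (Module.Dual R M)}
    {a : CliffordAlgebra Q} (ha : ∀ φ ∈ l, contractLeft φ a = 0) (y : CliffordAlgebra Q) :
    contractList l (a * y) = involute^[l.length] a * contractList l y := by
  induction l generalizing a y with
  | nil => simp
  | cons φ l ih =>
    simp only [List.forall_mem_cons] at ha
    rw [contractList_cons, contractLeft_mul, ha.1, zero_mul, zero_add, ih fun ψ hψ => ?_]
    · simp
    · rw [← neg_eq_zero, ← involute_contractLeft, ha.2 ψ hψ, map_zero]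

end Contraction

section Wedge

open CliffordAlgebra ExteriorAlgebra

variable {R M M' : Type*} [CommRing R] [AddCommGroup M] [Module R M] [AddCommGroup M'] [Module R M']

variable (R) in
/-- The product `v₁ ∧ ⋯ ∧ vₙ` of a list of vectors in the exterior algebra. -/
noncomputable def wedge (l : List M) : ExteriorAlgebra R M := (l.map (ExteriorAlgebra.ι R)).prod

@[simp]
theorem wedge_nil : wedge R ([] : List M) = 1 := rfl

@[simp]
theorem wedge_cons (v : M) (l : List M) :
    wedge R (v :: l) = ExteriorAlgebra.ι R v * wedge R l := List.prod_cons

theorem wedge_eq_ιMulti (l : List M) : wedge R l = ιMulti R l.length l.get := by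
  rw [ιMulti_apply, wedge]
  conv_lhs => rw [← List.ofFn_get l, List.map_ofFn]
  rfl

theorem ιMulti_eq_wedge_ofFn {n : ℕ} (v : Fin n → M) : ιMulti R n v = wedge R (List.ofFn v) := by
  rw [ιMulti_apply, wedge, List.map_ofFn]
  rfl

theorem wedge_eq_zero_of_not_nodup {l : List M} (h : ¬l.Nodup) : wedge R l = 0 := by
  rw [wedge_eq_ιMulti]
  exact ιMulti_eq_zero_of_not_inj fun hinj => h (List.nodup_iff_injective_get.2 hinj)

theorem involute_wedge (l : List M) :
    involute (wedge R l) = (-1 : R) ^ l.length • wedge R l := by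
  induction l with
  | nil => simp
  | cons v l ih => simp [ih, pow_succ, involute_ι]

theorem map_wedge (f : M →ₗ[R] M') (l : List M) :
    ExteriorAlgebra.map f (wedge R l) = wedge R (l.map f) := by
  induction l with
  | nil => simp
  | cons v l ih => simp [ih]

theorem contractLeft_wedge_eq_zero {φ : Module.Dual R M} {l : List M} (h : ∀ v ∈ l, φ v = 0) :
    contractLeft φ (wedge R l) = 0 := by
  induction l with
  | nil => simp
  | cons v l ih =>
    simp only [List.forall_mem_cons] at h
    rw [wedge_cons, contractLeft_ι_mul, h.1, ih h.2, zero_smul, mul_zero, sub_zero]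

theorem wedge_mul_ι_of_mem {v : M} {l : List M} (h : v ∈ l) :
    wedge R l * ExteriorAlgebra.ι R v = 0 := by
  have hconcat : wedge R (l ++ [v]) = wedge R l * ExteriorAlgebra.ι R v := by simp [wedge]
  rw [← hconcat]
  exact wedge_eq_zero_of_not_nodup fun hnd => List.disjoint_of_nodup_append hnd h (by simp)

end Wedge

section Degree

open CliffordAlgebra ExteriorAlgebra

variable {R M M' : Type*} [CommRing R] [AddCommGroup M] [Module R M] [AddCommGroup M'] [Module R M']

theorem wedge_mem_exteriorPower (l : List M) : wedge R l ∈ ⋀[R]^l.length M := by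
  rw [wedge_eq_ιMulti, ← ιMulti_span_fixedDegree]
  exact Submodule.subset_span ⟨_, rfl⟩

theorem map_mem_of_mem_exteriorPower {N : Type*} [AddCommGroup N] [Module R N] {n : ℕ}
    (f : ExteriorAlgebra R M →ₗ[R] N) (S : Submodule R N)
    (h : ∀ l : List M, l.length = n → f (wedge R l) ∈ S) {x : ExteriorAlgebra R M}
    (hx : x ∈ ⋀[R]^n M) : f x ∈ S := by
  rw [← ιMulti_span_fixedDegree] at hx
  refine (Submodule.span_le (p := S.comap f)).2 ?_ hx
  rintro _ ⟨v, rfl⟩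
  rw [SetLike.mem_coe, Submodule.mem_comap, ιMulti_eq_wedge_ofFn]
  exact h _ (List.length_ofFn)

theorem ι_mul_mem_exteriorPower (v : M) {n : ℕ} {x : ExteriorAlgebra R M} (hx : x ∈ ⋀[R]^n M) :
    ExteriorAlgebra.ι R v * x ∈ ⋀[R]^(n + 1) M :=
  map_mem_of_mem_exteriorPower (LinearMap.mulLeft R (ExteriorAlgebra.ι R v)) _
    (fun l hl => by
      rw [LinearMap.mulLeft_apply, ← wedge_cons, ← hl]
      exact wedge_mem_exteriorPower (v :: l)) hx

theorem wedge_mul_mem_exteriorPower (l : List M) {n : ℕ} {x : ExteriorAlgebra R M}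
    (hx : x ∈ ⋀[R]^n M) : wedge R l * x ∈ ⋀[R]^(n + l.length) M := by
  induction l with
  | nil => simpa
  | cons v l ih =>
    rw [wedge_cons, mul_assoc]
    exact ι_mul_mem_exteriorPower v ih

theorem map_mem_exteriorPower (f : M →ₗ[R] M') {n : ℕ} {x : ExteriorAlgebra R M}
    (hx : x ∈ ⋀[R]^n M) : ExteriorAlgebra.map f x ∈ ⋀[R]^n M' :=
  map_mem_of_mem_exteriorPower (ExteriorAlgebra.map f).toLinearMap _
    (fun l hl => by
      rw [AlgHom.toLinearMap_apply, map_wedge, ← hl, ← List.length_map f]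
      exact wedge_mem_exteriorPower _) hx

theorem contractLeft_wedge_mem_exteriorPower (φ : Module.Dual R M) (l : List M) :
    contractLeft φ (wedge R l) ∈ ⋀[R]^(l.length - 1) M := by
  induction l with
  | nil => simp
  | cons v l ih =>
    rw [wedge_cons, contractLeft_ι_mul]
    refine Submodule.sub_mem _ (Submodule.smul_mem _ _ (wedge_mem_exteriorPower l)) ?_
    cases l with
    | nil => simp
    | cons w l => exact ι_mul_mem_exteriorPower v ih

theorem contractLeft_mem_exteriorPower (φ : Module.Dual R M) {n : ℕ} {x : ExteriorAlgebra R M}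
    (hx : x ∈ ⋀[R]^n M) : contractLeft φ x ∈ ⋀[R]^(n - 1) M :=
  map_mem_of_mem_exteriorPower (contractLeft φ) _
    (fun l hl => hl ▸ contractLeft_wedge_mem_exteriorPower φ l) hx

theorem exists_smul_one_eq_of_mem_exteriorPower_zero {x : ExteriorAlgebra R M}
    (hx : x ∈ ⋀[R]^0 M) : ∃ c : R, c • 1 = x :=
  Submodule.mem_span_singleton.1 <|
    map_mem_of_mem_exteriorPower LinearMap.id (Submodule.span R {(1 : ExteriorAlgebra R M)})
      (fun l hl => by simp [List.length_eq_zero_iff.1 hl, Submodule.mem_span_singleton_self]) hx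

theorem contractLeft_eq_zero_of_mem_exteriorPower_zero (φ : Module.Dual R M)
    {x : ExteriorAlgebra R M} (hx : x ∈ ⋀[R]^0 M) : contractLeft φ x = 0 := by
  obtain ⟨c, rfl⟩ := exists_smul_one_eq_of_mem_exteriorPower_zero hx
  rw [map_smul, contractLeft_one, smul_zero]

theorem contractList_mem_exteriorPower (l : List (Module.Dual R M)) {n : ℕ}
    {x : ExteriorAlgebra R M} (hx : x ∈ ⋀[R]^n M) :
    contractList l x ∈ ⋀[R]^(n - l.length) M := by
  induction l generalizing n x with
  | nil => exact hx
  | cons φ l ih =>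
    have := ih (contractLeft_mem_exteriorPower φ hx)
    rwa [Nat.sub_sub, Nat.add_comm] at this

theorem contractList_eq_zero_of_lt_length {l : List (Module.Dual R M)} {n : ℕ}
    {x : ExteriorAlgebra R M} (hx : x ∈ ⋀[R]^n M) (hn : n < l.length) : contractList l x = 0 := by
  induction l generalizing n x with
  | nil => simp at hn
  | cons φ l ih =>
    rw [contractList_cons]
    cases n with
    | zero => rw [contractLeft_eq_zero_of_mem_exteriorPower_zero φ hx, map_zero]
    | succ n => exact ih (contractLeft_mem_exteriorPower φ hx) (by simpa using hn)

end Degree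

section Coordinates

open CliffordAlgebra ExteriorAlgebra

variable {R ι : Type*} [CommRing R]

/-- Contraction of a chain `x` of the full simplex on `ι`, encoded as an element of the exterior
algebra of `ι → R`, by the coordinates in `us`: up to sign this is the link of the simplex `us`
in `x`. -/
noncomputable def contractCoords (us : List ι) :
    ExteriorAlgebra R (ι → R) →ₗ[R] ExteriorAlgebra R (ι → R) :=
  contractList (us.map LinearMap.proj)

/-- The vertex `u` of the simplex on `ι`, encoded as a basis vector. -/
noncomputable def vertex (R : Type*) [CommRing R] (u : ι) : ι → R := Pi.single u 1

@[simp]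
theorem vertex_self (u : ι) : vertex R u u = 1 := Pi.single_eq_same u 1

theorem vertex_of_ne {u v : ι} (h : v ≠ u) : vertex R u v = 0 := Pi.single_eq_of_ne h 1

/-- The oriented simplex with vertex list `us` as an element of the exterior algebra of `ι → R`. -/
noncomputable def orientedSimplex (R : Type*) [CommRing R] (us : List ι) :
    ExteriorAlgebra R (ι → R) :=
  wedge R (us.map (vertex R))

theorem contractCoords_append (us vs : List ι) (x : ExteriorAlgebra R (ι → R)) :
    contractCoords (us ++ vs) x = contractCoords vs (contractCoords us x) := by
  rw [contractCoords, List.map_append, contractList_append, contractCoords, contractCoords]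

theorem contractCoords_eq_zero_of_subset {us vs : List ι} (hus : us.Nodup) (h : us ⊆ vs)
    {x : ExteriorAlgebra R (ι → R)} (hx : contractCoords us x = 0) : contractCoords vs x = 0 := by
  obtain ⟨l, hperm, hsub⟩ := hus.subperm h
  exact contractList_eq_zero_of_subperm ⟨_, hperm.map _, hsub.map _⟩ hx

theorem contractCoords_eq_zero_of_not_nodup {us : List ι} (hus : ¬us.Nodup)
    (x : ExteriorAlgebra R (ι → R)) : contractCoords us x = 0 :=
  contractList_eq_zero_of_not_nodup (fun h => hus h.of_map) x

theorem contractLeft_proj_contractCoords {u : ι} {us : List ι} (hu : u ∈ us)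
    (x : ExteriorAlgebra R (ι → R)) :
    contractLeft (LinearMap.proj u) (contractCoords us x) = 0 :=
  contractLeft_contractList_of_mem (List.mem_map_of_mem hu) x

theorem contractLeft_contractCoords (φ : Module.Dual R (ι → R)) (us : List ι)
    (x : ExteriorAlgebra R (ι → R)) :
    contractLeft φ (contractCoords us x) =
      (-1 : R) ^ us.length • contractCoords us (contractLeft φ x) := by
  rw [contractCoords, contractLeft_contractList, List.length_map]

theorem contractCoords_mul_of_contractLeft_eq_zero {us : List ι} {a : ExteriorAlgebra R (ι → R)}
    (ha : ∀ u ∈ us, contractLeft (LinearMap.proj u) a = 0) (y : ExteriorAlgebra R (ι → R)) :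
    contractCoords us (a * y) = involute^[us.length] a * contractCoords us y := by
  rw [contractCoords, contractList_mul_of_contractLeft_eq_zero (by simpa using ha),
    List.length_map]

theorem contractLeft_proj_orientedSimplex_eq_zero {u : ι} {us : List ι} (hu : u ∉ us) :
    contractLeft (LinearMap.proj u) (orientedSimplex R us) = 0 :=
  contractLeft_wedge_eq_zero <| by
    simp only [List.forall_mem_map, LinearMap.proj_apply]
    exact fun v hv => vertex_of_ne (ne_of_mem_of_not_mem hv hu).symm

theorem contractCoords_orientedSimplex_mul {us : List ι} (hus : us.Nodup)
    {y : ExteriorAlgebra R (ι → R)} (hy : ∀ u ∈ us, contractLeft (LinearMap.proj u) y = 0) :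
    contractCoords us (orientedSimplex R us * y) = y := by
  induction us with
  | nil => simp [contractCoords, orientedSimplex]
  | cons u us ih =>
    rw [List.nodup_cons] at hus
    rw [List.forall_mem_cons] at hy
    have hu : contractLeft (LinearMap.proj u) (orientedSimplex R (u :: us) * y) =
        orientedSimplex R us * y := by
      rw [orientedSimplex, List.map_cons, wedge_cons, mul_assoc, contractLeft_ι_mul,
        ← orientedSimplex, contractLeft_mul, contractLeft_proj_orientedSimplex_eq_zero hus.1, hy.1]
      simp
    rw [contractCoords, List.map_cons, contractList_cons, hu]
    exact ih hus.2 hy.2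

theorem orientedSimplex_mul_eq_zero {us : List ι} (hus : ∀ u, u ∈ us) {n : ℕ}
    {x : ExteriorAlgebra R (ι → R)} (hx : x ∈ ⋀[R]^(n + 1) (ι → R)) :
    orientedSimplex R us * x = 0 := by
  have : Fintype ι := ⟨us.toFinset, fun u => List.mem_toFinset.2 (hus u)⟩
  have hι (v : ι → R) : orientedSimplex R us * ExteriorAlgebra.ι R v = 0 := by
    have hv : v = ∑ u, v u • vertex R u := by
      ext u
      simp [vertex, Pi.single_apply]
    rw [hv, map_sum, Finset.mul_sum]
    refine Finset.sum_eq_zero fun u _ => ?_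
    rw [map_smul, mul_smul_comm, orientedSimplex, wedge_mul_ι_of_mem, smul_zero]
    exact List.mem_map_of_mem (hus u)
  have hwedge (l : List (ι → R)) (hl : l.length = n + 1) :
      LinearMap.mulLeft R (orientedSimplex R us) (wedge R l) ∈
        (⊥ : Submodule R (ExteriorAlgebra R (ι → R))) := by
    obtain ⟨v, l, rfl⟩ := List.exists_cons_of_length_eq_add_one hl
    rw [LinearMap.mulLeft_apply, wedge_cons, ← mul_assoc, hι, zero_mul]
    exact zero_mem _
  exact (Submodule.mem_bot R).1 (map_mem_of_mem_exteriorPower _ _ hwedge hx)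

variable [Finite ι]

theorem eq_zero_of_contractLeft_proj_eq_zero {n : ℕ} {x : ExteriorAlgebra R (ι → R)}
    (hx : x ∈ ⋀[R]^(n + 1) (ι → R)) (h : ∀ u, contractLeft (LinearMap.proj u) x = 0) : x = 0 := by
  cases nonempty_fintype ι
  rw [← contractCoords_orientedSimplex_mul (Finset.nodup_toList Finset.univ) fun u _ => h u,
    orientedSimplex_mul_eq_zero (by simp) hx, map_zero]

theorem eq_zero_of_contractCoords_eq_zero {n : ℕ} {x : ExteriorAlgebra R (ι → R)}
    (hx : x ∈ ⋀[R]^n (ι → R)) (h : ∀ us : List ι, us.length = n → contractCoords us x = 0) :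
    x = 0 := by
  induction n generalizing x with
  | zero => simpa [contractCoords] using h [] rfl
  | succ n ih =>
    exact eq_zero_of_contractLeft_proj_eq_zero hx fun u =>
      ih (contractLeft_mem_exteriorPower _ hx) fun us hus => h (u :: us) (by simp [hus])

end Coordinates

section Boundary

open CliffordAlgebra

variable {R ι : Type*} [CommRing R] [Fintype ι]

variable (R ι) in
/-- The functional sending every vertex of the simplex on `ι` to `1`. -/
noncomputable def augmentation : Module.Dual R (ι → R) := ∑ u, LinearMap.proj u

theorem augmentation_apply (v : ι → R) : augmentation R ι v = ∑ u, v u := by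
  simp [augmentation]

/-- The boundary of augmented chains of the simplex on `ι`, which is the contraction by the
augmentation. -/
noncomputable def extBoundary : ExteriorAlgebra R (ι → R) →ₗ[R] ExteriorAlgebra R (ι → R) :=
  contractLeft (augmentation R ι)

theorem extBoundary_extBoundary (x : ExteriorAlgebra R (ι → R)) :
    extBoundary (extBoundary x) = 0 :=
  contractLeft_contractLeft _ x

theorem extBoundary_contractCoords (us : List ι) (x : ExteriorAlgebra R (ι → R)) :
    extBoundary (contractCoords us x) = (-1 : R) ^ us.length • contractCoords us (extBoundary x) :=
  contractLeft_contractCoords _ us x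

theorem contractLeft_extBoundary (φ : Module.Dual R (ι → R)) (x : ExteriorAlgebra R (ι → R)) :
    contractLeft φ (extBoundary x) = -extBoundary (contractLeft φ x) :=
  contractLeft_comm _ _ x

theorem extBoundary_mul (x y : ExteriorAlgebra R (ι → R)) :
    extBoundary (x * y) = extBoundary x * y + involute x * extBoundary y :=
  contractLeft_mul _ x y

theorem extBoundary_ι_mul {v : ι → R} (hv : augmentation R ι v = 1)
    (x : ExteriorAlgebra R (ι → R)) :
    extBoundary (ExteriorAlgebra.ι R v * x) = x - ExteriorAlgebra.ι R v * extBoundary x := by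
  rw [extBoundary, contractLeft_ι_mul, hv, one_smul]

theorem augmentation_vertex (u : ι) : augmentation R ι (vertex R u) = 1 := by
  rw [augmentation_apply, Fintype.sum_eq_single u fun _ h => vertex_of_ne h, vertex_self]

end Boundary

section ColumnFree

open CliffordAlgebra

variable {R J κ : Type*} [CommRing R] [Fintype κ]

variable (κ) in
/-- The vertices `(j, k)` of the column `j`. -/
noncomputable def column (j : J) : List (J × κ) := Finset.univ.toList.map (Prod.mk j)

/-- The vertices of the column `j` other than `(j, o)`. -/
noncomputable def columnErase (o : κ) (j : J) : List (J × κ) :=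
  (Finset.univ.erase o).toList.map (Prod.mk j)

@[simp]
theorem mem_column {j : J} {u : J × κ} : u ∈ column κ j ↔ u.1 = j := by
  simp [column, Prod.ext_iff, eq_comm]

@[simp]
theorem mem_columnErase {o : κ} {j : J} {u : J × κ} :
    u ∈ columnErase o j ↔ u.1 = j ∧ u.2 ≠ o := by
  simp [columnErase, Prod.ext_iff, eq_comm, and_comm]

theorem nodup_column (j : J) : (column κ j).Nodup :=
  (Finset.nodup_toList _).map (Prod.mk_right_injective j)

theorem nodup_columnErase (o : κ) (j : J) : (columnErase o j).Nodup :=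
  (Finset.nodup_toList _).map (Prod.mk_right_injective j)

theorem length_columnErase (o : κ) (j : J) :
    (columnErase o j).length = Fintype.card κ - 1 := by
  simp [columnErase]

variable (R J κ) in
/-- The chains of the simplex on `J × κ` none of whose simplices contains a whole column, that is,
the chains of the join of `J` copies of the boundary of the simplex on `κ`. -/
noncomputable def columnFree : Submodule R (ExteriorAlgebra R (J × κ → R)) :=
  ⨅ j : J, LinearMap.ker (contractCoords (column κ j))

theorem mem_columnFree {x : ExteriorAlgebra R (J × κ → R)} :
    x ∈ columnFree R J κ ↔ ∀ j, contractCoords (column κ j) x = 0 := by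
  simp [columnFree]

theorem contractCoords_eq_zero_of_mem_columnFree {x : ExteriorAlgebra R (J × κ → R)}
    (hx : x ∈ columnFree R J κ) {j : J} {us : List (J × κ)} (h : column κ j ⊆ us) :
    contractCoords us x = 0 :=
  contractCoords_eq_zero_of_subset (nodup_column j) h (mem_columnFree.1 hx j)

theorem exists_column_subset [Fintype J] {us : List (J × κ)} (hus : us.Nodup)
    (h : Fintype.card J * (Fintype.card κ - 1) < us.length) : ∃ j : J, column κ j ⊆ us := by
  by_contra! hcon
  have hmissing (j : J) : ∃ k, (j, k) ∉ us := by
    obtain ⟨⟨_, k⟩, hk, hkus⟩ := Set.not_subset.1 (hcon j)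
    exact ⟨k, by rwa [← mem_column.1 hk]⟩
  choose k hk using hmissing
  have hsub : us.toFinset ⊆ (Finset.univ.image fun j => (j, k j))ᶜ := by
    rintro ⟨j, l⟩ hjl
    simp only [Finset.mem_compl, Finset.mem_image, Finset.mem_univ, true_and, Prod.mk.injEq]
    rintro ⟨i, rfl, rfl⟩
    exact hk i (List.mem_toFinset.1 hjl)
  have hcard := Finset.card_le_card hsub
  rw [List.toFinset_card_of_nodup hus, Finset.card_compl, Fintype.card_prod,
    Finset.card_image_of_injective _ fun _ _ h => congrArg Prod.fst h, Finset.card_univ] at hcard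
  rw [Nat.mul_sub_one] at h
  lia

/-- The sphere `columnFree` has dimension `|J| (|κ| - 1) - 1`. -/
theorem eq_zero_of_mem_columnFree_of_lt [Fintype J] {n : ℕ}
    (hn : Fintype.card J * (Fintype.card κ - 1) < n) {x : ExteriorAlgebra R (J × κ → R)}
    (hx : x ∈ columnFree R J κ ⊓ ⋀[R]^n (J × κ → R)) : x = 0 := by
  refine eq_zero_of_contractCoords_eq_zero hx.2 fun us hus => ?_
  by_cases hnodup : us.Nodup
  · obtain ⟨j, hj⟩ := exists_column_subset hnodup (hus ▸ hn)
    exact contractCoords_eq_zero_of_mem_columnFree hx.1 hj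
  · exact contractCoords_eq_zero_of_not_nodup hnodup x

theorem extBoundary_mem_columnFree [Fintype J] {x : ExteriorAlgebra R (J × κ → R)}
    (hx : x ∈ columnFree R J κ) : extBoundary x ∈ columnFree R J κ :=
  mem_columnFree.2 fun j =>
    contractList_eq_zero_of_subperm (List.sublist_cons_self _ _).subperm (mem_columnFree.1 hx j)

theorem extBoundary_mem_columnFree_inf [Fintype J] {n : ℕ} {x : ExteriorAlgebra R (J × κ → R)}
    (hx : x ∈ columnFree R J κ ⊓ ⋀[R]^(n + 1) (J × κ → R)) :
    extBoundary x ∈ columnFree R J κ ⊓ ⋀[R]^n (J × κ → R) :=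
  ⟨extBoundary_mem_columnFree hx.1, contractLeft_mem_exteriorPower _ hx.2⟩

theorem length_flatMap_columnErase [Fintype J] (o : κ) :
    (Finset.univ.toList.flatMap (columnErase (J := J) o)).length =
      Fintype.card J * (Fintype.card κ - 1) := by
  simp [List.length_flatMap, length_columnErase]

end ColumnFree

section Filling

open CliffordAlgebra

variable {R J κ : Type*} [CommRing R] [Fintype κ]

/-- The part of the chain `x` not containing the face of the column `j` opposite to `(j, o)`. -/
noncomputable def deleteFace (o : κ) (j : J) (x : ExteriorAlgebra R (J × κ → R)) :
    ExteriorAlgebra R (J × κ → R) :=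
  x - orientedSimplex R (columnErase o j) * contractCoords (columnErase o j) x

/-- The cone with apex `(j, o)` over the part of `x` whose cone contains no whole column `j`. -/
noncomputable def columnCone (o : κ) (j : J) (x : ExteriorAlgebra R (J × κ → R)) :
    ExteriorAlgebra R (J × κ → R) :=
  ExteriorAlgebra.ι R (vertex R (j, o)) * deleteFace o j x

theorem contractCoords_columnErase_deleteFace (o : κ) (j : J)
    (x : ExteriorAlgebra R (J × κ → R)) :
    contractCoords (columnErase o j) (deleteFace o j x) = 0 := by
  rw [deleteFace, map_sub, contractCoords_orientedSimplex_mul (nodup_columnErase o j)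
    fun u hu => contractLeft_proj_contractCoords hu x, sub_self]

theorem deleteFace_mem_exteriorPower (o : κ) (j : J) {n : ℕ} {x : ExteriorAlgebra R (J × κ → R)}
    (hx : x ∈ ⋀[R]^n (J × κ → R)) : deleteFace o j x ∈ ⋀[R]^n (J × κ → R) := by
  refine sub_mem hx ?_
  by_cases hn : (columnErase o j).length ≤ n
  · have := wedge_mul_mem_exteriorPower ((columnErase o j).map (vertex R))
      (contractList_mem_exteriorPower ((columnErase o j).map LinearMap.proj) hx)
    rwa [List.length_map, List.length_map, Nat.sub_add_cancel hn] at this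
  · rw [contractCoords, contractList_eq_zero_of_lt_length hx (by simpa using hn), mul_zero]
    exact zero_mem _

theorem contractCoords_column_columnCone_self (o : κ) (j : J) (x : ExteriorAlgebra R (J × κ → R)) :
    contractCoords (column κ j) (columnCone o j x) = 0 := by
  refine contractCoords_eq_zero_of_subset (nodup_columnErase o j)
    (fun u hu => mem_column.2 (mem_columnErase.1 hu).1) ?_
  rw [columnCone, contractCoords_mul_of_contractLeft_eq_zero,
    contractCoords_columnErase_deleteFace, mul_zero]
  intro u hu
  have hne : u ≠ (j, o) := fun h => (mem_columnErase.1 hu).2 (congrArg Prod.snd h)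
  simp [vertex_of_ne hne]

theorem contractCoords_column_columnCone_of_ne (o : κ) {i j : J} (hij : i ≠ j)
    {x : ExteriorAlgebra R (J × κ → R)} (hx : x ∈ columnFree R J κ) :
    contractCoords (column κ i) (columnCone o j x) = 0 := by
  have happend : contractCoords (column κ i) (contractCoords (columnErase o j) x) = 0 := by
    rw [← contractCoords_append]
    exact contractCoords_eq_zero_of_mem_columnFree hx (List.subset_append_right _ _)
  have hne : ∀ u ∈ column κ i, u.1 ≠ j := fun u hu => by rwa [mem_column.1 hu]
  rw [columnCone, contractCoords_mul_of_contractLeft_eq_zero, deleteFace, map_sub,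
    mem_columnFree.1 hx, contractCoords_mul_of_contractLeft_eq_zero, happend]
  · simp
  · exact fun u hu => contractLeft_proj_orientedSimplex_eq_zero fun h =>
      hne u hu (mem_columnErase.1 h).1
  · intro u hu
    have : u ≠ (j, o) := fun h => hne u hu (congrArg Prod.fst h)
    simp [vertex_of_ne this]

theorem columnCone_mem_columnFree (o : κ) (j : J) {x : ExteriorAlgebra R (J × κ → R)}
    (hx : x ∈ columnFree R J κ) : columnCone o j x ∈ columnFree R J κ := by
  refine mem_columnFree.2 fun i => ?_
  rcases eq_or_ne i j with rfl | hij
  · exact contractCoords_column_columnCone_self o i x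
  · exact contractCoords_column_columnCone_of_ne o hij hx

variable [Fintype J]

/-- The boundary of the simplex spanned by the column `j`. -/
noncomputable def columnSphere (o : κ) (j : J) : ExteriorAlgebra R (J × κ → R) :=
  extBoundary (orientedSimplex R ((j, o) :: columnErase o j))

theorem extBoundary_orientedSimplex_mul_contractCoords (us : List (J × κ))
    (x : ExteriorAlgebra R (J × κ → R)) :
    extBoundary (orientedSimplex R us * contractCoords us x) =
      extBoundary (orientedSimplex R us) * contractCoords us x +
        orientedSimplex R us * contractCoords us (extBoundary x) := by
  rw [extBoundary_mul, extBoundary_contractCoords, orientedSimplex, involute_wedge,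
    List.length_map, smul_mul_smul_comm, ← mul_pow, neg_one_mul, neg_neg, one_pow, one_smul]

theorem extBoundary_columnCone (o : κ) (j : J) (x : ExteriorAlgebra R (J × κ → R)) :
    extBoundary (columnCone o j x) = x - columnCone o j (extBoundary x) -
      columnSphere o j * contractCoords (columnErase o j) x := by
  have hsphere : columnSphere (R := R) o j = orientedSimplex R (columnErase o j) -
      ExteriorAlgebra.ι R (vertex R (j, o)) *
        extBoundary (orientedSimplex R (columnErase o j)) :=
    extBoundary_ι_mul (augmentation_vertex _) _
  rw [columnCone, extBoundary_ι_mul (augmentation_vertex _), hsphere, deleteFace, map_sub,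
    extBoundary_orientedSimplex_mul_contractCoords, columnCone, deleteFace]
  noncomm_ring

theorem contractLeft_proj_columnSphere {o : κ} {j : J} {u : J × κ} (hu : u.1 ≠ j) :
    contractLeft (LinearMap.proj u) (columnSphere (R := R) o j) = 0 := by
  rw [columnSphere, contractLeft_extBoundary, contractLeft_proj_orientedSimplex_eq_zero, map_zero,
    neg_zero]
  simp [Prod.ext_iff, hu]

/-- Columns are treated one at a time: the cone with apex in the column `j` fills the cycle `x` up
to the product of the sphere of that column and the contraction of `x` by the rest of it. -/
theorem exists_extBoundary_eq_sub_mul_contractCoords (o : κ) {js : List J} (hjs : js.Nodup) :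
    ∃ a : ExteriorAlgebra R (J × κ → R), ∀ n, ∀ x ∈ columnFree R J κ ⊓ ⋀[R]^n (J × κ → R),
      extBoundary x = 0 → ∃ y ∈ columnFree R J κ ⊓ ⋀[R]^(n + 1) (J × κ → R),
        extBoundary y = x - a * contractCoords (js.flatMap (columnErase o)) x := by
  induction js with
  | nil => exact ⟨1, fun n x _ _ => ⟨0, zero_mem _, by simp [contractCoords]⟩⟩
  | cons j js ih =>
    rw [List.nodup_cons] at hjs
    obtain ⟨a, ha⟩ := ih hjs.2
    set K := js.flatMap (columnErase (κ := κ) o)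
    have hK : ∀ u ∈ K, contractLeft (LinearMap.proj u) (columnSphere (R := R) o j) = 0 := by
      intro u hu
      obtain ⟨i, hi, hui⟩ := List.mem_flatMap.1 hu
      refine contractLeft_proj_columnSphere ?_
      rw [(mem_columnErase.1 hui).1]
      exact ne_of_mem_of_not_mem hi hjs.1
    refine ⟨a * involute^[K.length] (columnSphere o j), fun n x hx hcycle => ?_⟩
    have hcone : columnCone o j x ∈ columnFree R J κ ⊓ ⋀[R]^(n + 1) (J × κ → R) :=
      ⟨columnCone_mem_columnFree o j hx.1,
        ι_mul_mem_exteriorPower _ (deleteFace_mem_exteriorPower o j hx.2)⟩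
    have hrest : x - extBoundary (columnCone o j x) =
        columnSphere o j * contractCoords (columnErase o j) x := by
      rw [extBoundary_columnCone, hcycle]
      simp [columnCone, deleteFace]
    obtain ⟨y, hy, hby⟩ := ha n (x - extBoundary (columnCone o j x))
      (sub_mem hx (extBoundary_mem_columnFree_inf hcone))
      (by simp [hcycle, extBoundary_extBoundary])
    refine ⟨columnCone o j x + y, add_mem hcone hy, ?_⟩
    rw [map_add, hby, hrest, contractCoords_mul_of_contractLeft_eq_zero hK,
      ← mul_assoc, List.flatMap_cons, contractCoords_append, ← hrest]
    abel

theorem exists_extBoundary_eq_of_lt [Nonempty κ] {n : ℕ}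
    (hn : n < Fintype.card J * (Fintype.card κ - 1)) {x : ExteriorAlgebra R (J × κ → R)}
    (hx : x ∈ columnFree R J κ ⊓ ⋀[R]^n (J × κ → R)) (hcycle : extBoundary x = 0) :
    ∃ y ∈ columnFree R J κ ⊓ ⋀[R]^(n + 1) (J × κ → R), extBoundary y = x := by
  obtain ⟨o⟩ := ‹Nonempty κ›
  obtain ⟨a, ha⟩ := exists_extBoundary_eq_sub_mul_contractCoords (R := R) o
    (Finset.nodup_toList (Finset.univ : Finset J))
  obtain ⟨y, hy, hby⟩ := ha n x hx hcycle
  refine ⟨y, hy, ?_⟩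
  rw [hby, contractCoords, contractList_eq_zero_of_lt_length hx.2, mul_zero, sub_zero]
  rwa [List.length_map, length_flatMap_columnErase]

theorem exists_forall_topCycle_eq_smul [Nonempty κ] :
    ∃ a : ExteriorAlgebra R (J × κ → R),
      ∀ x ∈ columnFree R J κ ⊓ ⋀[R]^(Fintype.card J * (Fintype.card κ - 1)) (J × κ → R),
        extBoundary x = 0 → ∃ c : R, x = c • a := by
  obtain ⟨o⟩ := ‹Nonempty κ›
  obtain ⟨a, ha⟩ := exists_extBoundary_eq_sub_mul_contractCoords (R := R) o
    (Finset.nodup_toList (Finset.univ : Finset J))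
  refine ⟨a, fun x hx hcycle => ?_⟩
  obtain ⟨y, hy, hby⟩ := ha _ x hx hcycle
  have hscalar := contractList_mem_exteriorPower
    ((Finset.univ.toList.flatMap (columnErase (J := J) o)).map LinearMap.proj) hx.2
  rw [List.length_map, length_flatMap_columnErase, Nat.sub_self] at hscalar
  obtain ⟨c, hc⟩ := exists_smul_one_eq_of_mem_exteriorPower_zero hscalar
  refine ⟨c, ?_⟩
  rw [eq_zero_of_mem_columnFree_of_lt (Nat.lt_succ_self _) hy, map_zero, contractCoords, ← hc,
    mul_smul_comm, mul_one] at hby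
  exact sub_eq_zero.1 hby.symm

end Filling

section Rotation

open CliffordAlgebra

variable {R J G : Type*} [CommRing R] [AddCommGroup G]

/-- The action of `G` on exterior chains induced by `e_(j, k) ↦ e_(j, k + a)`. -/
noncomputable def rotate (a : G) :
    ExteriorAlgebra R (J × G → R) →ₐ[R] ExteriorAlgebra R (J × G → R) :=
  ExteriorAlgebra.map (LinearMap.funLeft R R fun u : J × G => (u.1, u.2 - a))

theorem rotate_zero (x : ExteriorAlgebra R (J × G → R)) : rotate 0 x = x := by
  have h : LinearMap.funLeft R R (fun u : J × G => (u.1, u.2 - 0)) = LinearMap.id :=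
    LinearMap.ext fun v => funext fun u => by simp [LinearMap.funLeft_apply]
  rw [rotate, h, ExteriorAlgebra.map_id, AlgHom.id_apply]

theorem rotate_rotate (a b : G) (x : ExteriorAlgebra R (J × G → R)) :
    rotate a (rotate b x) = rotate (a + b) x := by
  have h : LinearMap.funLeft R R (fun u : J × G => (u.1, u.2 - a)) ∘ₗ
      LinearMap.funLeft R R (fun u : J × G => (u.1, u.2 - b)) =
      LinearMap.funLeft R R fun u : J × G => (u.1, u.2 - (a + b)) :=
    LinearMap.ext fun v => funext fun u => by simp [LinearMap.funLeft_apply, sub_sub]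
  rw [rotate, rotate, rotate, ← h, ← ExteriorAlgebra.map_comp_map, AlgHom.comp_apply]

theorem rotate_wedge (a : G) (l : List (J × G → R)) :
    rotate a (wedge R l) = wedge R (l.map fun v u => v (u.1, u.2 - a)) :=
  map_wedge _ l

theorem contractCoords_rotate (a : G) (us : List (J × G)) (x : ExteriorAlgebra R (J × G → R)) :
    contractCoords us (rotate a x) =
      rotate a (contractCoords (us.map fun u => (u.1, u.2 - a)) x) := by
  induction us generalizing x with
  | nil => rfl
  | cons u us ih =>
    simp only [contractCoords, rotate, List.map_cons, contractList_cons, contractLeft_map] at ih ⊢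
    exact ih _

theorem rotate_mem_exteriorPower (a : G) {n : ℕ} {x : ExteriorAlgebra R (J × G → R)}
    (hx : x ∈ ⋀[R]^n (J × G → R)) : rotate a x ∈ ⋀[R]^n (J × G → R) :=
  map_mem_exteriorPower _ hx

variable [Fintype G]

theorem rotate_mem_columnFree (a : G) {x : ExteriorAlgebra R (J × G → R)}
    (hx : x ∈ columnFree R J G) : rotate a x ∈ columnFree R J G := by
  refine mem_columnFree.2 fun j => ?_
  have hcolumn : column G j ⊆ (column G j).map fun u => (u.1, u.2 - a) := by
    rintro ⟨i, k⟩ hik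
    exact List.mem_map.2 ⟨(i, k + a), by simpa using hik, by simp⟩
  rw [contractCoords_rotate, contractCoords_eq_zero_of_mem_columnFree hx hcolumn, map_zero]

theorem rotate_mem_columnFree_inf (a : G) {n : ℕ} {x : ExteriorAlgebra R (J × G → R)}
    (hx : x ∈ columnFree R J G ⊓ ⋀[R]^n (J × G → R)) :
    rotate a x ∈ columnFree R J G ⊓ ⋀[R]^n (J × G → R) :=
  ⟨rotate_mem_columnFree a hx.1, rotate_mem_exteriorPower a hx.2⟩

variable [Fintype J]

theorem extBoundary_rotate (a : G) (x : ExteriorAlgebra R (J × G → R)) :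
    extBoundary (rotate a x) = rotate a (extBoundary x) := by
  have h : augmentation R (J × G) ∘ₗ LinearMap.funLeft R R (fun u : J × G => (u.1, u.2 - a)) =
      augmentation R (J × G) := by
    refine LinearMap.ext fun v => ?_
    rw [LinearMap.comp_apply, augmentation_apply, augmentation_apply]
    exact ((Equiv.refl J).prodCongr (Equiv.subRight a)).sum_comp v
  rw [extBoundary, rotate, contractLeft_map, h]

end Rotation

/-- A group of order `p` acts trivially on a line over `ZMod p`, as `b ^ p = b` for scalars. -/
theorem rotate_eq_self_of_extBoundary_eq_zero {J : Type*} [Fintype J] {p : ℕ}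
    [Fact p.Prime] (a : ZMod p) {x : ExteriorAlgebra (ZMod p) (J × ZMod p → ZMod p)}
    (hx : x ∈ columnFree (ZMod p) J (ZMod p) ⊓
      ⋀[ZMod p]^(Fintype.card J * (p - 1)) (J × ZMod p → ZMod p))
    (hcycle : extBoundary x = 0) : rotate a x = x := by
  obtain ⟨e, he⟩ := exists_forall_topCycle_eq_smul (R := ZMod p) (J := J) (κ := ZMod p)
  rw [ZMod.card] at he
  obtain ⟨c, rfl⟩ := he x hx hcycle
  obtain ⟨c', hc'⟩ := he _ (rotate_mem_columnFree_inf a hx)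
    (by rw [extBoundary_rotate, hcycle, map_zero])
  rcases eq_or_ne c 0 with rfl | hc
  · simp
  have hmul : rotate a (c • e) = (c' * c⁻¹) • c • e := by
    rw [hc', smul_smul, inv_mul_cancel_right₀ hc]
  have hiterate (n : ℕ) : rotate (n • a) (c • e) = (c' * c⁻¹) ^ n • c • e := by
    induction n with
    | zero => rw [zero_smul, rotate_zero, pow_zero, one_smul]
    | succ n ih =>
      rw [add_smul, one_smul, ← rotate_rotate, hmul, map_smul, ih, smul_smul, pow_succ']
  have hperiod := hiterate p
  rw [ZModModule.char_nsmul_eq_zero, rotate_zero, ZMod.pow_card] at hperiod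
  rw [hmul, ← hperiod]

section Chain

variable {R X Y M : Type*} [CommRing R] [AddCommGroup M] [Module R M]

/-- Ordered simplicial chains: combinations of vertex lists, the empty list being the augmentation
in degree `-1`. -/
abbrev Chain (R X : Type*) [CommRing R] := List X →₀ R

/-- The ordered simplex with vertex list `l`. -/
noncomputable abbrev simplex (R : Type*) {X : Type*} [CommRing R] (l : List X) : Chain R X :=
  Finsupp.single l 1

theorem linearCombination_simplex (g : List X → M) (l : List X) :
    Finsupp.linearCombination R g (simplex R l) = g l := by
  rw [Finsupp.linearCombination_single, one_smul]

theorem linearMap_ext_simplex {S T : Chain R X →ₗ[R] M}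
    (h : ∀ l, S (simplex R l) = T (simplex R l)) : S = T :=
  Finsupp.lhom_ext' fun l => LinearMap.ext_ring (h l)

theorem map_mem_of_mem_supported {s : Set (List X)} {x : Chain R X}
    (hx : x ∈ Finsupp.supported R R s) (T : Chain R X →ₗ[R] M) (S : Submodule R M)
    (h : ∀ l ∈ s, T (simplex R l) ∈ S) : T x ∈ S := by
  rw [Finsupp.supported_eq_span_single] at hx
  exact Submodule.span_le (p := S.comap T).2 (Set.image_subset_iff.2 h) hx

theorem map_eq_map_of_mem_supported {s : Set (List X)} {x : Chain R X}
    (hx : x ∈ Finsupp.supported R R s) (S T : Chain R X →ₗ[R] M)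
    (h : ∀ l ∈ s, S (simplex R l) = T (simplex R l)) : S x = T x :=
  sub_eq_zero.1 <| (Submodule.mem_bot R).1 <| map_mem_of_mem_supported hx (S - T) ⊥ fun l hl => by
    rw [LinearMap.sub_apply, h l hl, sub_self, Submodule.mem_bot]

/-- The cone operator with apex `a`. -/
noncomputable def cone (a : X) : Chain R X →ₗ[R] Chain R X :=
  Finsupp.linearCombination R fun l => simplex R (a :: l)

@[simp]
theorem cone_simplex (a : X) (l : List X) : cone a (simplex R l) = simplex R (a :: l) :=
  linearCombination_simplex _ l

/-- The augmented simplicial boundary. -/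
noncomputable def boundary : Chain R X →ₗ[R] Chain R X :=
  Finsupp.linearCombination R fun l =>
    ∑ k ∈ Finset.range l.length, (-1 : R) ^ k • simplex R (l.eraseIdx k)

theorem boundary_simplex (l : List X) : boundary (simplex R l) =
    ∑ k ∈ Finset.range l.length, (-1 : R) ^ k • simplex R (l.eraseIdx k) :=
  linearCombination_simplex _ l

@[simp]
theorem boundary_simplex_nil : boundary (simplex R ([] : List X)) = 0 := by
  simp [boundary_simplex]

theorem boundary_simplex_cons (a : X) (l : List X) :
    boundary (simplex R (a :: l)) = simplex R l - cone a (boundary (simplex R l)) := by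
  rw [boundary_simplex, boundary_simplex, List.length_cons, Finset.sum_range_succ', map_sum]
  simp only [map_smul, cone_simplex, List.eraseIdx_cons_succ, List.eraseIdx_cons_zero, pow_succ,
    mul_neg_one, neg_smul, Finset.sum_neg_distrib, pow_zero, one_smul]
  abel

theorem boundary_cone (a : X) (x : Chain R X) : boundary (cone a x) = x - cone a (boundary x) := by
  have h : boundary ∘ₗ cone a = LinearMap.id - cone a ∘ₗ boundary (R := R) :=
    linearMap_ext_simplex fun l => by
      simp only [LinearMap.comp_apply, LinearMap.sub_apply, LinearMap.id_apply, cone_simplex,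
        boundary_simplex_cons]
  exact LinearMap.congr_fun h x

theorem boundary_boundary (x : Chain R X) : boundary (boundary x) = 0 := by
  have h : boundary ∘ₗ boundary = (0 : Chain R X →ₗ[R] Chain R X) :=
    linearMap_ext_simplex fun l => by
      simp only [LinearMap.comp_apply, LinearMap.zero_apply]
      induction l with
      | nil => rw [boundary_simplex_nil, map_zero]
      | cons a l ih => rw [boundary_simplex_cons, map_sub, boundary_cone, ih, map_zero, sub_zero,
          sub_self]
  exact LinearMap.congr_fun h x

theorem boundary_simplex_mem_supported (l : List X) :
    boundary (simplex R l) ∈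
      Finsupp.supported R R {l' | l'.Sublist l ∧ l'.length + 1 = l.length} := by
  rw [boundary_simplex]
  refine sum_mem fun k hk => Submodule.smul_mem _ _ (Finsupp.single_mem_supported R _ ?_)
  have hk := Finset.mem_range.1 hk
  exact ⟨l.eraseIdx_sublist k, by rw [List.length_eraseIdx_of_lt hk]; lia⟩

/-- The chain map induced by a map of vertices. -/
noncomputable def pushforward (g : X → Y) : Chain R X →ₗ[R] Chain R Y :=
  Finsupp.linearCombination R fun l => simplex R (l.map g)

@[simp]
theorem pushforward_simplex (g : X → Y) (l : List X) :
    pushforward g (simplex R l) = simplex R (l.map g) :=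
  linearCombination_simplex _ l

theorem boundary_pushforward (g : X → Y) (x : Chain R X) :
    boundary (pushforward g x) = pushforward g (boundary x) := by
  have h : boundary ∘ₗ pushforward g = pushforward g ∘ₗ boundary (R := R) :=
    linearMap_ext_simplex fun l => by
      simp only [LinearMap.comp_apply, pushforward_simplex, boundary_simplex, List.length_map,
        List.eraseIdx_map, map_sum, map_smul]
  exact LinearMap.congr_fun h x

theorem pushforward_cone (g : X → Y) (a : X) (x : Chain R X) :
    pushforward g (cone a x) = cone (g a) (pushforward g x) := by
  have h : pushforward g ∘ₗ cone a = cone (g a) ∘ₗ pushforward (R := R) g :=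
    linearMap_ext_simplex fun l => by
      simp only [LinearMap.comp_apply, cone_simplex, pushforward_simplex, List.map_cons]
  exact LinearMap.congr_fun h x

variable (R) in
/-- The map from ordered chains to the exterior algebra induced by a vector labelling of the
vertices. -/
noncomputable def labelMap (ℓ : X → M) : Chain R X →ₗ[R] ExteriorAlgebra R M :=
  Finsupp.linearCombination R fun l => wedge R (l.map ℓ)

theorem labelMap_simplex (ℓ : X → M) (l : List X) :
    labelMap R ℓ (simplex R l) = wedge R (l.map ℓ) :=
  linearCombination_simplex _ l

theorem labelMap_simplex_mem_exteriorPower (ℓ : X → M) (l : List X) :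
    labelMap R ℓ (simplex R l) ∈ ⋀[R]^l.length M := by
  rw [labelMap_simplex, ← List.length_map ℓ]
  exact wedge_mem_exteriorPower _

theorem labelMap_cone (ℓ : X → M) (a : X) (x : Chain R X) :
    labelMap R ℓ (cone a x) = ExteriorAlgebra.ι R (ℓ a) * labelMap R ℓ x := by
  have h : labelMap R ℓ ∘ₗ cone a =
      LinearMap.mulLeft R (ExteriorAlgebra.ι R (ℓ a)) ∘ₗ labelMap R ℓ :=
    linearMap_ext_simplex fun l => by
      simp only [LinearMap.comp_apply, cone_simplex, labelMap_simplex, List.map_cons, wedge_cons,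
        LinearMap.mulLeft_apply]
  exact LinearMap.congr_fun h x

theorem extBoundary_labelMap {ι : Type*} [Fintype ι] {ℓ : X → ι → R}
    (hℓ : ∀ a, augmentation R ι (ℓ a) = 1) (x : Chain R X) :
    extBoundary (labelMap R ℓ x) = labelMap R ℓ (boundary x) := by
  have h : extBoundary ∘ₗ labelMap R ℓ = labelMap R ℓ ∘ₗ boundary :=
    linearMap_ext_simplex fun l => by
      simp only [LinearMap.comp_apply]
      induction l with
      | nil =>
        rw [labelMap_simplex, boundary_simplex_nil, map_zero]
        exact contractLeft_wedge_eq_zero (by simp)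
      | cons a l ih =>
        rw [← cone_simplex, labelMap_cone, extBoundary_ι_mul (hℓ a), ih, boundary_cone, map_sub,
          labelMap_cone]
  exact LinearMap.congr_fun h x

theorem labelMap_simplex_mem_columnFree {J κ : Type*} [Fintype κ] {ℓ : X → J × κ → R} {l : List X}
    (h : ∀ j, ∃ k, ∀ a ∈ l, ℓ a (j, k) = 0) : labelMap R ℓ (simplex R l) ∈ columnFree R J κ := by
  refine mem_columnFree.2 fun j => ?_
  obtain ⟨k, hk⟩ := h j
  rw [labelMap_simplex]
  refine contractList_eq_zero_of_mem (φ := LinearMap.proj (j, k))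
    (List.mem_map_of_mem (by simp)) (contractLeft_wedge_eq_zero ?_)
  simpa using hk

end Chain

section Shift

variable {R J G V : Type*} [CommRing R] [AddCommGroup G]

/-- The action of `G` on the vertices `(i, v)` of a `G`-indexed join. -/
def shift (a : G) (p : G × V) : G × V := (p.1 + a, p.2)

theorem shift_injective (a : G) : Function.Injective (shift a : G × V → G × V) :=
  fun p q h => by simpa [shift, Prod.ext_iff] using h

theorem labelMap_map_shift {X : Type*} {s : X → X} {ℓ : X → J × G → R} {a : G} {l : List X}
    (h : ∀ x ∈ l, ∀ u, ℓ (s x) u = ℓ x (u.1, u.2 - a)) :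
    labelMap R ℓ (simplex R (l.map s)) = rotate a (labelMap R ℓ (simplex R l)) := by
  rw [labelMap_simplex, labelMap_simplex, rotate_wedge, List.map_map, List.map_map]
  exact congrArg _ (List.map_congr_left fun x hx => funext (h x hx))

end Shift

section EquivariantHomotopy

variable {R J G V : Type*} [CommRing R] [AddCommGroup G] [Fintype G] [Fintype J]

/-- A family of cells of a `G`-indexed join is closed under faces and under the action of `G`. -/
structure IsShiftComplex (P : Set (List (G × V))) : Prop where
  mem_of_sublist {l l' : List (G × V)} (hl : l ∈ P) (h : l'.Sublist l) : l' ∈ P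
  map_shift_mem {l : List (G × V)} (hl : l ∈ P) (a : G) : l.map (shift a) ∈ P

/-- On the complex with cells `P`, the linear map `Φ` is an equivariant chain map to the join of
`J` copies of the boundary of the simplex on `G`. -/
structure IsEquivariantChainMap (P : Set (List (G × V)))
    (Φ : Chain R (G × V) →ₗ[R] ExteriorAlgebra R (J × G → R)) : Prop where
  mem {l : List (G × V)} (hl : l ∈ P) :
    Φ (simplex R l) ∈ columnFree R J G ⊓ ⋀[R]^l.length (J × G → R)
  extBoundary_apply {l : List (G × V)} (hl : l ∈ P) :
    extBoundary (Φ (simplex R l)) = Φ (boundary (simplex R l))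
  apply_shift {l : List (G × V)} (hl : l ∈ P) (a : G) :
    Φ (simplex R (l.map (shift a))) = rotate a (Φ (simplex R l))

/-- On the cells in `P` with `n` vertices, the linear map `T` takes values in the cycles, and it is
equivariant. -/
structure IsEquivariantCycleMap (P : Set (List (G × V))) (n : ℕ)
    (T : Chain R (G × V) →ₗ[R] ExteriorAlgebra R (J × G → R)) : Prop where
  mem {l : List (G × V)} (hl : l ∈ P) (hn : l.length = n) :
    T (simplex R l) ∈ columnFree R J G ⊓ ⋀[R]^n (J × G → R)
  extBoundary_apply {l : List (G × V)} (hl : l ∈ P) (hn : l.length = n) :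
    extBoundary (T (simplex R l)) = 0
  apply_shift {l : List (G × V)} (hl : l ∈ P) (hn : l.length = n) (a : G) :
    T (simplex R (l.map (shift a))) = rotate a (T (simplex R l))

variable {P : Set (List (G × V))} {n : ℕ}
  {Φ Ψ T : Chain R (G × V) →ₗ[R] ExteriorAlgebra R (J × G → R)}

theorem IsEquivariantChainMap.sub (hΦ : IsEquivariantChainMap P Φ)
    (hΨ : IsEquivariantChainMap P Ψ) : IsEquivariantChainMap P (Φ - Ψ) where
  mem hl := sub_mem (hΦ.mem hl) (hΨ.mem hl)
  extBoundary_apply hl := by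
    rw [LinearMap.sub_apply, map_sub, hΦ.extBoundary_apply hl, hΨ.extBoundary_apply hl,
      LinearMap.sub_apply]
  apply_shift hl a := by
    rw [LinearMap.sub_apply, hΦ.apply_shift hl, hΨ.apply_shift hl, LinearMap.sub_apply, map_sub]

/-- Fillings are chosen for the cells whose first vertex has index `0` and are transported to the
other cells by the free action of `G`. -/
theorem IsEquivariantCycleMap.exists_filling (hT : IsEquivariantCycleMap P n T)
    (hP : IsShiftComplex P) (hnil : T (simplex R []) = 0)
    (hn : n < Fintype.card J * (Fintype.card G - 1)) :
    ∃ g : List (G × V) → ExteriorAlgebra R (J × G → R), ∀ l ∈ P, l.length = n →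
      g l ∈ columnFree R J G ⊓ ⋀[R]^(n + 1) (J × G → R) ∧ extBoundary (g l) = T (simplex R l) ∧
      ∀ a, g (l.map (shift a)) = rotate a (g l) := by
  have hfill (l : List (G × V)) : ∃ y : ExteriorAlgebra R (J × G → R), l ∈ P → l.length = n →
      y ∈ columnFree R J G ⊓ ⋀[R]^(n + 1) (J × G → R) ∧ extBoundary y = T (simplex R l) := by
    by_cases hl : l ∈ P ∧ l.length = n
    · obtain ⟨y, hy⟩ := exists_extBoundary_eq_of_lt hn (hT.mem hl.1 hl.2)
        (hT.extBoundary_apply hl.1 hl.2)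
      exact ⟨y, fun _ _ => hy⟩
    · exact ⟨0, fun h h' => absurd ⟨h, h'⟩ hl⟩
  choose fill hfill using hfill
  refine ⟨fun l => l.head?.elim 0 fun p => rotate p.1 (fill (l.map (shift (-p.1)))),
    fun l hl hln => ?_⟩
  cases l with
  | nil => simp [hnil]
  | cons p l =>
    obtain ⟨hmem, hboundary⟩ := hfill _ (hP.map_shift_mem hl (-p.1)) (by rwa [List.length_map])
    refine ⟨rotate_mem_columnFree_inf _ hmem, ?_, fun a => ?_⟩
    · simp only [List.head?_cons, Option.elim_some]
      rw [extBoundary_rotate, hboundary, hT.apply_shift hl hln,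
        rotate_rotate, add_neg_cancel, rotate_zero]
    · have hshift : ((p :: l).map (shift a)).map (shift (-(shift a p).1)) =
          (p :: l).map (shift (-p.1)) := by
        rw [List.map_map]
        exact List.map_congr_left fun q _ => Prod.ext (by simp [shift]) rfl
      simp only [List.head?_cons, Option.elim_some, List.head?_map, Option.map_some]
      rw [hshift, rotate_rotate, add_comm a, shift]

theorem IsEquivariantChainMap.exists_isEquivariantCycleMap_succ
    (hΦ : IsEquivariantChainMap P Φ) (hP : IsShiftComplex P) (hnil : Φ (simplex R []) = 0)
    (hn : n < Fintype.card J * (Fintype.card G - 1))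
    {h : Chain R (G × V) →ₗ[R] ExteriorAlgebra R (J × G → R)}
    (hh : IsEquivariantCycleMap P n (Φ - h ∘ₗ boundary)) :
    ∃ h' : Chain R (G × V) →ₗ[R] ExteriorAlgebra R (J × G → R),
      IsEquivariantCycleMap P (n + 1) (Φ - h' ∘ₗ boundary) := by
  obtain ⟨g, hg⟩ := hh.exists_filling hP (by simp [hnil]) hn
  have hsupp {l : List (G × V)} (hl : l ∈ P) (hln : l.length = n + 1) :
      boundary (simplex R l) ∈ Finsupp.supported R R {l' | l' ∈ P ∧ l'.length = n} :=
    Finsupp.supported_mono (t := {l' | l' ∈ P ∧ l'.length = n})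
      (fun l' hl' => ⟨hP.mem_of_sublist hl hl'.1, Nat.succ_injective (hl'.2.trans hln)⟩)
      (boundary_simplex_mem_supported l)
  refine ⟨Finsupp.linearCombination R g, fun {l} hl hln => ?_, fun {l} hl hln => ?_,
    fun {l} hl hln a => ?_⟩
  · refine sub_mem (hln ▸ hΦ.mem hl) (map_mem_of_mem_supported (hsupp hl hln)
      (Finsupp.linearCombination R g) _ fun l' hl' => ?_)
    rw [linearCombination_simplex]
    exact (hg l' hl'.1 hl'.2).1
  · have hg' := map_eq_map_of_mem_supported (hsupp hl hln)
      (extBoundary ∘ₗ Finsupp.linearCombination R g) (Φ - h ∘ₗ boundary) fun l' hl' => by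
        rw [LinearMap.comp_apply, linearCombination_simplex, (hg l' hl'.1 hl'.2).2.1]
    simp only [LinearMap.comp_apply, LinearMap.sub_apply, boundary_boundary, map_zero,
      sub_zero] at hg'
    rw [LinearMap.sub_apply, LinearMap.comp_apply, map_sub, hg', hΦ.extBoundary_apply hl, sub_self]
  · have hg' := map_eq_map_of_mem_supported (hsupp hl hln)
      (Finsupp.linearCombination R g ∘ₗ pushforward (shift a))
      ((rotate a).toLinearMap ∘ₗ Finsupp.linearCombination R g) fun l' hl' => by
        simp only [LinearMap.comp_apply, pushforward_simplex, linearCombination_simplex]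
        exact (hg l' hl'.1 hl'.2).2.2 a
    simp only [LinearMap.comp_apply, AlgHom.toLinearMap_apply] at hg'
    rw [LinearMap.sub_apply, LinearMap.sub_apply, hΦ.apply_shift hl, map_sub, LinearMap.comp_apply,
      LinearMap.comp_apply, ← hg', ← boundary_pushforward, pushforward_simplex]

theorem IsEquivariantChainMap.exists_isEquivariantCycleMap
    (hΦ : IsEquivariantChainMap P Φ) (hP : IsShiftComplex P) (hnil : Φ (simplex R []) = 0)
    (hn : n ≤ Fintype.card J * (Fintype.card G - 1)) :
    ∃ h : Chain R (G × V) →ₗ[R] ExteriorAlgebra R (J × G → R),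
      IsEquivariantCycleMap P n (Φ - h ∘ₗ boundary) := by
  induction n with
  | zero =>
    refine ⟨0, fun {l} _ hl => ?_, fun {l} _ hl => ?_, fun {l} _ hl a => ?_⟩ <;>
      simp [List.length_eq_zero_iff.1 hl, hnil]
  | succ n ih =>
    obtain ⟨h, hh⟩ := ih (Nat.le_of_succ_le hn)
    exact hΦ.exists_isEquivariantCycleMap_succ hP hnil hn hh

end EquivariantHomotopy

section Sign

open Equiv

variable {R M J κ : Type*} [CommRing R] [AddCommGroup M] [Module R M] [Fintype J] [Fintype κ]

theorem sum_eq_zero_of_apply_perm_eq_add_one {α : Type*} {_ : Fintype α} (s : Perm α) {f : α → R}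
    (hf : ∀ x, f (s x) = f x + 1) {F : α → M} (hF : ∀ x, F (s x) = F x) : ∑ x, F x = 0 := by
  have h : ∑ x, f x • F x = ∑ x, f x • F x + ∑ x, F x :=
    calc ∑ x, f x • F x = ∑ x, f (s x) • F (s x) := (Equiv.sum_comp s fun x => f x • F x).symm
      _ = ∑ x, f x • F x + ∑ x, F x := by
        simp only [hf, hF, add_smul, one_smul, Finset.sum_add_distrib]
  exact left_eq_add.1 h

theorem wedge_map_comp_perm {ι : Type*} [Fintype ι] {us : List ι} (hus : us.Nodup)
    (hall : ∀ u, u ∈ us) (σ : Perm ι) (v : ι → M) :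
    wedge R (us.map (v ∘ σ)) = Perm.sign σ • wedge R (us.map v) := by
  have hwedge (w : ι → M) : wedge R (us.map w) = (ExteriorAlgebra.ιMulti R us.length).domDomCongr
      (List.Nodup.getEquivOfForallMemList us hus hall) w := by
    have hmap : us.map w = List.ofFn fun i => w (us.get i) := by
      rw [← Function.comp_def, ← List.map_ofFn, List.ofFn_get]
    rw [hmap, ← ιMulti_eq_wedge_ofFn]
    rfl
  rw [hwedge, hwedge, AlternatingMap.map_perm]

/-- The sign of a family of permutations, one for each column. -/
noncomputable def columnSign (R : Type*) [CommRing R] : (J → Perm κ) →* R where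
  toFun π := ((∏ j, Perm.sign (π j) : ℤˣ) : ℤ)
  map_one' := by simp
  map_mul' π π' := by simp [Finset.prod_mul_distrib]

theorem columnSign_apply (π : J → Perm κ) :
    columnSign R π = ((∏ j, Perm.sign (π j) : ℤˣ) : ℤ) := rfl

theorem columnSign_mul_self (π : J → Perm κ) : columnSign R π * columnSign R π = 1 := by
  rw [columnSign_apply, ← Int.cast_mul, ← Units.val_mul, Int.units_mul_self, Units.val_one,
    Int.cast_one]

theorem columnSign_mulSingle_swap (j : J) {k k' : κ} (h : k ≠ k') :
    columnSign R (Pi.mulSingle j (swap k k')) = -1 := by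
  rw [columnSign_apply,
    Fintype.prod_eq_single j fun i hi => by rw [Pi.mulSingle_eq_of_ne hi, map_one],
    Pi.mulSingle_eq_same, Perm.sign_swap h]
  simp

theorem columnSign_addRight {p : ℕ} [Fact p.Prime] (a : ZMod p) :
    columnSign (ZMod p) (fun _ : J => Equiv.addRight a) = 1 := by
  rw [← ZMod.pow_card (columnSign (ZMod p) _), ← map_pow]
  have hpow : (fun _ : J => Equiv.addRight a) ^ p = 1 := funext fun _ => Perm.ext fun x => by
    rw [Pi.pow_apply, Perm.coe_pow, Equiv.coe_addRight, add_right_iterate,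
      ZModModule.char_nsmul_eq_zero]
    exact add_zero x
  rw [hpow, map_one]

theorem wedge_map_prodCongrRight {us : List (J × κ)} (hus : us.Nodup) (hall : ∀ u, u ∈ us)
    (π : J → Perm κ) (v : J × κ → M) :
    wedge R (us.map (v ∘ prodCongrRight π)) = columnSign R π • wedge R (us.map v) := by
  rw [wedge_map_comp_perm hus hall, columnSign_apply, Int.cast_smul_eq_zsmul, Units.smul_def]
  congr 2
  convert Perm.sign_prodCongrRight π

theorem cast_natCard_perm_fixing_zero (p : ℕ) [Fact p.Prime] :
    (Nat.card {σ : Perm (ZMod p) // σ 0 = 0} : ZMod p) = -1 := by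
  have hcard : Nat.card {σ : Perm (ZMod p) // σ 0 = 0} = (p - 1).factorial := by
    rw [← Nat.card_congr ((Perm.subtypeEquivSubtypePerm (· ≠ (0 : ZMod p))).trans
      (Equiv.subtypeEquivRight fun σ => by simp)), Nat.card_perm]
    simp [ZMod.card]
  rw [hcard, ZMod.wilsons_lemma]

theorem cast_natCard_forall_perm_fixing_zero (p : ℕ) [Fact p.Prime] :
    (Nat.card {π : J → Perm (ZMod p) // ∀ j, π j 0 = 0} : ZMod p) = (-1) ^ Fintype.card J := by
  rw [Nat.card_congr (Equiv.subtypePiEquivPi (p := fun _ (σ : Perm (ZMod p)) => σ 0 = 0)),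
    Nat.card_pi, Nat.cast_prod, Finset.prod_congr rfl fun _ _ => cast_natCard_perm_fixing_zero p,
    Finset.prod_const, Finset.card_univ]

end Sign

section FundamentalCycle

open Equiv

variable {R J G : Type*} [CommRing R] [Fintype J] [AddCommGroup G]

/-- The vertices `(j, 0)`. -/
noncomputable def zeroRow (J G : Type*) [Fintype J] [AddCommGroup G] : List (J × G) :=
  (Finset.univ : Finset J).toList.map fun j => (j, 0)

/-- The vertices `(j, k)` with `k ≠ 0`. -/
noncomputable def nonzeroRows (J G : Type*) [Fintype J] [AddCommGroup G] [Fintype G] :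
    List (J × G) :=
  (Finset.univ : Finset (J × {k : G // k ≠ 0})).toList.map fun u => (u.1, u.2)

theorem mem_zeroRow {u : J × G} : u ∈ zeroRow J G ↔ u.2 = 0 := by
  simp [zeroRow, Prod.ext_iff, eq_comm]

theorem mem_nonzeroRows [Fintype G] {u : J × G} : u ∈ nonzeroRows J G ↔ u.2 ≠ 0 := by
  simp [nonzeroRows, Prod.ext_iff]

variable [Fintype G]

/-- The facet of the chessboard complexes on `J` columns in which the vertex `(j, k)`, `k ≠ 0`, is
placed in the row `π j k`. -/
noncomputable def topCell (π : J → Perm G) : List (G × J × {k : G // k ≠ 0}) :=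
  (Finset.univ : Finset (J × {k : G // k ≠ 0})).toList.map fun u => (π u.1 u.2, u)

theorem topCell_addRight_mul (a : G) (π : J → Perm G) :
    topCell ((fun _ => Equiv.addRight a) * π) = (topCell π).map (shift a) := by
  rw [topCell, topCell, List.map_map]
  rfl

theorem length_topCell (π : J → Perm G) :
    (topCell π).length = Fintype.card J * (Fintype.card G - 1) := by
  simp [topCell]

theorem eraseIdx_topCell_mul_mulSingle_swap (π : J → Perm G) {n : ℕ}
    (hn : n < (Finset.univ : Finset (J × {k : G // k ≠ 0})).toList.length)
    {u : J × {k : G // k ≠ 0}} (hu : (Finset.univ : Finset _).toList[n] = u) :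
    (topCell (π * Pi.mulSingle u.1 (swap (u.2 : G) 0))).eraseIdx n = (topCell π).eraseIdx n := by
  rw [topCell, topCell, List.eraseIdx_map, List.eraseIdx_map]
  refine List.map_congr_left fun w hw => Prod.ext ?_ rfl
  obtain ⟨m, hm, hmn, rfl⟩ := List.mem_eraseIdx_iff_getElem.1 hw
  set w := (Finset.univ : Finset (J × {k : G // k ≠ 0})).toList[m]
  have hwu : w ≠ u := fun h =>
    hmn ((List.Nodup.getElem_inj_iff (Finset.nodup_toList _)).1 (h.trans hu.symm))
  by_cases h : w.1 = u.1
  · have hne : (w.2 : G) ≠ u.2 := fun h' => hwu (Prod.ext h (Subtype.ext h'))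
    rw [← h, Pi.mul_apply, Pi.mulSingle_eq_same, Perm.mul_apply,
      swap_apply_of_ne_of_ne hne w.2.2]
  · rw [Pi.mul_apply, Pi.mulSingle_eq_of_ne h, mul_one]

variable (R J G) in
/-- The fundamental cycle of the join of the `J` chessboard complexes with `|G|` rows and `|G| - 1`
columns. -/
noncomputable def fundamentalCycle : Chain R (G × J × {k : G // k ≠ 0}) :=
  ∑ π : J → Perm G, columnSign R π • simplex R (topCell π)

theorem boundary_fundamentalCycle : boundary (fundamentalCycle R J G) = 0 := by
  simp only [fundamentalCycle, map_sum, map_smul, boundary_simplex, Finset.smul_sum,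
    length_topCell]
  rw [Finset.sum_comm]
  refine Finset.sum_eq_zero fun n hn => ?_
  have hn : n < (Finset.univ : Finset (J × {k : G // k ≠ 0})).toList.length := by
    simpa using hn
  set u := (Finset.univ : Finset (J × {k : G // k ≠ 0})).toList[n] with hu
  refine Finset.sum_involution (fun π _ => π * Pi.mulSingle u.1 (swap (u.2 : G) 0))
    (fun π _ => ?_) (fun π _ _ h => ?_) (fun π _ => Finset.mem_univ _) (fun π _ => ?_)
  · rw [eraseIdx_topCell_mul_mulSingle_swap π hn hu.symm, map_mul,
      columnSign_mulSingle_swap _ u.2.2, mul_neg_one, neg_smul, add_neg_cancel]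
  · rw [mul_eq_left, Pi.mulSingle_eq_one_iff, swap_eq_one_iff] at h
    exact u.2.2 h
  · rw [mul_assoc, ← Pi.mulSingle_mul, swap_mul_self, Pi.mulSingle_one, mul_one]

theorem apply_fundamentalCycle_eq_zero {p : ℕ} [Fact p.Prime] [Nonempty J] {M : Type*}
    [AddCommGroup M] [Module (ZMod p) M]
    {T : Chain (ZMod p) (ZMod p × J × {k : ZMod p // k ≠ 0}) →ₗ[ZMod p] M}
    (hT : ∀ π, T (simplex _ ((topCell π).map (shift 1))) = T (simplex _ (topCell π))) :
    T (fundamentalCycle (ZMod p) J (ZMod p)) = 0 := by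
  obtain ⟨j⟩ := ‹Nonempty J›
  simp only [fundamentalCycle, map_sum, map_smul]
  refine sum_eq_zero_of_apply_perm_eq_add_one 
    (Equiv.mulLeft (fun _ => Equiv.addRight 1 : J → Perm (ZMod p)))
    (f := fun π : J → Perm (ZMod p) => π j 0) (fun π => ?_) fun π => ?_
  · simp
  · rw [Equiv.coe_mulLeft, map_mul, columnSign_addRight, one_mul, topCell_addRight_mul, hT]

/-- The labelling of the vertices of the join of the chessboard complexes that forgets the columns
within each colour class. -/
noncomputable def colorLabel (R : Type*) {J G K : Type*} [CommRing R] (q : G × J × K) :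
    J × G → R := vertex R (q.2.1, q.1)

theorem labelMap_colorLabel_topCell (π : J → Perm G) :
    labelMap R (colorLabel R) (simplex R (topCell π)) = orientedSimplex R
      ((Finset.univ : Finset (J × {k : G // k ≠ 0})).toList.map fun u => (u.1, π u.1 u.2)) := by
  rw [labelMap_simplex, topCell, List.map_map, orientedSimplex, List.map_map]
  exact congrArg _ (List.map_congr_left fun u _ => rfl)

theorem orientedSimplex_append {ι : Type*} (us vs : List ι) :
    orientedSimplex R (us ++ vs) = orientedSimplex R us * orientedSimplex R vs := by
  simp [orientedSimplex, wedge]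

theorem orientedSimplex_eq_zero_of_not_nodup {ι : Type*} {us : List ι} (hus : ¬us.Nodup) :
    orientedSimplex R us = 0 :=
  wedge_eq_zero_of_not_nodup fun h => hus h.of_map

theorem orientedSimplex_ne_zero [Nontrivial R] {ι : Type*} {us : List ι} (hus : us.Nodup) :
    orientedSimplex R us ≠ 0 := fun h => by
  have := contractCoords_orientedSimplex_mul (R := R) hus (y := 1) fun _ _ =>
    CliffordAlgebra.contractLeft_one (Q := 0) _
  rw [h, zero_mul, map_zero] at this
  exact zero_ne_one this

theorem nodup_zeroRow_append_nonzeroRows : (zeroRow J G ++ nonzeroRows J G).Nodup := by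
  refine List.nodup_append.2 ⟨(Finset.nodup_toList _).map fun j j' h => congrArg Prod.fst h,
    (Finset.nodup_toList _).map fun u u' h => ?_, ?_⟩
  · simpa [Prod.ext_iff, Subtype.ext_iff] using h
  · rintro u hu _ hu' rfl
    exact mem_nonzeroRows.1 hu' (mem_zeroRow.1 hu)

theorem orientedSimplex_zeroRow_mul_labelMap_topCell {π : J → Perm G} (h : ∀ j, π j 0 = 0) :
    orientedSimplex R (zeroRow J G) * labelMap R (colorLabel R) (simplex R (topCell π)) =
      columnSign R π • orientedSimplex R (zeroRow J G ++ nonzeroRows J G) := by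
  have hmap : zeroRow J G ++ (Finset.univ : Finset (J × {k : G // k ≠ 0})).toList.map
      (fun u => (u.1, π u.1 u.2)) = (zeroRow J G ++ nonzeroRows J G).map (prodCongrRight π) := by
    simp [zeroRow, nonzeroRows, h, Function.comp_def]
  rw [labelMap_colorLabel_topCell, ← orientedSimplex_append, hmap, orientedSimplex, List.map_map,
    wedge_map_prodCongrRight nodup_zeroRow_append_nonzeroRows, orientedSimplex]
  intro u
  rw [List.mem_append, mem_zeroRow, mem_nonzeroRows]
  exact em _

theorem orientedSimplex_zeroRow_mul_labelMap_topCell_eq_zero {π : J → Perm G} {j : J}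
    (hj : π j 0 ≠ 0) :
    orientedSimplex R (zeroRow J G) * labelMap R (colorLabel R) (simplex R (topCell π)) = 0 := by
  rw [labelMap_colorLabel_topCell, ← orientedSimplex_append]
  refine orientedSimplex_eq_zero_of_not_nodup fun hnd =>
    List.disjoint_of_nodup_append hnd (a := (j, 0)) (mem_zeroRow.2 rfl) ?_
  have hne : (π j).symm 0 ≠ 0 := fun h => hj (by rw [← h, apply_symm_apply, h])
  exact List.mem_map.2 ⟨(j, ⟨(π j).symm 0, hne⟩), by simp⟩

theorem orientedSimplex_zeroRow_mul_labelMap_fundamentalCycle :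
    orientedSimplex R (zeroRow J G) * labelMap R (colorLabel R) (fundamentalCycle R J G) =
      (Nat.card {π : J → Perm G // ∀ j, π j 0 = 0} : R) •
        orientedSimplex R (zeroRow J G ++ nonzeroRows J G) := by
  simp only [fundamentalCycle, map_sum, map_smul, Finset.mul_sum, mul_smul_comm]
  rw [Nat.cast_smul_eq_nsmul, Nat.card_eq_fintype_card, ← Finset.card_univ, ← Finset.sum_const]
  refine (Fintype.sum_of_injective _ Subtype.val_injective _ _ (fun π hπ => ?_)
    fun π => ?_).symm
  · obtain ⟨j, hj⟩ := not_forall.1 fun h => hπ ⟨⟨π, h⟩, rfl⟩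
    rw [orientedSimplex_zeroRow_mul_labelMap_topCell_eq_zero hj, smul_zero]
  · rw [orientedSimplex_zeroRow_mul_labelMap_topCell π.2, smul_smul, columnSign_mul_self,
      one_smul]

theorem labelMap_fundamentalCycle_ne_zero (p : ℕ) [Fact p.Prime] :
    labelMap (ZMod p) (colorLabel (ZMod p)) (fundamentalCycle (ZMod p) J (ZMod p)) ≠ 0 := by
  refine right_ne_zero_of_mul (a := orientedSimplex (ZMod p) (zeroRow J (ZMod p))) ?_
  rw [orientedSimplex_zeroRow_mul_labelMap_fundamentalCycle, cast_natCard_forall_perm_fixing_zero]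
  exact smul_ne_zero (pow_ne_zero _ (neg_ne_zero.2 one_ne_zero))
    (orientedSimplex_ne_zero nodup_zeroRow_append_nonzeroRows)

end FundamentalCycle

section RainbowCell

variable {G V C : Type*}

/-- The vertices `(i, v)` of `l` describe pairwise disjoint rainbow faces: the face with index `i`
consists of the `v` with `(i, v) ∈ l`. -/
structure IsRainbowCell (c : V → C) (l : List (G × V)) : Prop where
  nodup : l.Nodup
  fst_eq {p q : G × V} (hp : p ∈ l) (hq : q ∈ l) (h : p.2 = q.2) : p.1 = q.1
  snd_eq {p q : G × V} (hp : p ∈ l) (hq : q ∈ l) (h : p.1 = q.1) (hc : c p.2 = c q.2) : p.2 = q.2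

theorem isShiftComplex_isRainbowCell [AddCommGroup G] (c : V → C) :
    IsShiftComplex {l : List (G × V) | IsRainbowCell c l} where
  mem_of_sublist hl h :=
    ⟨hl.nodup.sublist h, fun hp hq => hl.fst_eq (h.subset hp) (h.subset hq),
      fun hp hq => hl.snd_eq (h.subset hp) (h.subset hq)⟩
  map_shift_mem {l} hl a := by
    have hmem {p : G × V} (hp : p ∈ l.map (shift a)) : ∃ q ∈ l, q.1 + a = p.1 ∧ q.2 = p.2 := by
      simpa [shift, Prod.ext_iff] using hp
    refine ⟨hl.nodup.map (shift_injective a), fun hp hq h => ?_, fun hp hq h hc => ?_⟩ <;>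
      obtain ⟨p', hp', hp1, hp2⟩ := hmem hp <;> obtain ⟨q', hq', hq1, hq2⟩ := hmem hq
    · rw [← hp1, ← hq1, hl.fst_eq hp' hq' (by rw [hp2, h, hq2])]
    · rw [← hp1, ← hq1, add_left_inj] at h
      rw [← hp2, ← hq2] at hc ⊢
      exact hl.snd_eq hp' hq' h hc

theorem IsRainbowCell.map_some {c : V → C} {l : List (G × V)} (hl : IsRainbowCell c l) :
    IsRainbowCell (Option.map c) (l.map (Prod.map id some)) where
  nodup := hl.nodup.map (Function.injective_id.prodMap (Option.some_injective V))
  fst_eq hp hq h := by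
    obtain ⟨p, hp', rfl⟩ := List.mem_map.1 hp
    obtain ⟨q, hq', rfl⟩ := List.mem_map.1 hq
    exact hl.fst_eq hp' hq' (Option.some_injective V h)
  snd_eq hp hq h hc := by
    obtain ⟨p, hp', rfl⟩ := List.mem_map.1 hp
    obtain ⟨q, hq', rfl⟩ := List.mem_map.1 hq
    exact congrArg some (hl.snd_eq hp' hq' h (Option.some_injective C hc))

theorem IsRainbowCell.none_cons {c : V → C} {l : List (G × V)} (hl : IsRainbowCell c l) (i : G) :
    IsRainbowCell (Option.map c) ((i, none) :: l.map (Prod.map id some)) where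
  nodup := List.nodup_cons.2 ⟨by simp, hl.map_some.nodup⟩
  fst_eq hp hq h := by
    rcases List.mem_cons.1 hp with rfl | hp <;> rcases List.mem_cons.1 hq with rfl | hq
    · rfl
    · obtain ⟨q, -, rfl⟩ := List.mem_map.1 hq
      exact absurd h.symm (Option.some_ne_none _)
    · obtain ⟨p, -, rfl⟩ := List.mem_map.1 hp
      exact absurd h (Option.some_ne_none _)
    · exact hl.map_some.fst_eq hp hq h
  snd_eq hp hq h hc := by
    rcases List.mem_cons.1 hp with rfl | hp <;> rcases List.mem_cons.1 hq with rfl | hq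
    · rfl
    · obtain ⟨q, -, rfl⟩ := List.mem_map.1 hq
      exact absurd hc.symm (Option.some_ne_none _)
    · obtain ⟨p, -, rfl⟩ := List.mem_map.1 hp
      exact absurd hc (Option.some_ne_none _)
    · exact hl.map_some.snd_eq hp hq h hc

end RainbowCell

section Chessboard

variable {R J G : Type*} [CommRing R] [AddCommGroup G]

theorem isRainbowCell_topCell [Fintype J] [Fintype G] (π : J → Equiv.Perm G) :
    IsRainbowCell Prod.fst (topCell π) where
  nodup := (Finset.nodup_toList _).map fun u v h => congrArg Prod.snd h
  fst_eq hp hq h := by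
    simp only [topCell, List.mem_map] at hp hq
    obtain ⟨⟨u, -, rfl⟩, v, -, rfl⟩ := And.intro hp hq
    rw [show u = v from h]
  snd_eq hp hq h hc := by
    simp only [topCell, List.mem_map] at hp hq
    obtain ⟨⟨⟨j, k⟩, -, rfl⟩, ⟨j', k'⟩, -, rfl⟩ := And.intro hp hq
    obtain rfl : j = j' := hc
    exact Prod.ext rfl (Subtype.ext ((π j).injective h))

theorem IsRainbowCell.exists_colorLabel_eq_zero [Finite G] {l : List (G × J × {k : G // k ≠ 0})}
    (hl : IsRainbowCell Prod.fst l) (j : J) : ∃ i, ∀ p ∈ l, colorLabel R p (j, i) = 0 := by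
  by_contra! h
  have hvertex (i : G) : ∃ p ∈ l, p.1 = i ∧ p.2.1 = j := by
    obtain ⟨p, hp, hne⟩ := h i
    have := not_imp_comm.1 (vertex_of_ne (R := R)) hne
    exact ⟨p, hp, (congrArg Prod.snd this).symm, (congrArg Prod.fst this).symm⟩
  choose p hp hpi hpj using hvertex
  have hinj : Function.Injective fun i => ((p i).2.2 : G) := fun i i' h => by
    rw [← hpi i, ← hpi i']
    exact hl.fst_eq (hp i) (hp i') (Prod.ext ((hpj i).trans (hpj i').symm) (Subtype.ext h))
  obtain ⟨i, hi⟩ := Finite.surjective_of_injective hinj 0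
  exact (p i).2.2.2 hi

variable [Fintype J] [Fintype G]

theorem isEquivariantChainMap_labelMap_colorLabel :
    IsEquivariantChainMap {l : List (G × J × {k : G // k ≠ 0}) | IsRainbowCell Prod.fst l}
      (labelMap R (colorLabel R)) where
  mem hl := ⟨labelMap_simplex_mem_columnFree hl.exists_colorLabel_eq_zero,
    labelMap_simplex_mem_exteriorPower _ _⟩
  extBoundary_apply _ := extBoundary_labelMap (fun _ => augmentation_vertex _) _
  apply_shift _ a := labelMap_map_shift fun p _ u => by
    simp only [colorLabel, shift, vertex, Pi.single_apply, Prod.ext_iff, sub_eq_iff_eq_add]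

theorem IsEquivariantChainMap.comp_pushforward_some {V C : Type*} {c : V → C}
    {Φ : Chain R (G × Option V) →ₗ[R] ExteriorAlgebra R (J × G → R)}
    (hΦ : IsEquivariantChainMap {l | IsRainbowCell (Option.map c) l} Φ) :
    IsEquivariantChainMap {l | IsRainbowCell c l} (Φ ∘ₗ pushforward (Prod.map id some)) where
  mem {l} hl := by
    simpa using hΦ.mem (IsRainbowCell.map_some hl)
  extBoundary_apply {l} hl := by
    rw [LinearMap.comp_apply, LinearMap.comp_apply, ← boundary_pushforward, pushforward_simplex]
    exact hΦ.extBoundary_apply hl.map_some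
  apply_shift {l} hl a := by
    have := hΦ.apply_shift hl.map_some a
    rw [List.map_map] at this
    rw [LinearMap.comp_apply, LinearMap.comp_apply, pushforward_simplex, pushforward_simplex,
      ← this, List.map_map]
    rfl

variable {p : ℕ} [Fact p.Prime]

/-- Up to a homotopy, which does not see the cycle, `Φ` is invariant on top cells, and the orbits of
the translations have `p` elements. -/
theorem IsEquivariantChainMap.apply_fundamentalCycle_eq_zero [Nonempty J]
    {Φ : Chain (ZMod p) (ZMod p × J × {k : ZMod p // k ≠ 0}) →ₗ[ZMod p]
      ExteriorAlgebra (ZMod p) (J × ZMod p → ZMod p)}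
    (hΦ : IsEquivariantChainMap {l | IsRainbowCell Prod.fst l} Φ) (hnil : Φ (simplex _ []) = 0) :
    Φ (fundamentalCycle (ZMod p) J (ZMod p)) = 0 := by
  obtain ⟨h, hT⟩ :=
    hΦ.exists_isEquivariantCycleMap (isShiftComplex_isRainbowCell _) hnil le_rfl
  have hT_eq : (Φ - h ∘ₗ boundary) (fundamentalCycle (ZMod p) J (ZMod p)) =
      Φ (fundamentalCycle (ZMod p) J (ZMod p)) := by
    rw [LinearMap.sub_apply, LinearMap.comp_apply, boundary_fundamentalCycle, map_zero, sub_zero]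
  rw [← hT_eq]
  refine ColoredTverberg.apply_fundamentalCycle_eq_zero fun π => ?_
  have hπ := isRainbowCell_topCell π
  have hmem := hT.mem hπ (length_topCell π)
  rw [ZMod.card] at hmem
  rw [hT.apply_shift hπ (length_topCell π), rotate_eq_self_of_extBoundary_eq_zero 1 hmem
    (hT.extBoundary_apply hπ (length_topCell π))]

/-- The uncolored vertex cones off the fundamental cycle, and no face of the target has enough
vertices for the image of the cone. -/
theorem IsEquivariantChainMap.apply_pushforward_fundamentalCycle_eq_zero
    {Φ : Chain R (G × Option (J × {k : G // k ≠ 0})) →ₗ[R] ExteriorAlgebra R (J × G → R)}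
    (hΦ : IsEquivariantChainMap {l | IsRainbowCell (Option.map Prod.fst) l} Φ) :
    Φ (pushforward (Prod.map id some) (fundamentalCycle R J G)) = 0 := by
  set z := pushforward (Prod.map id some) (fundamentalCycle R J G) with hz
  have hcone : boundary (cone ((0 : G), none) z) = z := by
    rw [boundary_cone, hz, boundary_pushforward, boundary_fundamentalCycle, map_zero, map_zero,
      sub_zero]
  rw [← hcone, hz, fundamentalCycle]
  simp only [map_sum, map_smul, pushforward_simplex, cone_simplex]
  refine Finset.sum_eq_zero fun π _ => ?_
  have hcell := (isRainbowCell_topCell π).none_cons 0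
  rw [← hΦ.extBoundary_apply hcell, eq_zero_of_mem_columnFree_of_lt _ (hΦ.mem hcell), map_zero,
    smul_zero]
  simp [length_topCell]

theorem IsEquivariantChainMap.apply_nil_ne_one [Nonempty J]
    {Φ : Chain (ZMod p) (ZMod p × Option (J × {k : ZMod p // k ≠ 0})) →ₗ[ZMod p]
      ExteriorAlgebra (ZMod p) (J × ZMod p → ZMod p)}
    (hΦ : IsEquivariantChainMap {l | IsRainbowCell (Option.map Prod.fst) l} Φ) :
    Φ (simplex _ []) ≠ 1 := fun hnil => by
  have hsub := (hΦ.comp_pushforward_some.sub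
    isEquivariantChainMap_labelMap_colorLabel).apply_fundamentalCycle_eq_zero
    (by simp [hnil, labelMap_simplex])
  rw [LinearMap.sub_apply, LinearMap.comp_apply, hΦ.apply_pushforward_fundamentalCycle_eq_zero,
    zero_sub, neg_eq_zero] at hsub
  exact labelMap_fundamentalCycle_ne_zero p hsub

end Chessboard

section Subdivision

variable {R Y Z : Type*} [CommRing R] [NormedAddCommGroup Y] [NormedSpace ℝ Y] [AddCommGroup Z]
  [Module ℝ Z]

/-- The barycenter of the vertices in a list, with the junk value `0` for the empty list. -/
noncomputable def barycenter {Y : Type*} [AddCommGroup Y] [Module ℝ Y] (l : List Y) : Y :=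
  (l.length : ℝ)⁻¹ • l.sum

/-- Barycentric subdivision of the cells with `n` vertices. -/
noncomputable def subdivisionAux (R : Type*) [CommRing R] {Y : Type*} [AddCommGroup Y]
    [Module ℝ Y] : ℕ → Chain R Y →ₗ[R] Chain R Y
  | 0 => LinearMap.id
  | n + 1 => Finsupp.linearCombination R fun l =>
      cone (barycenter l) (subdivisionAux R n (boundary (simplex R l)))

/-- The barycentric subdivision operator on ordered chains. -/
noncomputable def subdivision {Y : Type*} [AddCommGroup Y] [Module ℝ Y] :
    Module.End R (Chain R Y) :=
  Finsupp.linearCombination R fun l => subdivisionAux R l.length (simplex R l)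

section Module

variable {Y : Type*} [AddCommGroup Y] [Module ℝ Y]

@[simp]
theorem subdivision_simplex_nil : subdivision (simplex R ([] : List Y)) = simplex R [] :=
  linearCombination_simplex _ _

theorem subdivision_simplex {l : List Y} (hl : l ≠ []) : subdivision (simplex R l) =
    cone (barycenter l) (subdivision (boundary (simplex R l))) := by
  obtain ⟨a, l, rfl⟩ := List.exists_cons_of_ne_nil hl
  rw [subdivision, linearCombination_simplex, List.length_cons, subdivisionAux,
    linearCombination_simplex]
  refine congrArg _ (map_eq_map_of_mem_supported (boundary_simplex_mem_supported (a :: l)) _ _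
    fun l' hl' => ?_)
  rw [linearCombination_simplex, Nat.succ_injective hl'.2]

theorem boundary_subdivision (x : Chain R Y) :
    boundary (subdivision x) = subdivision (boundary x) := by
  have h : boundary ∘ₗ subdivision = subdivision ∘ₗ boundary (X := Y) (R := R) :=
    linearMap_ext_simplex fun l => by
      induction hn : l.length generalizing l with
      | zero =>
        rw [List.length_eq_zero_iff.1 hn]
        simp only [LinearMap.comp_apply, subdivision_simplex_nil, boundary_simplex_nil, map_zero]
      | succ n ih =>
        have hl : l ≠ [] := List.ne_nil_of_length_eq_add_one hn
        have hface := map_eq_map_of_mem_supported (boundary_simplex_mem_supported l) _ _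
          fun l' hl' => ih l' (by have := hl'.2; lia)
        rw [LinearMap.comp_apply, LinearMap.comp_apply, boundary_boundary, map_zero] at hface
        rw [LinearMap.comp_apply, LinearMap.comp_apply, subdivision_simplex hl, boundary_cone,
          hface, map_zero, sub_zero]
  exact LinearMap.congr_fun h x

theorem boundary_subdivision_pow (m : ℕ) (x : Chain R Y) :
    boundary ((subdivision ^ m) x) = (subdivision ^ m) (boundary x) := by
  induction m with
  | zero => rfl
  | succ m ih =>
    rw [pow_succ', Module.End.mul_apply, Module.End.mul_apply, boundary_subdivision, ih]

theorem barycenter_map (T : Y →ₗ[ℝ] Z) (l : List Y) : barycenter (l.map T) = T (barycenter l) := by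
  rw [barycenter, barycenter, map_smul, map_list_sum, List.length_map]

theorem pushforward_subdivision (T : Y →ₗ[ℝ] Z) (x : Chain R Y) :
    pushforward T (subdivision x) = subdivision (pushforward T x) := by
  have h : pushforward T ∘ₗ subdivision = subdivision ∘ₗ pushforward (R := R) T :=
    linearMap_ext_simplex fun l => by
      induction hn : l.length generalizing l with
      | zero =>
        rw [List.length_eq_zero_iff.1 hn]
        simp only [LinearMap.comp_apply, subdivision_simplex_nil, pushforward_simplex, List.map_nil]
      | succ n ih =>
        have hl : l ≠ [] := List.ne_nil_of_length_eq_add_one hn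
        have hface := map_eq_map_of_mem_supported (boundary_simplex_mem_supported l) _ _
          fun l' hl' => ih l' (by have := hl'.2; lia)
        rw [LinearMap.comp_apply, LinearMap.comp_apply] at hface
        rw [LinearMap.comp_apply, LinearMap.comp_apply, subdivision_simplex hl, pushforward_cone,
          hface, ← boundary_pushforward, pushforward_simplex, ← barycenter_map,
          subdivision_simplex (mt List.map_eq_nil_iff.1 hl)]
  exact LinearMap.congr_fun h x

theorem pushforward_subdivision_pow (T : Y →ₗ[ℝ] Z) (m : ℕ) (x : Chain R Y) :
    pushforward T ((subdivision ^ m) x) = (subdivision ^ m) (pushforward T x) := by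
  induction m with
  | zero => rfl
  | succ m ih =>
    rw [pow_succ', pow_succ', Module.End.mul_apply, Module.End.mul_apply,
      pushforward_subdivision, ih]

theorem subdivision_pow_simplex_nil (m : ℕ) :
    (subdivision ^ m) (simplex R ([] : List Y)) = simplex R [] := by
  induction m with
  | zero => rfl
  | succ m ih => rw [pow_succ, Module.End.mul_apply, subdivision_simplex_nil, ih]

theorem barycenter_sub {l : List Y} (hl : l ≠ []) (v : Y) :
    barycenter l - v = (l.length : ℝ)⁻¹ • (l.map (· - v)).sum := by
  have hlen : (l.length : ℝ) ≠ 0 := Nat.cast_ne_zero.2 (mt List.length_eq_zero_iff.1 hl)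
  have hsum : (l.map (· - v)).sum = l.sum - (l.length : ℝ) • v := by
    rw [Nat.cast_smul_eq_nsmul, ← List.sum_replicate, ← List.map_const']
    simpa using Multiset.sum_map_sub (m := (l : Multiset Y)) (f := id) (g := fun _ => v)
  rw [hsum, smul_sub, inv_smul_smul₀ hlen, barycenter]

theorem barycenter_mem {l : List Y} (hl : l ≠ []) {K : Set Y} (hK : Convex ℝ K)
    (h : ∀ x ∈ l, x ∈ K) : barycenter l ∈ K := by
  have hlen : (l.length : ℝ) ≠ 0 := Nat.cast_ne_zero.2 (mt List.length_eq_zero_iff.1 hl)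
  rw [barycenter, ← Fin.sum_univ_getElem, Finset.smul_sum]
  refine hK.sum_mem (fun _ _ => by positivity) ?_ fun i _ => h _ (List.getElem_mem _)
  rw [Finset.sum_const, Finset.card_univ, Fintype.card_fin, nsmul_eq_mul, mul_inv_cancel₀ hlen]

end Module

theorem dist_barycenter_le {l : List Y} {N : ℕ} {δ : ℝ} (hN : l.length ≤ N + 1)
    (hl : ∀ x ∈ l, ∀ y ∈ l, dist x y ≤ δ) {v : Y} (hv : v ∈ l) :
    dist (barycenter l) v ≤ N / (N + 1) * δ := by
  have hδ : 0 ≤ δ := dist_nonneg.trans (hl v hv v hv)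
  obtain ⟨n, hn⟩ : ∃ n, l.length = n + 1 := Nat.exists_eq_add_one.2 (List.length_pos_of_mem hv)
  have hsum : (l.map (· - v)).sum = ((l.erase v).map (· - v)).sum := by
    rw [((List.perm_cons_erase hv).map _).sum_eq, List.map_cons, List.sum_cons, sub_self, zero_add]
  have hnorm : ‖((l.erase v).map (· - v)).sum‖ ≤ n * δ := by
    refine (norm_multiset_sum_le (((l.erase v).map (· - v) : List Y) : Multiset Y)).trans
      ((List.sum_le_card_nsmul _ δ ?_).trans_eq ?_)
    · simp only [List.map_map, List.mem_map]
      rintro _ ⟨x, hx, rfl⟩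
      exact (dist_eq_norm x v).symm.trans_le (hl x (List.mem_of_mem_erase hx) v hv)
    · rw [List.length_map, List.length_map, List.length_erase_of_mem hv, hn, nsmul_eq_mul,
        Nat.add_sub_cancel]
  have hnN : (n : ℝ) ≤ N := by exact_mod_cast (by lia : n ≤ N)
  rw [dist_eq_norm, barycenter_sub (List.ne_nil_of_mem hv), hsum, norm_smul, hn]
  calc ‖((n + 1 : ℕ) : ℝ)⁻¹‖ * ‖((l.erase v).map (· - v)).sum‖
      ≤ ((n : ℝ) + 1)⁻¹ * (n * δ) := by
        rw [norm_inv, Real.norm_natCast, Nat.cast_succ]; gcongr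
    _ = n / (n + 1) * δ := by ring
    _ ≤ N / (N + 1) * δ := by
        gcongr ?_ * _
        rw [div_le_div_iff₀ (by positivity) (by positivity)]
        linarith

/-- The cells with `n` vertices, all of them in `K` and at mutual distance at most `δ`. -/
def smallCells {Y : Type*} [PseudoMetricSpace Y] (K : Set Y) (δ : ℝ) (n : ℕ) : Set (List Y) :=
  {l | l.length = n ∧ (∀ x ∈ l, x ∈ K) ∧ ∀ x ∈ l, ∀ y ∈ l, dist x y ≤ δ}

theorem cons_mem_smallCells {Y : Type*} [PseudoMetricSpace Y] {K : Set Y} {δ : ℝ} (hδ : 0 ≤ δ)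
    {n : ℕ} {a : Y} {l : List Y} (ha : a ∈ K)
    (hl : l ∈ smallCells (K ∩ Metric.closedBall a δ) δ n) : a :: l ∈ smallCells K δ (n + 1) := by
  obtain ⟨hn, hK, hdist⟩ := hl
  refine ⟨congrArg Nat.succ hn, List.forall_mem_cons.2 ⟨ha, fun x hx => (hK x hx).1⟩, ?_⟩
  simp only [List.forall_mem_cons, dist_self]
  exact ⟨⟨hδ, fun x hx => (dist_comm a x).trans_le (hK x hx).2⟩,
    fun x hx => ⟨(hK x hx).2, hdist x hx⟩⟩

theorem subdivision_simplex_mem_supported {N : ℕ} {K : Set Y} (hK : Convex ℝ K) {δ : ℝ}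
    (hδ : 0 ≤ δ) {n : ℕ} (hn : n ≤ N + 1) {l : List Y} (hl : l ∈ smallCells K δ n) :
    subdivision (simplex R l) ∈ Finsupp.supported R R (smallCells K (N / (N + 1) * δ) n) := by
  induction n generalizing K l with
  | zero =>
    obtain rfl := List.length_eq_zero_iff.1 hl.1
    rw [subdivision_simplex_nil]
    exact Finsupp.single_mem_supported R _ ⟨rfl, by simp⟩
  | succ n ih =>
    have hne : l ≠ [] := List.ne_nil_of_length_eq_add_one hl.1
    obtain ⟨hlen, hlK, hdist⟩ := hl
    have hface : subdivision (boundary (simplex R l)) ∈ Finsupp.supported R R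
        (smallCells (K ∩ Metric.closedBall (barycenter l) (N / (N + 1) * δ))
          (N / (N + 1) * δ) n) := by
      refine map_mem_of_mem_supported (boundary_simplex_mem_supported l) _ _ fun l' hl' =>
        ih (hK.inter (convex_closedBall _ _)) (by lia) ⟨by have := hl'.2; lia, fun x hx => ?_,
          fun x hx y hy => hdist x (hl'.1.subset hx) y (hl'.1.subset hy)⟩
      have hx := hl'.1.subset hx
      exact ⟨hlK x hx, Metric.mem_closedBall'.2 (dist_barycenter_le (hlen.trans_le hn) hdist hx)⟩
    rw [subdivision_simplex hne]
    refine map_mem_of_mem_supported hface _ _ fun l' hl' => ?_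
    rw [cone_simplex]
    exact Finsupp.single_mem_supported R _
      (cons_mem_smallCells (by positivity) (barycenter_mem hne hK hlK) hl')

theorem subdivision_pow_simplex_mem_supported {N : ℕ} {K : Set Y} (hK : Convex ℝ K) {δ : ℝ}
    (hδ : 0 ≤ δ) {n : ℕ} (hn : n ≤ N + 1) {l : List Y} (hl : l ∈ smallCells K δ n) (m : ℕ) :
    (subdivision ^ m) (simplex R l) ∈
      Finsupp.supported R R (smallCells K ((N / (N + 1)) ^ m * δ) n) := by
  induction m with
  | zero =>
    rw [pow_zero, pow_zero, one_mul]
    exact Finsupp.single_mem_supported R _ hl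
  | succ m ih =>
    rw [pow_succ', pow_succ', mul_assoc]
    exact map_mem_of_mem_supported ih _ _ fun l' hl' =>
      subdivision_simplex_mem_supported hK (by positivity) hn hl'

end Subdivision

open Topology

section Label

variable {J G R : Type*}

section Oscillation

variable [Fintype G]

/-- The total oscillation of a function on a finite type, which vanishes exactly on the constant
functions. -/
noncomputable def oscillation (w : G → ℝ) : ℝ := ∑ i, ∑ i', |w i - w i'|

theorem continuous_oscillation : Continuous (oscillation : (G → ℝ) → ℝ) := by
  unfold oscillation
  fun_prop

theorem oscillation_pos_iff {w : G → ℝ} : 0 < oscillation w ↔ ∃ i i', w i ≠ w i' := by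
  have hsum : oscillation w = ∑ u : G × G, |w u.1 - w u.2| :=
    (Fintype.sum_prod_type' fun i i' => |w i - w i'|).symm
  rw [hsum, Finset.sum_pos_iff_of_nonneg fun _ _ => abs_nonneg _]
  simp only [Finset.mem_univ, true_and, abs_pos, sub_ne_zero, Prod.exists]

theorem oscillation_sub [AddGroup G] (w : G → ℝ) (a : G) :
    oscillation (fun i => w (i - a)) = oscillation w := by
  refine (Equiv.sum_comp (Equiv.subRight a) fun i => ∑ i', |w i - w (i' - a)|).trans ?_
  exact Finset.sum_congr rfl fun i _ => Equiv.sum_comp (Equiv.subRight a) fun i' => |w i - w i'|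

/-- The set of points at which a function attains its maximum. -/
noncomputable def argmax (w : G → ℝ) : Finset G := {i | ∀ i', w i' ≤ w i}

theorem mem_argmax {w : G → ℝ} {i : G} : i ∈ argmax w ↔ ∀ i', w i' ≤ w i :=
  Finset.mem_filter_univ i

theorem argmax_nonempty [Nonempty G] (w : G → ℝ) : (argmax w).Nonempty :=
  (Finite.exists_max w).imp fun _ => mem_argmax.2

theorem argmax_ne_univ_iff {w : G → ℝ} : argmax w ≠ Finset.univ ↔ ∃ i i', w i ≠ w i' := by
  rw [Ne, Finset.eq_univ_iff_forall, not_iff_comm]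
  push Not
  simp only [mem_argmax]
  exact ⟨fun h i i' => (h i i').ge, fun h i i' => le_antisymm (h i' i) (h i i')⟩

theorem argmax_sub [AddGroup G] (w : G → ℝ) (a : G) :
    argmax (fun i => w (i - a)) = (argmax w).map (Equiv.subRight a).symm.toEmbedding := by
  ext i
  rw [Finset.mem_map_equiv, mem_argmax, mem_argmax]
  exact (Equiv.subRight a).forall_congr_right (q := fun i' => w i' ≤ w (i - a))

end Oscillation

section DominantColumn

variable [Finite J] [Nonempty J] [Fintype G]

/-- A column of maximal oscillation, depending only on the oscillations of the columns. -/
noncomputable def dominantColumn (W : J → G → ℝ) : J :=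
  (Finite.exists_max (oscillation ∘ W)).choose

theorem oscillation_le_dominantColumn (W : J → G → ℝ) (j : J) :
    oscillation (W j) ≤ oscillation (W (dominantColumn W)) :=
  (Finite.exists_max (oscillation ∘ W)).choose_spec j

theorem argmax_dominantColumn_ne_univ {W : J → G → ℝ} (hW : ∃ j i i', W j i ≠ W j i') :
    argmax (W (dominantColumn W)) ≠ Finset.univ := by
  obtain ⟨j, hj⟩ := hW
  rw [argmax_ne_univ_iff, ← oscillation_pos_iff]
  exact (oscillation_pos_iff.2 hj).trans_le (oscillation_le_dominantColumn W j)

theorem dominantColumn_sub [AddGroup G] (W : J → G → ℝ) (a : G) :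
    dominantColumn (fun j i => W j (i - a)) = dominantColumn W := by
  have h : oscillation ∘ (fun j i => W j (i - a)) = oscillation ∘ W :=
    funext fun j => oscillation_sub (W j) a
  rw [dominantColumn, dominantColumn]
  simp only [h]

variable [AddGroup G] [Field R]

variable (R) in
/-- The label of a matrix: the uniform distribution on the maximal entries of its dominant column,
or an arbitrary vertex of that column if all of its entries are maximal. -/
noncomputable def argmaxLabel (W : J → G → ℝ) : J × G → R :=
  if argmax (W (dominantColumn W)) = Finset.univ then vertex R (dominantColumn W, 0)
  else fun u =>
    if u.1 = dominantColumn W ∧ u.2 ∈ argmax (W u.1) then (((argmax (W u.1)).card : R))⁻¹ else 0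

theorem argmaxLabel_of_ne {W : J → G → ℝ} {j : J} (hj : j ≠ dominantColumn W) (k : G) :
    argmaxLabel R W (j, k) = 0 := by
  rw [argmaxLabel]
  split_ifs
  · exact vertex_of_ne fun h => hj (congrArg Prod.fst h)
  · exact if_neg fun h => hj h.1

theorem argmaxLabel_eq_zero_of_lt {W : J → G → ℝ} {j : J} {k i : G} (h : W j k < W j i) :
    argmaxLabel R W (j, k) = 0 := by
  by_cases hj : j = dominantColumn W
  · rw [argmaxLabel, if_neg (argmax_dominantColumn_ne_univ ⟨j, k, i, h.ne⟩)]
    exact if_neg fun hk => h.not_ge (mem_argmax.1 hk.2 i)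
  · exact argmaxLabel_of_ne hj k

theorem argmaxLabel_sub {W : J → G → ℝ} (hW : ∃ j i i', W j i ≠ W j i') (a : G) (u : J × G) :
    argmaxLabel R (fun j i => W j (i - a)) u = argmaxLabel R W (u.1, u.2 - a) := by
  have hW' : argmax (fun i => W (dominantColumn W) (i - a)) ≠ Finset.univ := by
    rw [argmax_sub, Ne, ← Finset.card_eq_iff_eq_univ, Finset.card_map, Finset.card_eq_iff_eq_univ]
    exact argmax_dominantColumn_ne_univ hW
  rw [argmaxLabel, argmaxLabel, dominantColumn_sub, if_neg hW',
    if_neg (argmax_dominantColumn_ne_univ hW)]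
  simp only [argmax_sub, Finset.card_map, Finset.mem_map_equiv, Equiv.symm_symm,
    Equiv.subRight_apply]

theorem augmentation_argmaxLabel [Fintype J] [CharP R (Nat.card G)] (W : J → G → ℝ) :
    augmentation R (J × G) (argmaxLabel R W) = 1 := by
  rw [argmaxLabel]
  split_ifs with h
  · exact augmentation_vertex _
  set s := argmax (W (dominantColumn W))
  have hs : (s.card : R) ≠ 0 := by
    rw [Ne, CharP.cast_eq_zero_iff R (Nat.card G), Nat.card_eq_fintype_card]
    exact Nat.not_dvd_of_pos_of_lt (argmax_nonempty _).card_pos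
      ((Finset.card_lt_iff_ne_univ s).2 h)
  rw [augmentation_apply, Fintype.sum_prod_type,
    Fintype.sum_eq_single (dominantColumn W) fun j hj => by simp only [hj, false_and, if_false,
      Finset.sum_const_zero]]
  simp only [true_and, Finset.sum_ite_mem, Finset.univ_inter, Finset.sum_const, nsmul_eq_mul]
  exact mul_inv_cancel₀ hs

theorem exists_eventually_argmaxLabel_eq_zero {W : J → G → ℝ} (hW : ∃ j i i', W j i ≠ W j i')
    (j : J) : ∃ k, ∀ᶠ W' in 𝓝 W, argmaxLabel R W' (j, k) = 0 := by
  have hosc (j : J) : Continuous fun W' : J → G → ℝ => oscillation (W' j) :=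
    continuous_oscillation.comp (continuous_apply j)
  by_cases hj : ∃ i i', W j i ≠ W j i'
  · obtain ⟨k, i, hlt⟩ : ∃ k i, W j k < W j i := by
      obtain ⟨i, i', hne⟩ := hj
      exact hne.lt_or_gt.elim (fun h => ⟨i, i', h⟩) fun h => ⟨i', i, h⟩
    refine ⟨k, ?_⟩
    filter_upwards [((continuous_apply_apply j k).tendsto W).eventually_lt
      ((continuous_apply_apply j i).tendsto W) hlt] with W' h using argmaxLabel_eq_zero_of_lt h
  · obtain ⟨j', hj'⟩ := hW
    have hlt : oscillation (W j) < oscillation (W j') :=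
      (not_lt.1 (mt oscillation_pos_iff.1 hj)).trans_lt (oscillation_pos_iff.2 hj')
    refine ⟨0, ?_⟩
    filter_upwards [((hosc j).tendsto W).eventually_lt ((hosc j').tendsto W) hlt] with W' h
    refine argmaxLabel_of_ne ?_ 0
    rintro rfl
    exact h.not_ge (oscillation_le_dominantColumn W' j')

theorem exists_pos_forall_argmaxLabel_eq_zero {X : Type*} [PseudoMetricSpace X] {K : Set X}
    (hK : IsCompact K) {U : X → J → G → ℝ} (hU : ContinuousOn U K)
    (hne : ∀ x ∈ K, ∃ j i i', U x j i ≠ U x j i') :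
    ∃ ε > 0, ∀ x ∈ K, ∀ j, ∃ k, ∀ y ∈ K, dist x y < ε → argmaxLabel R (U y) (j, k) = 0 := by
  have hlocal (x : X) (hx : x ∈ K) (j : J) :
      ∃ k, ∀ᶠ y in 𝓝[K] x, argmaxLabel R (U y) (j, k) = 0 :=
    (exists_eventually_argmaxLabel_eq_zero (hne x hx) j).imp fun _ h => (hU x hx).eventually h
  choose k hk using hlocal
  obtain ⟨E, hE, hEK⟩ := lebesgue_number_lemma_nhdsWithin'
    (U := fun x hx => {y | ∀ j, argmaxLabel R (U y) (j, k x hx j) = 0}) hK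
    fun x hx => Filter.eventually_all.2 (hk x hx)
  obtain ⟨ε, hε, hεE⟩ := Metric.mem_uniformity_dist.1 hE
  refine ⟨ε, hε, fun x hx j => ?_⟩
  obtain ⟨x', hx'⟩ := hEK x hx
  exact ⟨k x' x'.2 j, fun y hy hxy => hx' ⟨hεE hxy, hy⟩ j⟩

end DominantColumn
end Label

section ConfigurationSpace

variable {ι G V C J R : Type*}

/-- The face of the standard simplex on `ι` spanned by the vertices in `l`. -/
def listFace [Fintype ι] (l : List ι) : Set (ι → ℝ) :=
  {y | y ∈ stdSimplex ℝ ι ∧ ∀ i ∉ l, y i = 0}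

theorem convex_listFace [Fintype ι] (l : List ι) : Convex ℝ (listFace l) :=
  (convex_stdSimplex ℝ ι).inter fun x hx y hy a b _ _ _ i hi => by
    rw [Pi.add_apply, Pi.smul_apply, Pi.smul_apply, hx i hi, hy i hi, smul_zero, smul_zero,
      add_zero]

theorem isCompact_listFace [Fintype ι] (l : List ι) : IsCompact (listFace l) := by
  have hzero : IsClosed {y : ι → ℝ | ∀ i ∉ l, y i = 0} := by
    simp only [Set.ofPred_forall]
    exact isClosed_biInter fun i _ => isClosed_singleton.preimage (continuous_apply i)
  exact (isCompact_stdSimplex ℝ ι).inter_right hzero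

theorem vertex_mem_listFace [Fintype ι] {l : List ι} {i : ι} (hi : i ∈ l) :
    vertex ℝ i ∈ listFace l :=
  ⟨single_mem_stdSimplex ℝ i, fun _ hj => vertex_of_ne (ne_of_mem_of_not_mem hi hj).symm⟩

/-- The action of `G` on the coefficients of the points of a `G`-indexed join. -/
def translate [AddCommGroup G] (a : G) : (G × V → ℝ) →ₗ[ℝ] (G × V → ℝ) :=
  LinearMap.funLeft ℝ ℝ fun p => (p.1 - a, p.2)

theorem translate_vertex [AddCommGroup G] (a : G) (p : G × V) :
    translate a (vertex ℝ p) = vertex ℝ (shift a p) := by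
  funext q
  simp only [translate, LinearMap.funLeft_apply, vertex, shift, Pi.single_apply, Prod.ext_iff,
    sub_eq_iff_eq_add]

theorem map_vertex_map_shift [AddCommGroup G] (a : G) (l : List (G × V)) :
    (l.map (shift a)).map (vertex ℝ) = (l.map (vertex ℝ)).map (translate a) := by
  rw [List.map_map, List.map_map]
  exact List.map_congr_left fun p _ => (translate_vertex a p).symm

variable [Fintype G] [Fintype V]

/-- The points of the join of `G` copies of the simplex on `V` whose components lie in pairwise
disjoint rainbow faces. -/
def rainbowSpace (c : V → C) : Set (G × V → ℝ) :=
  ⋃ l ∈ {l : List (G × V) | IsRainbowCell c l}, listFace l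

theorem listFace_subset_rainbowSpace {c : V → C} {l : List (G × V)} (hl : IsRainbowCell c l) :
    listFace l ⊆ rainbowSpace c :=
  Set.subset_biUnion_of_mem (u := listFace) hl

theorem IsRainbowCell.length_le {c : V → C} {l : List (G × V)} (hl : IsRainbowCell c l) :
    l.length ≤ Fintype.card (G × V) :=
  hl.nodup.length_le_card

theorem isCompact_rainbowSpace (c : V → C) : IsCompact (rainbowSpace (G := G) c) :=
  ((List.finite_length_le (G × V) _).subset fun _ hl => hl.length_le).isCompact_biUnion
    fun l _ => isCompact_listFace l

theorem map_vertex_mem_smallCells [Fintype ι] (l : List ι) :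
    l.map (vertex ℝ) ∈ smallCells (listFace l) (Metric.diam (stdSimplex ℝ ι)) l.length := by
  refine ⟨List.length_map _, List.forall_mem_map.2 fun _ => vertex_mem_listFace, ?_⟩
  refine List.forall_mem_map.2 fun i _ => List.forall_mem_map.2 fun j _ => ?_
  exact Metric.dist_le_diam_of_mem (isCompact_stdSimplex ℝ ι).isBounded
    (single_mem_stdSimplex ℝ i) (single_mem_stdSimplex ℝ j)

theorem exists_subdivision_pow_mem_supported [CommRing R] (c : V → C) {ε : ℝ} (hε : 0 < ε) :
    ∃ m, ∀ l : List (G × V), IsRainbowCell c l →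
      (subdivision ^ m) (pushforward (vertex ℝ) (simplex R l)) ∈
        Finsupp.supported R R {l' | l'.length = l.length ∧ (∀ x ∈ l', x ∈ rainbowSpace c) ∧
          ∀ x ∈ l', ∀ y ∈ l', dist x y < ε} := by
  set N := Fintype.card (G × V)
  set D := Metric.diam (stdSimplex ℝ (G × V))
  have hmesh : Filter.Tendsto (fun m => (N / (N + 1) : ℝ) ^ m * D) Filter.atTop (𝓝 (0 * D)) :=
    (tendsto_pow_atTop_nhds_zero_of_lt_one (by positivity)
      ((div_lt_one (by positivity)).2 (lt_add_one _))).mul_const D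
  rw [zero_mul] at hmesh
  obtain ⟨m, hm⟩ := (hmesh.eventually_lt_const hε).exists
  refine ⟨m, fun l hl => ?_⟩
  rw [pushforward_simplex]
  refine Finsupp.supported_mono ?_ (subdivision_pow_simplex_mem_supported (convex_listFace l)
    Metric.diam_nonneg (hl.length_le.trans (Nat.le_succ N)) (map_vertex_mem_smallCells l) m)
  exact fun l' hl' => ⟨hl'.1, fun x hx => listFace_subset_rainbowSpace hl (hl'.2.1 x hx),
    fun x hx y hy => (hl'.2.2 x hx y hy).trans_lt hm⟩

variable [AddCommGroup G] [Fintype J] [Nonempty J] [Field R] [CharP R (Nat.card G)]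

/-- On a sufficiently fine subdivision, the labels of a cell miss some vertex in every column. -/
theorem exists_isEquivariantChainMap (c : V → C) {U : (G × V → ℝ) → J → G → ℝ}
    (hU : ContinuousOn U (rainbowSpace c))
    (hUt : ∀ a, ∀ y ∈ rainbowSpace c, U (translate a y) = fun j i => U y j (i - a))
    (hne : ∀ y ∈ rainbowSpace c, ∃ j i i', U y j i ≠ U y j i') :
    ∃ Φ : Chain R (G × V) →ₗ[R] ExteriorAlgebra R (J × G → R),
      IsEquivariantChainMap {l | IsRainbowCell c l} Φ ∧ Φ (simplex R []) = 1 := by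
  obtain ⟨ε, hε, hlabel⟩ :=
    exists_pos_forall_argmaxLabel_eq_zero (R := R) (isCompact_rainbowSpace c) hU hne
  obtain ⟨m, hm⟩ := exists_subdivision_pow_mem_supported (G := G) (R := R) c hε
  let ℓ : (G × V → ℝ) → J × G → R := fun y => argmaxLabel R (U y)
  let S : Module.End R (Chain R (G × V → ℝ)) := subdivision ^ m
  refine ⟨labelMap R ℓ ∘ₗ S ∘ₗ pushforward (vertex ℝ), ⟨?_, ?_, ?_⟩, ?_⟩
  · intro l hl
    refine map_mem_of_mem_supported (hm l hl) (labelMap R ℓ)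
      (columnFree R J G ⊓ ⋀[R]^l.length (J × G → R)) fun l' ⟨hlen, hmem, hdist⟩ => ⟨?_, ?_⟩
    · refine labelMap_simplex_mem_columnFree fun j => ?_
      rcases l'.eq_nil_or_concat' with rfl | ⟨t, x, rfl⟩
      · exact ⟨0, by simp⟩
      · have hx := List.mem_append_right t (List.mem_singleton_self x)
        exact (hlabel x (hmem x hx) j).imp fun k hk y hy => hk y (hmem y hy) (hdist x hx y hy)
    · exact hlen ▸ labelMap_simplex_mem_exteriorPower ℓ l'
  · intro l _
    simp only [LinearMap.comp_apply]
    rw [extBoundary_labelMap (ℓ := ℓ) fun y => augmentation_argmaxLabel (U y),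
      boundary_subdivision_pow, boundary_pushforward]
  · intro l hl a
    simp only [LinearMap.comp_apply]
    rw [pushforward_simplex, map_vertex_map_shift, ← pushforward_simplex, ← pushforward_simplex,
      ← pushforward_subdivision_pow]
    refine map_eq_map_of_mem_supported (hm l hl) (labelMap R ℓ ∘ₗ pushforward (translate a))
      ((rotate a).toLinearMap ∘ₗ labelMap R ℓ) fun l' hl' => ?_
    rw [LinearMap.comp_apply, pushforward_simplex]
    refine labelMap_map_shift fun y hy u => ?_
    have hy := hl'.2.1 y hy
    exact (congrFun (congrArg (argmaxLabel R) (hUt a y hy)) u).trans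
      (argmaxLabel_sub (hne y hy) a u)
  · simp only [S, LinearMap.comp_apply, pushforward_simplex, List.map_nil,
      subdivision_pow_simplex_nil, labelMap_simplex, wedge_nil]

end ConfigurationSpace

section Homogenization

variable {V E : Type*} [Fintype V]

/-- The positively homogeneous extension of a map on the standard simplex to the nonnegative
orthant. Where the coordinates sum to `0`, it vanishes because the scalar does. -/
noncomputable def homogenization [AddCommMonoid E] [Module ℝ E] (f : (V → ℝ) → E) (z : V → ℝ) : E :=
  (∑ v, z v) • f ((∑ v, z v)⁻¹ • z)

theorem inv_sum_smul_mem_stdSimplex {z : V → ℝ} (hz : 0 ≤ z) (h0 : ∑ v, z v ≠ 0) :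
    (∑ v, z v)⁻¹ • z ∈ stdSimplex ℝ V := by
  refine ⟨smul_nonneg (inv_nonneg.2 (Finset.sum_nonneg fun v _ => hz v)) hz, ?_⟩
  simp only [Pi.smul_apply, smul_eq_mul, ← Finset.mul_sum, inv_mul_cancel₀ h0]

variable [NormedAddCommGroup E] [NormedSpace ℝ E] {f : (V → ℝ) → E}

theorem exists_norm_homogenization_le (hf : ContinuousOn f (stdSimplex ℝ V)) :
    ∃ B, ∀ z, 0 ≤ z → ‖homogenization f z‖ ≤ |∑ v, z v| * B := by
  obtain ⟨B, hB⟩ := ((isCompact_stdSimplex ℝ V).image_of_continuousOn hf).isBounded.exists_norm_le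
  refine ⟨B, fun z hz => ?_⟩
  rw [homogenization, norm_smul, Real.norm_eq_abs]
  rcases eq_or_ne (∑ v, z v) 0 with h0 | h0
  · simp [h0]
  · exact mul_le_mul_of_nonneg_left (hB _ ⟨_, inv_sum_smul_mem_stdSimplex hz h0, rfl⟩)
      (abs_nonneg _)

theorem continuousOn_homogenization (hf : ContinuousOn f (stdSimplex ℝ V)) :
    ContinuousOn (homogenization f) {z | 0 ≤ z} := by
  have hsum : Continuous fun z : V → ℝ => ∑ v, z v := by fun_prop
  intro z hz
  rcases eq_or_ne (∑ v, z v) 0 with h0 | h0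
  · obtain ⟨B, hB⟩ := exists_norm_homogenization_le hf
    have hbound : Filter.Tendsto (fun z : V → ℝ => |∑ v, z v| * B) (𝓝[{z | 0 ≤ z}] z) (𝓝 0) := by
      simpa [h0] using ((hsum.abs.mul_const B).tendsto z).mono_left nhdsWithin_le_nhds
    rw [ContinuousWithinAt, homogenization, h0, zero_smul]
    exact squeeze_zero_norm' (eventually_nhdsWithin_of_forall hB) hbound
  · rw [← continuousWithinAt_inter ((isOpen_ne.preimage hsum).mem_nhds h0)]
    refine hsum.continuousWithinAt.smul ((hf.comp ?_ fun z hz => ?_) z ⟨hz, h0⟩)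
    · exact (hsum.continuousOn.inv₀ fun z hz => hz.2).smul continuousOn_id
    · exact inv_sum_smul_mem_stdSimplex hz.1 hz.2

end Homogenization

section Fibers

variable {V W C : Type*}

theorem exists_equiv_apply_eq [Finite V] [Finite W] {c : V → C} {c' : W → C}
    (h : ∀ j, Nat.card {v // c v = j} = Nat.card {w // c' w = j}) :
    ∃ e : V ≃ W, ∀ v, c' (e v) = c v := by
  let e (j : C) := (Finite.card_eq.1 (h j)).some
  exact ⟨(Equiv.sigmaFiberEquiv c).symm.trans
    ((Equiv.sigmaCongrRight e).trans (Equiv.sigmaFiberEquiv c')), fun v => (e (c v) ⟨v, rfl⟩).2⟩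

end Fibers

section RainbowFaces

variable {ι G V W C : Type*} [Fintype V]

/-- The test map of the theorem: column `none` records the weights of the components of a point of
the join, and column `some j` the `j`-th coordinates of their images, scaled by these weights. -/
noncomputable def testMap (f : (V → ℝ) → ι → ℝ) (y : G × V → ℝ) (j : Option ι) (i : G) : ℝ :=
  j.elim (∑ v, y (i, v)) (homogenization f fun v => y (i, v))

theorem continuousOn_testMap [Finite ι] {f : (V → ℝ) → ι → ℝ}
    (hf : ContinuousOn f (stdSimplex ℝ V)) :
    ContinuousOn (testMap (G := G) f) {y | 0 ≤ y} := by
  cases nonempty_fintype ι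
  refine continuousOn_pi.2 fun j => continuousOn_pi.2 fun i => ?_
  have hrow : Continuous fun (y : G × V → ℝ) v => y (i, v) := by fun_prop
  cases j with
  | none => exact (by fun_prop : Continuous fun y : G × V → ℝ => ∑ v, y (i, v)).continuousOn
  | some j =>
    exact continuousOn_pi.1 ((continuousOn_homogenization hf).comp hrow.continuousOn
      fun y (hy : 0 ≤ y) v => hy (i, v)) j

theorem testMap_translate [AddCommGroup G] (f : (V → ℝ) → ι → ℝ) (a : G) (y : G × V → ℝ) :
    testMap f (translate a y) = fun j i => testMap f y j (i - a) :=
  rfl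

theorem exists_forall_mem_image_of_testMap_eq [Fintype G] [Nonempty G] {f : (V → ℝ) → ι → ℝ}
    {l : List (G × V)} {y : G × V → ℝ} (hy : y ∈ listFace l)
    (hconst : ∀ j i i', testMap f y j i = testMap f y j i') :
    ∃ q, ∀ i, q ∈ f '' {x | x ∈ stdSimplex ℝ V ∧ ∀ v, (i, v) ∉ l → x v = 0} := by
  obtain ⟨i₀⟩ := ‹Nonempty G›
  have hsum (i) : ∑ v, y (i, v) = ∑ v, y (i₀, v) := hconst none i i₀
  have hpos : ∑ v, y (i₀, v) ≠ 0 := fun h => by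
    simpa [Fintype.sum_prod_type, hsum, h] using hy.1.2
  refine ⟨f ((∑ v, y (i₀, v))⁻¹ • fun v => y (i₀, v)), fun i =>
    ⟨(∑ v, y (i, v))⁻¹ • fun v => y (i, v), ⟨?_, fun v hv => ?_⟩, ?_⟩⟩
  · exact inv_sum_smul_mem_stdSimplex (fun v => hy.1.1 (i, v)) ((hsum i).trans_ne hpos)
  · rw [Pi.smul_apply, hy.2 _ hv, smul_zero]
  · funext j
    have hj := hconst (some j) i i₀
    simp only [testMap, Option.elim_some, homogenization, Pi.smul_apply, hsum i] at hj
    rw [hsum i]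
    exact smul_right_injective ℝ hpos hj

theorem rainbowSpace_subset_nonneg [Fintype G] (c : V → C) :
    rainbowSpace (G := G) c ⊆ {y | 0 ≤ y} :=
  Set.iUnion₂_subset fun _ _ _ hy => hy.1.1

theorem exists_isRainbowCell_forall_mem_image [Fintype ι] (p : ℕ) [Fact p.Prime]
    {f : (Option (Option ι × {k : ZMod p // k ≠ 0}) → ℝ) → ι → ℝ}
    (hf : ContinuousOn f (stdSimplex ℝ _)) :
    ∃ l : List (ZMod p × Option (Option ι × {k : ZMod p // k ≠ 0})),
      IsRainbowCell (Option.map Prod.fst) l ∧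
        ∃ q, ∀ i, q ∈ f '' {x | x ∈ stdSimplex ℝ _ ∧ ∀ v, (i, v) ∉ l → x v = 0} := by
  by_contra! hnone
  have : CharP (ZMod p) (Nat.card (ZMod p)) := (Nat.card_zmod p).symm ▸ ZMod.charP p
  obtain ⟨Φ, hΦ, hnil⟩ := exists_isEquivariantChainMap (R := ZMod p) (Option.map Prod.fst)
    ((continuousOn_testMap hf).mono (rainbowSpace_subset_nonneg _))
    (fun a y _ => testMap_translate f a y) fun y hy => by
      obtain ⟨l, hl, hyl⟩ := Set.mem_iUnion₂.1 hy
      by_contra! hconst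
      obtain ⟨q, hq⟩ := exists_forall_mem_image_of_testMap_eq hyl hconst
      obtain ⟨i, hi⟩ := hnone l hl q
      exact hi (hq i)
  exact hΦ.apply_nil_ne_one hnil

theorem comp_equiv_mem_stdSimplex [Fintype W] (e : V ≃ W) {x : V → ℝ} (hx : x ∈ stdSimplex ℝ V) :
    x ∘ e.symm ∈ stdSimplex ℝ W :=
  ⟨fun w => hx.1 (e.symm w), (Equiv.sum_comp e.symm x).trans hx.2⟩

theorem card_fiber_map_fst_none {J A : Type*} :
    Nat.card {v : Option (J × A) // v.map Prod.fst = none} = 1 := by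
  simp [Option.map_eq_none_iff]

theorem card_fiber_map_fst_some {J A : Type*} (j : J) :
    Nat.card {v : Option (J × A) // v.map Prod.fst = some j} = Nat.card A := by
  refine Nat.card_congr (Equiv.ofBijective
    (fun a => ⟨some (j, a), rfl⟩) ⟨fun a b h => ?_, fun ⟨v, hv⟩ => ?_⟩).symm
  · simpa using h
  · obtain ⟨⟨_, a⟩, rfl, rfl⟩ := Option.map_eq_some_iff.1 hv
    exact ⟨a, rfl⟩

theorem exists_disjoint_rainbow_faces [Finite ι] [Fintype W] (p : ℕ) [Fact p.Prime]
    (κ : Option (Option ι) ≃ C) {c : W → C}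
    (hsome : ∀ j, Nat.card {w // c w = κ (some j)} = p - 1)
    (hnone : Nat.card {w // c w = κ none} = 1)
    {f : (W → ℝ) → ι → ℝ} (hf : ContinuousOn f (stdSimplex ℝ W)) :
    ∃ F : ZMod p → Finset W, (Pairwise fun a b => Disjoint (F a) (F b)) ∧
      (∀ a, Set.InjOn c (F a)) ∧
      (⋂ a, f '' {x | x ∈ stdSimplex ℝ W ∧ ∀ w ∉ F a, x w = 0}).Nonempty := by
  cases nonempty_fintype ι
  let V := Option (Option ι × {k : ZMod p // k ≠ 0})
  obtain ⟨e, he⟩ : ∃ e : V ≃ W, ∀ v, κ.symm (c (e v)) = v.map Prod.fst :=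
    exists_equiv_apply_eq (c := Option.map Prod.fst) (c' := κ.symm ∘ c) fun j => by
      simp only [Function.comp_apply, κ.symm_apply_eq]
      cases j with
      | none => rw [hnone, card_fiber_map_fst_none]
      | some j =>
        rw [hsome, card_fiber_map_fst_some, Nat.card_eq_fintype_card, Fintype.card_subtype_compl,
          Fintype.card_subtype_eq, ZMod.card]
  have hfe : ContinuousOn (fun x : V → ℝ => f (x ∘ e.symm)) (stdSimplex ℝ V) :=
    hf.comp (by fun_prop) fun x => comp_equiv_mem_stdSimplex e
  obtain ⟨l, hl, q, hq⟩ := exists_isRainbowCell_forall_mem_image p hfe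
  refine ⟨fun a => Finset.univ.filter fun w => (a, e.symm w) ∈ l, fun a b hab => ?_,
    fun a w hw w' hw' h => ?_, q, Set.mem_iInter.2 fun a => ?_⟩
  · exact Finset.disjoint_left.2 fun w ha hb =>
      hab (hl.fst_eq (Finset.mem_filter.1 ha).2 (Finset.mem_filter.1 hb).2 rfl)
  · have hc : (e.symm w).map Prod.fst = (e.symm w').map Prod.fst := by
      rw [← he, ← he, e.apply_symm_apply, e.apply_symm_apply, h]
    exact e.symm.injective
      (hl.snd_eq (Finset.mem_filter.1 hw).2 (Finset.mem_filter.1 hw').2 rfl hc)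
  · obtain ⟨x, ⟨hx, hxl⟩, rfl⟩ := hq a
    exact ⟨_, ⟨comp_equiv_mem_stdSimplex e hx, fun w hw => hxl _ (by simpa using hw)⟩, rfl⟩

end RainbowFaces

end ColoredTverberg

/-- **Optimal colored Tverberg theorem** (Blagojević–Matschke–Ziegler).
For `d ≥ 1`, `r ≥ 2` prime, `N = (d+1)(r-1)`, and `f` continuous on the standard
`N`-simplex whose `N + 1` vertices are colored with `d + 2` colors, with color classes
`|C_0| = … = |C_d| = r - 1` and `|C_{d+1}| = 1`, there are `r` pairwise disjoint rainbow
faces whose images under `f` intersect. -/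
theorem colored_tverberg_continuous (d r N : ℕ) (hd : 1 ≤ d) (hr : 2 ≤ r)
    (hrp : Nat.Prime r) (hN : N = (d + 1) * (r - 1))
    (f : (Fin (N + 1) → ℝ) → (Fin d → ℝ))
    (hf : ContinuousOn f (stdSimplex ℝ (Fin (N + 1))))
    (c : Fin (N + 1) → Fin (d + 2))
    (hc : ∀ j : Fin (d + 2),
      (Finset.univ.filter fun i => c i = j).card = if (j : ℕ) = d + 1 then 1 else r - 1) :
    ∃ F : Fin r → Finset (Fin (N + 1)),
      (∀ a b : Fin r, a ≠ b → Disjoint (F a) (F b)) ∧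
      (∀ a : Fin r, ∀ j : Fin (d + 2), ((F a).filter fun i => c i = j).card ≤ 1) ∧
      (⋂ a : Fin r, f '' simplexFace N (F a)).Nonempty := by
  have : Fact r.Prime := ⟨hrp⟩
  let κ : Option (Option (Fin d)) ≃ Fin (d + 2) :=
    (Equiv.optionCongr finSuccEquivLast.symm).trans finSuccEquivLast.symm
  have hκ (j) : κ (some j) = (finSuccEquivLast.symm j).castSucc := finSuccEquivLast_symm_some _
  have hsome (j : Option (Fin d)) : Nat.card {i // c i = κ (some j)} = r - 1 := by
    rw [Nat.card_eq_fintype_card, Fintype.card_subtype, hc, hκ]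
    exact if_neg (finSuccEquivLast.symm j).isLt.ne
  have hnone : Nat.card {i // c i = κ none} = 1 := by
    rw [Nat.card_eq_fintype_card, Fintype.card_subtype, hc]
    exact if_pos (congrArg Fin.val finSuccEquivLast_symm_none)
  obtain ⟨F, hdisj, hinj, q, hq⟩ := ColoredTverberg.exists_disjoint_rainbow_faces r κ hsome hnone hf
  let σ : Fin r ≃ ZMod r := Fintype.equivOfCardEq (by rw [Fintype.card_fin, ZMod.card])
  refine ⟨fun a => F (σ a), fun a b hab => hdisj (σ.injective.ne hab), fun a j => ?_, q,
    Set.mem_iInter.2 fun a => Set.mem_iInter.1 hq (σ a)⟩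
  refine Finset.card_le_one.2 fun i hi i' hi' => ?_
  rw [Finset.mem_filter] at hi hi'
  exact hinj (σ a) hi.1 hi'.1 (hi.2.trans hi'.2.symm)
end

section
/- Let d ≥ 1, let r ≥ 2 be a prime, and let N = (d+1)(r−1). Let P be a set of N+1 points in ℝ^d colored with d+2 colors so that the color classes satisfy |C_0| = |C_1| = … = |C_d| = r−1 and |C_{d+1}| = 1. Then P can be partitioned into r rainbow blocks B_1, B_2, …, B_r such that ⋂_{i=1}^r conv(B_i) ≠ ∅. -/
open scoped Classical

/-!
Sarkaria's transformation attaches to each point its homogenization, tensored with the block that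
contains it; the functions on the blocks are taken modulo constants. The convex hulls of the blocks
then intersect as soon as the origin is a convex combination of these tensors.

For a generic configuration of vectors, count with signs the rainbow placements whose simplex
contains the origin. Exchanging a vector for another one changes this degree by the terms in which
the new vector replaces one at some other point. If that point has a color, the terms cancel in
pairs, because moving the point to the block its color misses reverses the sign. If it is the
uncolored point, the group of order `r` that rotates the blocks acts freely on the terms, so that
they cancel modulo the prime `r`. Hence the degree modulo `r` is the same for all generic
configurations. An explicit one has degree `((r - 1)!) ^ (d + 1)`, which is not divisible by `r`,
and so the origin lies in some simplex of every configuration.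
-/

namespace ColoredTverberg

open Finset

/-! ### Circular sequences of plane vectors -/

section Plane

variable {𝕜 κ : Type*} [Field 𝕜]

/-- The cross product of two plane vectors: positive when the second is reached from the first by a
counterclockwise turn of less than a half-turn. -/
def cross (z w : 𝕜 × 𝕜) : 𝕜 := z.1 * w.2 - z.2 * w.1

lemma cross_swap (z w : 𝕜 × 𝕜) : cross z.swap w.swap = cross w z := by
  simp only [cross, Prod.fst_swap, Prod.snd_swap]
  ring

variable [LinearOrder 𝕜]

/-- `z i` is the first vector of the family in counterclockwise order, all the others lying within
the half-turn that follows it. -/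
def IsFirst (z : κ → 𝕜 × 𝕜) (i : κ) : Prop := ∀ j ≠ i, 0 < cross (z i) (z j)

/-- `z i` is the last vector of the family in counterclockwise order, all the others lying within
the half-turn that precedes it. -/
def IsLast (z : κ → 𝕜 × 𝕜) (i : κ) : Prop := ∀ j ≠ i, 0 < cross (z j) (z i)

lemma isFirst_swap {z : κ → 𝕜 × 𝕜} {i : κ} : IsFirst (fun j => (z j).swap) i ↔ IsLast z i := by
  simp only [IsFirst, IsLast, cross_swap]

lemma isLast_swap {z : κ → 𝕜 × 𝕜} {i : κ} : IsLast (fun j => (z j).swap) i ↔ IsFirst z i := by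
  simp only [IsFirst, IsLast, cross_swap]

variable [IsStrictOrderedRing 𝕜]

lemma IsFirst.unique {z : κ → 𝕜 × 𝕜} {i j : κ} (hi : IsFirst z i) (hj : IsFirst z j) : i = j := by
  by_contra hij
  have h := add_pos (hi j (Ne.symm hij)) (hj i hij)
  simp only [cross] at h
  linarith

lemma IsFirst.exists_isLast [Finite κ] {z : κ → 𝕜 × 𝕜}
    (hz : ∀ i j, i ≠ j → cross (z i) (z j) ≠ 0) {i : κ} (hi : IsFirst z i) :
    ∃ k, IsLast z k := by
  cases nonempty_fintype κ
  rcases (univ.erase i).eq_empty_or_nonempty with hκ | hκ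
  · exact ⟨i, fun j hj => absurd (mem_erase.2 ⟨hj, mem_univ j⟩) (hκ ▸ notMem_empty j)⟩
  -- The last vector minimizes the cotangent of its angle with the first one.
  let dot (j : κ) : 𝕜 := (z i).1 * (z j).1 + (z i).2 * (z j).2
  obtain ⟨k, hk, hmin⟩ := exists_min_image _ (fun j => dot j / cross (z i) (z j)) hκ
  have hki : k ≠ i := ne_of_mem_erase hk
  refine ⟨k, fun j hjk => ?_⟩
  rcases eq_or_ne j i with rfl | hji
  · exact hi k hki
  have hcot : dot k * cross (z i) (z j) ≤ dot j * cross (z i) (z k) :=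
    (div_le_div_iff₀ (hi k hki) (hi j hji)).1 (hmin j (mem_erase.2 ⟨hji, mem_univ j⟩))
  have hdot : 0 < dot i := by
    refine lt_of_le_of_ne (add_nonneg (mul_self_nonneg _) (mul_self_nonneg _)) fun h =>
      hz i k hki.symm ?_
    obtain ⟨h₁, h₂⟩ := mul_self_add_mul_self_eq_zero.1 h.symm
    simp only [cross, h₁, h₂, zero_mul, sub_zero]
  have lagrange : dot i * cross (z j) (z k)
      = dot j * cross (z i) (z k) - dot k * cross (z i) (z j) := by
    simp only [dot, cross]
    ring
  have hnonneg : 0 ≤ dot i * cross (z j) (z k) := lagrange ▸ sub_nonneg.2 hcot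
  exact (nonneg_of_mul_nonneg_right hnonneg hdot).lt_of_ne' (hz j k hjk)

lemma exists_isFirst_iff_exists_isLast [Finite κ] {z : κ → 𝕜 × 𝕜}
    (hz : ∀ i j, i ≠ j → cross (z i) (z j) ≠ 0) : (∃ i, IsFirst z i) ↔ ∃ i, IsLast z i := by
  refine ⟨fun ⟨i, hi⟩ => hi.exists_isLast hz, fun ⟨i, hi⟩ => ?_⟩
  obtain ⟨k, hk⟩ := (isFirst_swap.2 hi).exists_isLast
    fun i j hij => cross_swap (z i) (z j) ▸ hz j i hij.symm
  exact ⟨k, isLast_swap.1 hk⟩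

lemma card_isFirst_eq_card_isLast [Fintype κ] {z : κ → 𝕜 × 𝕜}
    (hz : ∀ i j, i ≠ j → cross (z i) (z j) ≠ 0) : #{i | IsFirst z i} = #{i | IsLast z i} := by
  have card_le_one (u : κ → 𝕜 × 𝕜) : #{i | IsFirst u i} ≤ 1 :=
    card_le_one.2 fun i hi j hj => (mem_filter_univ i).1 hi |>.unique ((mem_filter_univ j).1 hj)
  have hfirst := card_le_one z
  have hlast := card_le_one fun j => (z j).swap
  simp only [isFirst_swap] at hlast
  have hpos : 0 < #{i | IsFirst z i} ↔ 0 < #{i | IsLast z i} := by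
    simpa only [card_pos, filter_nonempty_iff, mem_univ, true_and]
      using exists_isFirst_iff_exists_isLast hz
  lia

/-- The two relations expressing `x` and `y` through a basis with coordinates `l` and `m`, as the
Gale dual of the configuration consisting of `y` (`none`), `x` (`some none`) and the basis. -/
def gale (l m : κ → 𝕜) : Option (Option κ) → 𝕜 × 𝕜
  | none => (0, 1)
  | some none => (1, 0)
  | some (some i) => (-l i, -m i)

lemma isFirst_gale_some_some {l m : κ → 𝕜} {i : κ} :
    IsFirst (gale l m) (some (some i)) ↔
      0 < m i ∧ l i < 0 ∧ ∀ j ≠ i, m i * l j - l i * m j < 0 := by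
  have hcross (j : κ) : 0 < -l i * -m j - -m i * -l j ↔ m i * l j - l i * m j < 0 := by
    rw [← neg_pos]
    ring_nf
  simp only [IsFirst, Option.forall, gale, cross, hcross, mul_zero, mul_one, zero_sub, sub_zero,
    neg_neg, neg_pos, ne_eq, Option.some_inj, reduceCtorEq, not_false_eq_true, forall_const]
  tauto

lemma isLast_gale_some_some {l m : κ → 𝕜} {i : κ} :
    IsLast (gale l m) (some (some i)) ↔
      m i < 0 ∧ 0 < l i ∧ ∀ j ≠ i, 0 < m i * l j - l i * m j := by
  have hcross (j : κ) : 0 < -l j * -m i - -m j * -l i ↔ 0 < m i * l j - l i * m j := by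
    ring_nf
  simp only [IsLast, Option.forall, gale, cross, hcross, zero_mul, one_mul, zero_sub, sub_zero,
    neg_neg, neg_pos, ne_eq, Option.some_inj, reduceCtorEq, not_false_eq_true, forall_const]
  tauto

end Plane

/-! ### The signed indicator of the origin in a simplex -/

section OriginSign

open Matrix

variable {ι 𝕜 : Type*}

/-- The matrix whose rows are the vertices of the simplex `w` other than `w none`. -/
def facet (w : Option ι → ι → 𝕜) : Matrix ι ι 𝕜 := of fun i => w (some i)

lemma facet_update_none [DecidableEq ι] (w : Option ι → ι → 𝕜) (y : ι → 𝕜) :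
    facet (Function.update w none y) = facet w :=
  Function.update_comp_eq_of_forall_ne w y Option.some_ne_none

lemma facet_update_some [DecidableEq ι] (w : Option ι → ι → 𝕜) (i : ι) (y : ι → 𝕜) :
    facet (Function.update w (some i) y) = (facet w).updateRow i y :=
  Function.update_comp_eq_of_injective w (Option.some_injective ι) i y

variable [Field 𝕜]

/-- The vectors of the family `v` are in general position with respect to the origin: any `|ι|` of
them form a basis. -/
def GeneralPosition {κ : Type*} (v : κ → ι → 𝕜) : Prop := ∀ e : ι ↪ κ, LinearIndependent 𝕜 (v ∘ e)

variable [Fintype ι]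

lemma vecMul_facet (l : ι → 𝕜) (w : Option ι → ι → 𝕜) : l ᵥ* facet w = ∑ i, l i • w (some i) :=
  vecMul_eq_sum l (facet w)

lemma GeneralPosition.eq_zero_of_sum_smul_eq_zero {v : Option (Option ι) → ι → 𝕜}
    (hv : GeneralPosition v) {c : Option (Option ι) → 𝕜} (hc : ∑ k, c k • v k = 0)
    {i j : Option (Option ι)} (hij : i ≠ j) (hi : c i = 0) (hj : c j = 0) : c = 0 := by
  let s : Finset (Option (Option ι)) := univ \ {i, j}
  have card_s : Fintype.card ι = Fintype.card s := by
    rw [Fintype.card_coe, card_sdiff_of_subset (subset_univ _), card_pair hij, card_univ,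
      Fintype.card_option, Fintype.card_option]
    rfl
  let e : ι ≃ s := Fintype.equivOfCardEq card_s
  have vanish_off {k} (hk : k ∉ s) : c k = 0 := by
    have : k = i ∨ k = j := by simpa [s, or_iff_not_imp_left] using hk
    rcases this with rfl | rfl <;> assumption
  have hsum : ∑ t, c (e t) • v (e t) = 0 := by
    rw [e.sum_comp fun k : s => c k • v k, sum_coe_sort s fun k => c k • v k, ← hc]
    exact sum_subset (subset_univ _) fun k _ hk => by rw [vanish_off hk, zero_smul]
  have vanish_on := Fintype.linearIndependent_iff.1
    (hv (e.toEmbedding.trans (Function.Embedding.subtype (· ∈ s)))) (fun t => c (e t)) hsum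
  funext k
  by_cases hk : k ∈ s
  · simpa only [Equiv.apply_symm_apply, Pi.zero_apply] using vanish_on (e.symm ⟨k, hk⟩)
  · exact vanish_off hk

lemma cross_gale_ne_zero {v : Option (Option ι) → ι → 𝕜} (hv : GeneralPosition v) {l m : ι → 𝕜}
    (hl : v (some none) = l ᵥ* facet (v ∘ some)) (hm : v none = m ᵥ* facet (v ∘ some))
    (i j : Option (Option ι)) (hij : i ≠ j) : cross (gale l m i) (gale l m j) ≠ 0 := by
  have relation₁ : ∑ k, (gale l m k).1 • v k = 0 := by
    simp only [Fintype.sum_option, gale, hl, vecMul_facet, Function.comp_apply, zero_smul,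
      one_smul, neg_smul, sum_neg_distrib, zero_add, add_neg_cancel]
  have relation₂ : ∑ k, (gale l m k).2 • v k = 0 := by
    simp only [Fintype.sum_option, gale, hm, vecMul_facet, Function.comp_apply, zero_smul,
      one_smul, neg_smul, sum_neg_distrib, zero_add, add_neg_cancel]
  intro hcross
  have relation : ∑ k, cross (gale l m i) (gale l m k) • v k = 0 := by
    simp only [cross, sub_smul, mul_smul, sum_sub_distrib, ← smul_sum, relation₁, relation₂,
      smul_zero, sub_zero]
  have hzero := hv.eq_zero_of_sum_smul_eq_zero relation hij (by simp only [cross]; ring) hcross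
  have h₁ : (gale l m i).1 = 0 := by simpa [cross, gale] using congrFun hzero none
  have h₂ : (gale l m i).2 = 0 := by simpa [cross, gale] using congrFun hzero (some none)
  have hi : i ≠ none := by
    rintro rfl
    exact one_ne_zero h₂
  exact one_ne_zero
    (congrFun (hv.eq_zero_of_sum_smul_eq_zero relation₁ hi.symm rfl h₁) (some none))

variable [DecidableEq ι]

lemma vecMul_inv_facet {w : Option ι → ι → 𝕜} (hw : (facet w).det ≠ 0) {x l : ι → 𝕜}
    (hl : x = l ᵥ* facet w) : x ᵥ* (facet w)⁻¹ = l := by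
  rw [hl, vecMul_vecMul, mul_nonsing_inv _ hw.isUnit, vecMul_one]

lemma vecMul_inv_vecMul_facet {w : Option ι → ι → 𝕜} (hw : (facet w).det ≠ 0) (x : ι → 𝕜) :
    x ᵥ* (facet w)⁻¹ ᵥ* facet w = x := by
  rw [vecMul_vecMul, nonsing_inv_mul _ hw.isUnit, vecMul_one]

lemma GeneralPosition.det_facet_ne_zero {v : Option (Option ι) → ι → 𝕜} (hv : GeneralPosition v) :
    (facet (v ∘ some)).det ≠ 0 := by
  have h := hv (Function.Embedding.some.trans Function.Embedding.some)
  exact ((isUnit_iff_isUnit_det _).1 (linearIndependent_rows_iff_isUnit.1 h)).ne_zero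

variable [LinearOrder 𝕜]

/-- The orientation sign of the simplex with vertices `w` if the origin is interior to it, and `0`
otherwise. The origin is interior when `w none` has negative coordinates in the basis formed by
the other vertices. -/
noncomputable def originSign (w : Option ι → ι → 𝕜) : ℤ :=
  SignType.sign (facet w).det * if ∀ i, (w none ᵥ* (facet w)⁻¹) i < 0 then 1 else 0

lemma originSign_eq_ite {w : Option ι → ι → 𝕜} (hw : (facet w).det ≠ 0) {l : ι → 𝕜}
    (hl : w none = l ᵥ* facet w) :
    originSign w = SignType.sign (facet w).det * if ∀ i, l i < 0 then 1 else 0 := by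
  rw [originSign, vecMul_inv_facet hw hl]

variable [IsStrictOrderedRing 𝕜]

lemma originSign_map {g : (ι → 𝕜) →ₗ[𝕜] ι → 𝕜} (hg : LinearMap.det g ≠ 0)
    (w : Option ι → ι → 𝕜) :
    originSign (fun o => g (w o)) = SignType.sign (LinearMap.det g) * originSign w := by
  let M := (LinearMap.toMatrix' g)ᵀ
  have g_apply (x : ι → 𝕜) : g x = x ᵥ* M := by
    rw [vecMul_transpose, LinearMap.toMatrix'_mulVec]
  have det_M : M.det = LinearMap.det g := by rw [det_transpose, LinearMap.det_toMatrix']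
  have hfacet : facet (fun o => g (w o)) = facet w * M := by
    ext i j
    simp only [facet, of_apply, g_apply, mul_apply_eq_vecMul, of_apply]
    rfl
  have hcoord : g (w none) ᵥ* (facet w * M)⁻¹ = w none ᵥ* (facet w)⁻¹ := by
    rw [Matrix.mul_inv_rev, g_apply, vecMul_vecMul,
      mul_nonsing_inv_cancel_left _ _ (det_M ▸ hg.isUnit)]
  rw [originSign, originSign, hfacet, hcoord, det_mul, det_M, sign_mul, SignType.coe_mul]
  ring

lemma originSign_update_some {w : Option ι → ι → 𝕜} (hw : (facet w).det ≠ 0) {l m : ι → 𝕜}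
    (hl : w none = l ᵥ* facet w) {i : ι} (hm : m i ≠ 0) :
    originSign (Function.update w (some i) (m ᵥ* facet w)) =
      SignType.sign (facet w).det *
        ((if IsFirst (gale l m) (some (some i)) then 1 else 0) -
          if IsLast (gale l m) (some (some i)) then 1 else 0) := by
  set w' := Function.update w (some i) (m ᵥ* facet w) with hw'
  let l' : ι → 𝕜 := Function.update (fun j => (m i * l j - l i * m j) / m i) i (l i / m i)
  have det_update : (facet w').det = m i * (facet w).det := by
    rw [facet_update_some, vecMul_eq_sum, det_updateRow_sum, smul_eq_mul]
  have hl' : w' none = l' ᵥ* facet w' := by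
    have term (j : ι) : l' j • w' (some j) = (l j - l i / m i * m j) • w (some j)
        + if j = i then (l i / m i) • (m ᵥ* facet w) else 0 := by
      rcases eq_or_ne j i with rfl | hji
      · simp [l', w', hm]
      · rw [hw', Function.update_of_ne (Option.some_injective ι |>.ne hji), if_neg hji, add_zero]
        simp only [l', Function.update_of_ne hji]
        congr 1
        field_simp
    simp only [vecMul_facet l' w', term, sum_add_distrib, sum_ite_eq', mem_univ, if_true, sub_smul,
      sum_sub_distrib, mul_smul, ← smul_sum, vecMul_facet m, sub_add_cancel]
    rw [← vecMul_facet, ← hl]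
    exact Function.update_of_ne (Option.some_ne_none i).symm _ _
  have hneg : (∀ j, l' j < 0) ↔
      l i / m i < 0 ∧ ∀ j ≠ i, (m i * l j - l i * m j) / m i < 0 :=
    Function.forall_update_iff _ fun _ x => x < 0
  rw [originSign_eq_ite (det_update ▸ mul_ne_zero hm hw) hl', det_update, sign_mul,
    SignType.coe_mul]
  simp only [hneg, isFirst_gale_some_some, isLast_gale_some_some]
  rcases hm.lt_or_gt with hm | hm
  · simp only [hm, hm.not_gt, div_lt_iff_of_neg hm, zero_mul, sign_neg, SignType.coe_neg_one,
      false_and, true_and, if_false]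
    ring
  · simp only [hm, hm.not_gt, div_lt_iff₀ hm, zero_mul, sign_pos, SignType.coe_one,
      false_and, true_and, if_false]
    ring

/-- In the Gale dual, the facets of the simplex on `w` and `y` whose sign is nonzero correspond to
the first and the last vector. -/
theorem originSign_eq_sum_update {w : Option ι → ι → 𝕜} {y : ι → 𝕜}
    (h : GeneralPosition (Option.elim' y w)) :
    originSign w = ∑ o, originSign (Function.update w o y) := by
  have hw : (facet w).det ≠ 0 := h.det_facet_ne_zero
  have solve (x : ι → 𝕜) : ∃ l, x = l ᵥ* facet w := ⟨_, (vecMul_inv_vecMul_facet hw x).symm⟩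
  obtain ⟨l, hl⟩ := solve (w none)
  obtain ⟨m, rfl⟩ := solve y
  have hz := cross_gale_ne_zero h hl rfl
  have hm (i : ι) : m i ≠ 0 := by
    simpa [cross, gale] using hz (some none) (some (some i)) (by simp)
  have card_eq : ∑ k, (if IsFirst (gale l m) k then 1 else 0 : ℤ)
      = ∑ k, if IsLast (gale l m) k then 1 else 0 := by
    rw [sum_boole, sum_boole, card_isFirst_eq_card_isLast hz]
  have first_y : ¬ IsFirst (gale l m) none := fun h => by
    simpa [gale, cross, zero_le_one.not_gt] using h (some none) (Option.some_ne_none _)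
  have last_x : ¬ IsLast (gale l m) (some none) := fun h => by
    simpa [gale, cross, zero_le_one.not_gt] using h none (Option.some_ne_none _).symm
  have last_y : IsLast (gale l m) none ↔ ∀ i, l i < 0 := by
    simp [IsLast, Option.forall, gale, cross]
  have first_x : IsFirst (gale l m) (some none) ↔ ∀ i, m i < 0 := by
    simp [IsFirst, Option.forall, gale, cross]
  have update_none : originSign (Function.update w none (m ᵥ* facet w))
      = SignType.sign (facet w).det * if ∀ i, m i < 0 then 1 else 0 := by
    rw [originSign_eq_ite (l := m), facet_update_none]
    · rwa [facet_update_none]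
    · rw [facet_update_none, Function.update_self]
  simp only [Fintype.sum_option, first_y, last_x, last_y, first_x, if_false] at card_eq
  rw [Fintype.sum_option, update_none, originSign_eq_ite hw hl]
  simp only [originSign_update_some hw hl (hm _)]
  rw [← mul_sum, sum_sub_distrib]
  linear_combination -(SignType.sign (facet w).det : ℤ) * card_eq

end OriginSign

/-! ### Convex hulls of finite families -/

section ConvexHull

lemma mem_convexHull_range_iff {κ 𝕜 V : Type*} [Fintype κ] [Field 𝕜] [LinearOrder 𝕜]
    [IsStrictOrderedRing 𝕜] [AddCommGroup V] [Module 𝕜 V] {v : κ → V} {x : V} :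
    x ∈ convexHull 𝕜 (Set.range v) ↔ ∃ t ∈ stdSimplex 𝕜 κ, ∑ k, t k • v k = x := by
  have : Set.range v = Fintype.linearCombination 𝕜 v '' Set.range fun k => Pi.single k (1 : 𝕜) := by
    rw [← Set.range_comp]
    exact congrArg Set.range (funext fun k => by simp)
  rw [this, ← LinearMap.image_convexHull, convexHull_rangle_single_eq_stdSimplex]
  simp only [Set.mem_image, Fintype.linearCombination_apply]

lemma isClosed_setOf_mem_convexHull_range {κ V : Type*} [Finite κ] [AddCommGroup V] [Module ℝ V]
    [TopologicalSpace V] [ContinuousAdd V] [ContinuousSMul ℝ V] [T1Space V] (x : V) :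
    IsClosed {v : κ → V | x ∈ convexHull ℝ (Set.range v)} := by
  cases nonempty_fintype κ
  have closed : IsClosed {p : stdSimplex ℝ κ × (κ → V) | ∑ k, p.1 k • p.2 k = x} := by
    refine isClosed_singleton.preimage (continuous_finsetSum _ fun k _ => ?_)
    exact ((continuous_apply k).comp (continuous_subtype_val.comp continuous_fst)).smul
      ((continuous_apply k).comp continuous_snd)
  convert isClosedMap_snd_of_compactSpace _ closed using 1
  ext v
  simp only [Set.mem_ofPred_eq, mem_convexHull_range_iff, Set.mem_image, Prod.exists,
    exists_eq_right]
  exact ⟨fun ⟨t, ht, h⟩ => ⟨⟨t, ht⟩, h⟩, fun ⟨t, h⟩ => ⟨t, t.2, h⟩⟩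

lemma zero_mem_convexHull_of_originSign_ne_zero {ι 𝕜 : Type*} [Fintype ι] [DecidableEq ι] [Field 𝕜]
    [LinearOrder 𝕜] [IsStrictOrderedRing 𝕜] {w : Option ι → ι → 𝕜} (hw : originSign w ≠ 0) :
    0 ∈ convexHull 𝕜 (Set.range w) := by
  obtain ⟨hsign, hcoord⟩ := mul_ne_zero_iff.1 hw
  have hdet : (facet w).det ≠ 0 := fun h => hsign (by rw [h, sign_zero, SignType.coe_zero])
  set l := Matrix.vecMul (w none) (facet w)⁻¹ with hl
  have hneg (i : ι) : l i < 0 := (ite_ne_right_iff.1 hcoord).1 i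
  have hnone : w none = ∑ i, l i • w (some i) := by
    rw [← vecMul_facet, hl, vecMul_inv_vecMul_facet hdet]
  let t : Option ι → 𝕜 := Option.elim' 1 (-l)
  have ht (o : Option ι) : 0 < t o := by
    cases o with
    | none => exact one_pos
    | some i => exact neg_pos.2 (hneg i)
  have hsum : ∑ o, t o • w o = 0 := by
    rw [Fintype.sum_option, hnone]
    simp [t]
  have h := univ.centerMass_mem_convexHull (fun o _ => (ht o).le)
    (Finset.sum_pos (fun o _ => ht o) univ_nonempty) fun o _ => Set.mem_range_self (f := w) o
  rwa [centerMass, hsum, smul_zero] at h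

end ConvexHull

section Near

open Matrix Topology

variable {ι : Type*} [Fintype ι] [DecidableEq ι] {w₀ : Option ι → ι → ℝ}

lemma continuousAt_coordinates (hdet : (facet w₀).det ≠ 0) (i : ι) :
    ContinuousAt (fun w : Option ι → ι → ℝ => (w none ᵥ* (facet w)⁻¹) i) w₀ := by
  have hfacet : Continuous (facet : (Option ι → ι → ℝ) → Matrix ι ι ℝ) :=
    continuous_matrix fun i j => continuous_apply_apply (some i) j
  have hinv : ContinuousAt Inv.inv (facet w₀) := by
    refine continuousAt_matrix_inv _ ?_
    rw [Ring.inverse_eq_inv']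
    exact continuousAt_inv₀ hdet
  exact tendsto_finsetSum _ fun j _ => (continuous_apply_apply none j).continuousAt.mul
    ((continuous_apply_apply j i).continuousAt.comp (hinv.comp hfacet.continuousAt))

lemma eventually_originSign_eq_sign_det (hdet : (facet w₀).det ≠ 0) {l : ι → ℝ}
    (hl : w₀ none = l ᵥ* facet w₀) (hneg : ∀ i, l i < 0) :
    ∀ᶠ w in 𝓝 w₀, originSign w = SignType.sign (facet w₀).det := by
  have hcoord : ∀ᶠ w in 𝓝 w₀, ∀ i, (w none ᵥ* (facet w)⁻¹) i < 0 := by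
    refine Filter.eventually_all.2 fun i => (continuousAt_coordinates hdet i).eventually_lt_const ?_
    simpa only [vecMul_inv_facet hdet hl] using hneg i
  have hsign : ∀ᶠ w in 𝓝 w₀, SignType.sign (facet w).det = SignType.sign (facet w₀).det := by
    have hcont : Continuous fun w : Option ι → ι → ℝ => (facet w).det :=
      (continuous_matrix fun i j => continuous_apply_apply (some i) j).matrix_det
    have htendsto := (continuousAt_sign_of_ne_zero hdet).tendsto.comp hcont.continuousAt
    rw [nhds_discrete SignType, Filter.tendsto_pure] at htendsto
    exact htendsto
  filter_upwards [hcoord, hsign] with w hw hs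
  rw [originSign, if_pos hw, hs, mul_one]

lemma eventually_originSign_eq_zero (hdet : (facet w₀).det ≠ 0) {l : ι → ℝ}
    (hl : w₀ none = l ᵥ* facet w₀) {i : ι} (hpos : 0 < l i) :
    ∀ᶠ w in 𝓝 w₀, originSign w = 0 := by
  have hcoord : ∀ᶠ w in 𝓝 w₀, 0 < (w none ᵥ* (facet w)⁻¹) i := by
    refine (continuousAt_coordinates hdet i).eventually_const_lt ?_
    simpa only [vecMul_inv_facet hdet hl] using hpos
  filter_upwards [hcoord] with w hw
  rw [originSign, if_neg fun h => (h i).not_gt hw, mul_zero]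

end Near

/-! ### Genericity -/

section Generic

open Matrix Topology

variable {ι κ : Type*}

lemma GeneralPosition.comp {𝕜 κ' : Type*} [Field 𝕜] {v : κ → ι → 𝕜} (hv : GeneralPosition v)
    {f : κ' → κ} (hf : Function.Injective f) : GeneralPosition (v ∘ f) :=
  fun e => hv (e.trans ⟨f, hf⟩)

variable [Finite ι]

lemma dense_setOf_linearIndependent : Dense {A : ι → ι → ℝ | LinearIndependent ℝ A} := by
  cases nonempty_fintype ι
  intro A
  let line (t : ℝ) : Matrix ι ι ℝ := t • 1 - of A
  have cont : Continuous fun t : ℝ => -line t := by fun_prop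
  have hdense : Dense (spectrum ℝ (of A))ᶜ := (finite_spectrum _).countable.dense_compl ℝ
  have hzero : -line 0 = A := show -line 0 = of A by simp [line]
  rw [← hzero]
  refine map_mem_closure (f := fun t => -line t) cont (hdense 0) fun t ht => ?_
  have hunit : IsUnit (line t) := by
    rwa [Set.mem_compl_iff, spectrum.notMem_iff, Algebra.algebraMap_eq_smul_one] at ht
  exact linearIndependent_rows_iff_isUnit.2 hunit.neg

lemma isOpen_setOf_generalPosition [Finite κ] : IsOpen {W : κ → ι → ℝ | GeneralPosition W} := by
  cases nonempty_fintype ι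
  simp only [GeneralPosition, Set.ofPred_forall]
  exact isOpen_iInter_of_finite fun e =>
    isOpen_setOfPred_linearIndependent.preimage (Pi.continuous_precomp e)

lemma dense_setOf_generalPosition [Finite κ] : Dense {W : κ → ι → ℝ | GeneralPosition W} := by
  cases nonempty_fintype ι
  simp only [GeneralPosition, Set.ofPred_forall]
  refine dense_iInter_of_isOpen (fun e =>
    isOpen_setOfPred_linearIndependent.preimage (Pi.continuous_precomp e)) fun e => ?_
  have hsurj : Function.Surjective (LinearMap.funLeft ℝ (ι → ℝ) e) :=
    LinearMap.funLeft_surjective_of_injective _ _ _ e.injective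
  exact dense_setOf_linearIndependent.preimage
    (LinearMap.isOpenMap_of_finiteDimensional _ hsurj)

end Generic

/-! ### Colored placements -/

section Placement

variable {C Γ : Type*}

/-- A rainbow distribution of the points into blocks: `π c` places the points of color `c` in
distinct blocks, and `π c 1` is the block that color `c` misses. -/
abbrev Placement (C Γ : Type*) := C → Equiv.Perm Γ

/-- The product of the signs of the permutations of a placement. -/
noncomputable def placementSign [Fintype C] [Fintype Γ] : Placement C Γ →* ℤˣ :=
  ∏ c, Equiv.Perm.sign.comp (Pi.evalMonoidHom _ c)

lemma placementSign_apply [Fintype C] [Fintype Γ] (π : Placement C Γ) :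
    placementSign π = ∏ c, Equiv.Perm.sign (π c) := by
  simp only [placementSign, MonoidHom.finsetProd_apply, MonoidHom.comp_apply,
    Pi.evalMonoidHom_apply]

variable [Group Γ]

/-- The points other than the uncolored one: for each color, one point per nontrivial element of the
group `Γ` that indexes the blocks. -/
abbrev Slot (C Γ : Type*) [One Γ] := C × {g : Γ // g ≠ 1}

/-- The block containing each point; the uncolored point is `none` and always lies in block `1`. -/
def block (π : Placement C Γ) : Option (Slot C Γ) → Γ
  | none => 1
  | some s => π s.1 s.2

/-- Left translation of all blocks by an element of `Γ`. -/
def rot : Γ →* Placement C Γ := MonoidHom.pi fun _ => MulAction.toPermHom Γ Γ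

lemma block_rot_mul_some (g : Γ) (π : Placement C Γ) (s : Slot C Γ) :
    block (rot g * π) (some s) = g * block π (some s) := rfl

/-- The placement exchanging the point `s` with the empty place of its color. -/
noncomputable def swapOne (s : Slot C Γ) : Placement C Γ := Pi.mulSingle s.1 (Equiv.swap s.2.1 1)

lemma block_mul_swapOne_of_ne (π : Placement C Γ) {s : Slot C Γ} {o : Option (Slot C Γ)}
    (ho : o ≠ some s) : block (π * swapOne s) o = block π o := by
  rcases o with _ | ⟨c, h⟩
  · rfl
  obtain ⟨c', h'⟩ := s
  simp only [block, swapOne, Pi.mul_apply, Equiv.Perm.mul_apply]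
  rcases eq_or_ne c c' with rfl | hc
  · have hh : h.1 ≠ h'.1 := fun e => ho (by rw [Subtype.ext e])
    rw [Pi.mulSingle_eq_same, Equiv.swap_apply_of_ne_of_ne hh h.2]
  · rw [Pi.mulSingle_eq_of_ne hc, Equiv.Perm.one_apply]

variable [Fintype C] [Fintype Γ]

lemma placementSign_swapOne (s : Slot C Γ) : placementSign (swapOne s) = -1 := by
  rw [placementSign_apply, Fintype.prod_eq_single s.1]
  · rw [swapOne, Pi.mulSingle_eq_same, Equiv.Perm.sign_swap s.2.2]
  · intro c hc
    rw [swapOne, Pi.mulSingle_eq_of_ne hc, Equiv.Perm.sign_one]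

lemma sum_placementSign_mul_eq_zero (s : Slot C Γ) {F : Placement C Γ → ℤ}
    (hF : ∀ π, F (π * swapOne s) = F π) : ∑ π, (placementSign π : ℤ) * F π = 0 := by
  have hneg : ∑ π, (placementSign π : ℤ) * F π = ∑ π, -((placementSign π : ℤ) * F π) := by
    rw [← Equiv.sum_comp (Equiv.mulRight (swapOne s))]
    refine sum_congr rfl fun π _ => ?_
    rw [Equiv.coe_mulRight, hF, map_mul, placementSign_swapOne, mul_neg_one, Units.val_neg,
      neg_mul]
  rw [sum_neg_distrib] at hneg
  lia

lemma sum_eq_zero_of_rot_invariant (s : Slot C Γ) {F : Placement C Γ → ZMod (Fintype.card Γ)}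
    (hF : ∀ g π, F (rot g * π) = F π) : ∑ π, F π = 0 := by
  have fiber (g : Γ) :
      ∑ π with block π (some s) = g, F π = ∑ π with block π (some s) = 1, F π := by
    refine (sum_bijective (rot g * ·) (Group.mulLeft_bijective _) (fun π => ?_)
      fun π _ => (hF g π).symm).symm
    simp [block_rot_mul_some]
  rw [← sum_fiberwise univ fun π => block π (some s)]
  simp only [fiber, sum_const, card_univ, nsmul_eq_mul, CharP.cast_eq_zero, zero_mul]

end Placement

/-! ### The degree of a configuration -/

section Degree

variable {C Γ : Type*} [Group Γ]

/-- The vectors `v` carried to their blocks: the point `o` is moved by the element of `Γ` that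
indexes its block. -/
def place {𝕜 V : Type*} [Semiring 𝕜] [AddCommMonoid V] [Module 𝕜 V] (ρ : Representation 𝕜 Γ V)
    (π : Placement C Γ) (v : Option (Slot C Γ) → V) (o : Option (Slot C Γ)) : V :=
  ρ (block π o) (v o)

lemma place_update {𝕜 V : Type*} [Semiring 𝕜] [AddCommMonoid V] [Module 𝕜 V]
    (ρ : Representation 𝕜 Γ V) (π : Placement C Γ) (v : Option (Slot C Γ) → V)
    (k : Option (Slot C Γ)) (x : V) :
    place ρ π (Function.update v k x) = Function.update (place ρ π v) k (ρ (block π k) x) := by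
  funext o
  rcases eq_or_ne o k with rfl | hok
  · simp only [place, Function.update_self]
  · simp only [place, Function.update_of_ne hok]

lemma det_representation_ne_zero {𝕜 V : Type*} [Field 𝕜] [AddCommGroup V] [Module 𝕜 V]
    (ρ : Representation 𝕜 Γ V) (g : Γ) : LinearMap.det (ρ g) ≠ 0 :=
  ((Group.isUnit g).map (LinearMap.det.comp ρ)).ne_zero

variable [Fintype C] [Fintype Γ] {𝕜 : Type*} [Field 𝕜]

variable [LinearOrder 𝕜] (ρ : Representation 𝕜 Γ (Slot C Γ → 𝕜))

/-- The signed number of placements whose simplex contains the origin in its interior: each is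
weighted by its own sign times the orientation of its simplex. -/
noncomputable def degree (v : Option (Slot C Γ) → Slot C Γ → 𝕜) : ℤ :=
  ∑ π, (placementSign π : ℤ) * originSign (place ρ π v)

/-- The degree of `v` after replacing, in every placement, the vector at the point `o` by the vector
`x`, which is nevertheless transported to the block of the point `k`. -/
noncomputable def mixedDegree (v : Option (Slot C Γ) → Slot C Γ → 𝕜) (x : Slot C Γ → 𝕜)
    (k o : Option (Slot C Γ)) : ℤ :=
  ∑ π, (placementSign π : ℤ) *
    originSign (Function.update (place ρ π v) o (ρ (block π k) x))

variable {ρ}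

lemma mixedDegree_self (v : Option (Slot C Γ) → Slot C Γ → 𝕜) (x : Slot C Γ → 𝕜)
    (k : Option (Slot C Γ)) : mixedDegree ρ v x k k = degree ρ (Function.update v k x) := by
  simp only [mixedDegree, degree, place_update]

/-- Moving the point `s` to the empty place of its color reverses the sign of a placement and leaves
every other vector in place. -/
lemma mixedDegree_some_eq_zero (v : Option (Slot C Γ) → Slot C Γ → 𝕜) (x : Slot C Γ → 𝕜)
    {k : Option (Slot C Γ)} {s : Slot C Γ} (hks : k ≠ some s) :
    mixedDegree ρ v x k (some s) = 0 := by
  refine sum_placementSign_mul_eq_zero s fun π => congrArg originSign ?_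
  funext o
  rcases eq_or_ne o (some s) with rfl | ho
  · rw [Function.update_self, Function.update_self, block_mul_swapOne_of_ne π hks]
  · simp only [Function.update_of_ne ho, place, block_mul_swapOne_of_ne π ho]

variable [IsStrictOrderedRing 𝕜]

lemma placementSign_rot_mul_sign_det (hp : (Fintype.card Γ).Prime) (g : Γ) :
    ((placementSign (rot g : Placement C Γ) * SignType.sign (LinearMap.det (ρ g)) : ℤ) :
      ZMod (Fintype.card Γ)) = 1 := by
  have := Fact.mk hp
  have hpow : (placementSign (rot g : Placement C Γ) * SignType.sign (LinearMap.det (ρ g)) : ℤ)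
      ^ Fintype.card Γ = 1 := by
    rw [mul_pow, ← Units.val_pow_eq_pow_val, ← map_pow, ← map_pow, pow_card_eq_one, map_one,
      map_one, ← SignType.coe_pow, ← sign_pow, ← map_pow, ← map_pow, pow_card_eq_one, map_one,
      map_one, sign_one]
    rfl
  rw [← ZMod.pow_card (Int.cast _), ← Int.cast_pow, hpow, Int.cast_one]

/-- The whole simplex consists of vectors at colored points, so that the rotations of `Γ` permute
its placements freely. -/
lemma mixedDegree_none_eq_zero (hp : (Fintype.card Γ).Prime)
    (v : Option (Slot C Γ) → Slot C Γ → 𝕜) (x : Slot C Γ → 𝕜) (s : Slot C Γ) :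
    (mixedDegree ρ v x (some s) none : ZMod (Fintype.card Γ)) = 0 := by
  rw [mixedDegree, Int.cast_sum]
  refine sum_eq_zero_of_rot_invariant s fun g π => ?_
  have hmove : Function.update (place ρ (rot g * π) v) none (ρ (block (rot g * π) (some s)) x)
      = fun o => ρ g (Function.update (place ρ π v) none (ρ (block π (some s)) x) o) := by
    funext o
    cases o <;> simp [place, block_rot_mul_some]
  rw [hmove, originSign_map (det_representation_ne_zero ρ g), map_mul, Units.val_mul]
  push_cast
  have hsign := placementSign_rot_mul_sign_det (C := C) (ρ := ρ) hp g
  push_cast at hsign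
  linear_combination ((placementSign π : ℤ) * originSign
    (Function.update (place ρ π v) none (ρ (block π (some s)) x)) : ZMod (Fintype.card Γ)) * hsign

lemma degree_update_eq (hp : (Fintype.card Γ).Prime) {v : Option (Slot C Γ) → Slot C Γ → 𝕜}
    {k : Option (Slot C Γ)} {x : Slot C Γ → 𝕜}
    (h : ∀ π : Placement C Γ,
      GeneralPosition (Option.elim' (ρ (block π k) x) (place ρ π v))) :
    (degree ρ (Function.update v k x) : ZMod (Fintype.card Γ)) = degree ρ v := by
  have expand : degree ρ v = ∑ o, mixedDegree ρ v x k o := by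
    simp only [degree, mixedDegree, originSign_eq_sum_update (h _), mul_sum]
    rw [sum_comm]
  rw [expand, Int.cast_sum, Fintype.sum_eq_single k, mixedDegree_self]
  intro o hok
  cases o with
  | some s => rw [mixedDegree_some_eq_zero v x hok.symm, Int.cast_zero]
  | none =>
    obtain ⟨s, rfl⟩ := Option.ne_none_iff_exists'.1 hok.symm
    exact mixedDegree_none_eq_zero hp v x s

/-- The degree is an invariant modulo the order of `Γ`: the points of one configuration are
exchanged for those of the other one at a time. -/
theorem degree_eq_of_generalPosition (hp : (Fintype.card Γ).Prime)
    {v w : Option (Slot C Γ) → Slot C Γ → 𝕜}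
    (h : ∀ π : Placement C Γ, GeneralPosition (Sum.elim (place ρ π v) (place ρ π w))) :
    (degree ρ v : ZMod (Fintype.card Γ)) = degree ρ w := by
  suffices ∀ S : Finset (Option (Slot C Γ)),
      (degree ρ (S.piecewise w v) : ZMod (Fintype.card Γ)) = degree ρ v by
    rw [← this univ, piecewise_univ]
  intro S
  induction S using Finset.induction_on with
  | empty => rw [piecewise_empty]
  | insert k S hk ih =>
    rw [piecewise_insert, ← ih]
    refine degree_update_eq hp fun π => ?_
    let e : Option (Option (Slot C Γ)) → Option (Slot C Γ) ⊕ Option (Slot C Γ) :=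
      Option.elim' (Sum.inr k) fun o => if o ∈ S then Sum.inr o else Sum.inl o
    have he : Function.Injective e := by
      rw [Option.injective_iff]
      refine ⟨fun o o' => ?_, ?_⟩
      · simp only [e, Function.comp_apply, Option.elim'_some]
        grind
      · simp only [e, Option.elim'_none, Option.elim'_some, Function.comp_apply, Set.mem_range]
        grind
    convert (h π).comp he using 1
    funext o
    rcases o with _ | o
    · rfl
    · by_cases ho : o ∈ S <;> simp [e, ho, place]

end Degree

section Existence

open Topology

variable {C Γ : Type*} [Group Γ]

lemma isHomeomorph_place [Finite C] [Finite Γ] (ρ : Representation ℝ Γ (Slot C Γ → ℝ))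
    (π : Placement C Γ) : IsHomeomorph (place ρ π) :=
  IsHomeomorph.pi_map fun o => (LinearEquiv.ofBijective (ρ (block π o))
    (ρ.apply_bijective _)).toContinuousLinearEquiv.toHomeomorph.isHomeomorph

lemma dense_setOf_forall_generalPosition [Finite C] [Finite Γ]
    (ρ : Representation ℝ Γ (Slot C Γ → ℝ)) :
    Dense {p : (Option (Slot C Γ) → Slot C Γ → ℝ) × (Option (Slot C Γ) → Slot C Γ → ℝ) |
      ∀ π : Placement C Γ, GeneralPosition (Sum.elim (place ρ π p.1) (place ρ π p.2))} := by
  have hhomeo (π : Placement C Γ) : IsHomeomorph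
      fun p : (Option (Slot C Γ) → Slot C Γ → ℝ) × (Option (Slot C Γ) → Slot C Γ → ℝ) =>
        Sum.elim (place ρ π p.1) (place ρ π p.2) :=
    Homeomorph.sumArrowHomeomorphProdArrow.symm.isHomeomorph.comp
      ((isHomeomorph_place ρ π).prodMap (isHomeomorph_place ρ π))
  simp only [Set.ofPred_forall]
  exact dense_iInter_of_isOpen
    (fun π => isOpen_setOf_generalPosition.preimage (hhomeo π).continuous)
    fun π => dense_setOf_generalPosition.preimage (hhomeo π).isOpenMap

/-- If every placement simplex of `v` missed the origin, then so would those of all nearby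
configurations, and their degree would vanish. -/
theorem exists_placement_zero_mem_convexHull [Fintype C] [Fintype Γ]
    {ρ : Representation ℝ Γ (Slot C Γ → ℝ)} (hp : (Fintype.card Γ).Prime)
    {v₀ : Option (Slot C Γ) → Slot C Γ → ℝ} {N : ℤ}
    (hN : ¬ (Fintype.card Γ : ℤ) ∣ N) (hdegree : ∀ᶠ w in 𝓝 v₀, degree ρ w = N)
    (v : Option (Slot C Γ) → Slot C Γ → ℝ) :
    ∃ π : Placement C Γ, 0 ∈ convexHull ℝ (Set.range (place ρ π v)) := by
  by_contra! hmiss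
  have hzero : ∀ᶠ w in 𝓝 v, degree ρ w = 0 := by
    have hnear (π : Placement C Γ) :
        ∀ᶠ w in 𝓝 v, 0 ∉ convexHull ℝ (Set.range (place ρ π w)) :=
      (isHomeomorph_place ρ π).continuous.continuousAt.eventually
        ((isClosed_setOf_mem_convexHull_range 0).isOpen_compl.mem_nhds (hmiss π))
    filter_upwards [Filter.eventually_all.2 hnear] with w hw
    exact sum_eq_zero fun π _ => by
      rw [not_imp_comm.1 zero_mem_convexHull_of_originSign_ne_zero (hw π), mul_zero]
  obtain ⟨⟨w, w₀⟩, hgen, hw, hw₀⟩ := (dense_setOf_forall_generalPosition ρ).inter_nhds_nonempty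
    (hzero.prod_nhds hdegree)
  have hmod := degree_eq_of_generalPosition hp hgen
  rw [hw, hw₀, Int.cast_zero] at hmod
  exact hN ((ZMod.intCast_zmod_eq_zero_iff_dvd _ _).1 hmod.symm)

end Existence

/-! ### The reduced permutation representation -/

section ReducedPerm

variable {C Γ 𝕜 : Type*} [Group Γ] [CommRing 𝕜]

/-- The class of `F` in `C → (Γ → 𝕜) ⧸ 𝕜`, where each class of functions on `Γ` modulo constants is
represented by its member that vanishes at `1`. -/
def modConst : (C → Γ → 𝕜) →ₗ[𝕜] Slot C Γ → 𝕜 where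
  toFun F s := F s.1 s.2 - F s.1 1
  map_add' _ _ := funext fun _ => add_sub_add_comm _ _ _ _
  map_smul' a _ := funext fun _ => (mul_sub a _ _).symm

/-- The representative of a class modulo constants that vanishes at `1`. -/
noncomputable def normalized : (Slot C Γ → 𝕜) →ₗ[𝕜] C → Γ → 𝕜 where
  toFun u c g := if h : g = 1 then 0 else u (c, ⟨g, h⟩)
  map_add' u v := by
    ext c g
    by_cases h : g = 1 <;> simp [h]
  map_smul' a u := by
    ext c g
    by_cases h : g = 1 <;> simp [h]

lemma modConst_apply (F : C → Γ → 𝕜) (s : Slot C Γ) : modConst F s = F s.1 s.2 - F s.1 1 := rfl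

lemma modConst_normalized (u : Slot C Γ → 𝕜) : modConst (normalized u) = u := by
  ext ⟨c, g, hg⟩
  simp [modConst, normalized, hg]

lemma normalized_modConst_apply (F : C → Γ → 𝕜) (c : C) (g : Γ) :
    normalized (modConst F) c g = F c g - F c 1 := by
  by_cases h : g = 1 <;> simp [modConst, normalized, h]

/-- The permutation action of placements on functions, in the color `c` on functions on `Γ` modulo
constants. -/
noncomputable def reducedPerm : Representation 𝕜 (Placement C Γ) (Slot C Γ → 𝕜) where
  toFun π := modConst ∘ₗ
    LinearMap.pi (fun c => LinearMap.funLeft 𝕜 𝕜 (π c).symm ∘ₗ LinearMap.proj c) ∘ₗ normalized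
  map_one' := LinearMap.ext modConst_normalized
  map_mul' π σ := by
    ext u s
    simp only [LinearMap.comp_apply, LinearMap.pi_apply, LinearMap.proj_apply,
      LinearMap.funLeft_apply, modConst_apply, normalized_modConst_apply, Module.End.mul_apply,
      sub_sub_sub_cancel_right]
    rfl

lemma reducedPerm_modConst (π : Placement C Γ) (F : C → Γ → 𝕜) :
    reducedPerm π (modConst F) = modConst fun c g => F c ((π c).symm g) := by
  ext s
  simp [reducedPerm, modConst_apply, normalized_modConst_apply, LinearMap.funLeft_apply]

/-- The class of the function with the single nonzero value `y c` at `g` in each color `c`: this is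
`y ⊗ g` under the identification of `C → (Γ → 𝕜) ⧸ 𝕜` with `(C → 𝕜) ⊗ (Γ → 𝕜) ⧸ 𝕜`. -/
noncomputable def tensor (y : C → 𝕜) (g : Γ) : Slot C Γ → 𝕜 := modConst fun c => Pi.single g (y c)

lemma reducedPerm_tensor_single (π : Placement C Γ) (c : C) (a : 𝕜) (g : Γ) :
    reducedPerm π (tensor (Pi.single c a) g) = tensor (Pi.single c a) (π c g) := by
  rw [tensor, reducedPerm_modConst, tensor]
  congr 1
  funext c' k
  rcases eq_or_ne c' c with rfl | hc
  · simp only [Pi.single_apply, Equiv.symm_apply_eq]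
  · simp only [Pi.single_eq_of_ne hc, Pi.single_zero, Pi.zero_apply]

/-- The action of `Γ` by left translation on functions on `Γ` modulo constants, one for each
color. -/
noncomputable def reducedRegular : Representation 𝕜 Γ (Slot C Γ → 𝕜) := reducedPerm.comp rot

lemma reducedRegular_tensor (g h : Γ) (y : C → 𝕜) :
    reducedRegular g (tensor y h) = tensor y (g * h) := by
  rw [reducedRegular, MonoidHom.comp_apply, tensor, reducedPerm_modConst, tensor]
  congr 1
  funext c k
  simp only [Pi.single_apply, Equiv.symm_apply_eq]
  rfl

lemma tensor_single (c : C) {g : Γ} (hg : g ≠ 1) :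
    tensor (Pi.single c (1 : 𝕜)) g = Pi.single (c, ⟨g, hg⟩) 1 := by
  ext ⟨c', g', hg'⟩
  rcases eq_or_ne c' c with rfl | hc
  · simp [tensor, modConst_apply, Pi.single_apply, hg.symm]
  · simp [tensor, modConst_apply, hc]

end ReducedPerm

section TestConfiguration

open Matrix Topology

variable {C Γ : Type*} [Group Γ]

/-- The configuration `(1, …, 1) ⊗ 1` together with the vectors `e_c ⊗ 1`, each of the latter
repeated at all points of color `c`. -/
noncomputable def testConfiguration : Option (Slot C Γ) → Slot C Γ → ℝ
  | none => tensor 1 1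
  | some s => tensor (Pi.single s.1 1) 1

lemma place_testConfiguration_none (π : Placement C Γ) :
    place reducedRegular π testConfiguration none = tensor 1 1 := by
  rw [place, block, map_one]
  rfl

lemma place_testConfiguration_some (π : Placement C Γ) (s : Slot C Γ) :
    place reducedRegular π testConfiguration (some s) = reducedPerm π (Pi.single s 1) := by
  rw [← tensor_single s.1 s.2.2, reducedPerm_tensor_single]
  exact (reducedRegular_tensor _ _ _).trans (by rw [mul_one]; rfl)

variable [Fintype C] [Fintype Γ]

lemma facet_place_testConfiguration (π : Placement C Γ) :
    facet (place reducedRegular π testConfiguration)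
      = (LinearMap.toMatrix' (reducedPerm (𝕜 := ℝ) π))ᵀ := by
  ext s t
  rw [transpose_apply, LinearMap.toMatrix'_apply, ← place_testConfiguration_some]
  rfl

lemma det_facet_place_testConfiguration (π : Placement C Γ) :
    (facet (place reducedRegular π testConfiguration)).det
      = LinearMap.det (reducedPerm (𝕜 := ℝ) π) := by
  rw [facet_place_testConfiguration, det_transpose, LinearMap.det_toMatrix']

lemma tensor_one_eq_vecMul_facet (π : Placement C Γ) :
    tensor 1 1 = (modConst fun c g => (Pi.single 1 1 : Γ → ℝ) (π c g))
      ᵥ* facet (place reducedRegular π testConfiguration) := by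
  rw [facet_place_testConfiguration, vecMul_transpose, LinearMap.toMatrix'_mulVec,
    reducedPerm_modConst]
  simp only [Equiv.apply_symm_apply]
  rfl

lemma det_reducedPerm {𝕜 : Type*} [CommRing 𝕜] {π : Placement C Γ} (hπ : ∀ c, π c 1 = 1) :
    LinearMap.det (reducedPerm (𝕜 := 𝕜) π) = ((placementSign π : ℤ) : 𝕜) := by
  have hne (c : C) (g : Γ) : π c g ≠ 1 ↔ g ≠ 1 := by
    rw [Ne, Ne, ← hπ c, (π c).apply_eq_iff_eq, hπ c]
  let σ : Equiv.Perm (Slot C Γ) := Equiv.prodCongrRight fun c => (π c).subtypePerm (hne c)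
  have hmatrix : (LinearMap.toMatrix' (reducedPerm (𝕜 := 𝕜) π))ᵀ
      = (1 : Matrix (Slot C Γ) (Slot C Γ) 𝕜).submatrix σ id := by
    ext s t
    rw [transpose_apply, LinearMap.toMatrix'_apply, ← tensor_single s.1 s.2.2,
      reducedPerm_tensor_single, tensor_single _ ((hne _ _).2 s.2.2)]
    exact one_eq_pi_single.symm
  have hsign : Equiv.Perm.sign σ = placementSign π := by
    rw [Equiv.Perm.sign_prodCongrRight, placementSign_apply]
    exact prod_congr rfl fun c _ => Equiv.Perm.sign_subtypePerm _ _ fun g hg h => hg (by rw [h, hπ])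
  rw [← LinearMap.det_toMatrix', ← det_transpose, hmatrix, det_permute, det_one, mul_one, hsign]

lemma det_facet_place_testConfiguration_ne_zero (π : Placement C Γ) :
    (facet (place reducedRegular π testConfiguration)).det ≠ 0 := by
  rw [det_facet_place_testConfiguration]
  exact det_representation_ne_zero (Γ := Placement C Γ) (reducedPerm (𝕜 := ℝ)) π

lemma eventually_originSign_place_eq_placementSign {π : Placement C Γ} (hπ : ∀ c, π c 1 = 1) :
    ∀ᶠ w in 𝓝 testConfiguration,
      originSign (place reducedRegular π w) = placementSign π := by
  have hnone := (place_testConfiguration_none π).trans (tensor_one_eq_vecMul_facet π)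
  have hneg (s : Slot C Γ) : modConst (fun c g => (Pi.single 1 1 : Γ → ℝ) (π c g)) s < 0 := by
    have hs : π s.1 s.2 ≠ 1 := fun h => s.2.2 ((π s.1).injective (h.trans (hπ s.1).symm))
    simp [modConst_apply, hπ, Pi.single_apply, hs]
  have hsign := eventually_originSign_eq_sign_det
    (det_facet_place_testConfiguration_ne_zero π) hnone hneg
  filter_upwards [(isHomeomorph_place reducedRegular π).continuous.continuousAt.eventually
    hsign] with w hw
  rw [hw, det_facet_place_testConfiguration, det_reducedPerm hπ]
  rcases Int.units_eq_one_or (placementSign π) with h | h <;> simp [h]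

lemma eventually_originSign_place_eq_zero {π : Placement C Γ} {c : C} (hc : π c 1 ≠ 1) :
    ∀ᶠ w in 𝓝 testConfiguration, originSign (place reducedRegular π w) = 0 := by
  have hnone := (place_testConfiguration_none π).trans (tensor_one_eq_vecMul_facet π)
  have hne : (π c).symm 1 ≠ 1 := fun h => hc ((Equiv.symm_apply_eq _).1 h).symm
  have hpos : 0 < modConst (fun c g => (Pi.single 1 1 : Γ → ℝ) (π c g)) (c, ⟨_, hne⟩) := by
    simp [modConst_apply, Pi.single_apply, hc]
  have hzero := eventually_originSign_eq_zero
    (det_facet_place_testConfiguration_ne_zero π) hnone hpos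
  exact (isHomeomorph_place reducedRegular π).continuous.continuousAt.eventually hzero

/-- The coordinates of `(1, …, 1) ⊗ 1` in the placed basis are all `-1` if `π` leaves the block `1`
to the uncolored point, and one of them is `1` otherwise. -/
theorem eventually_degree_eq :
    ∀ᶠ w in 𝓝 (testConfiguration : Option (Slot C Γ) → Slot C Γ → ℝ),
      degree reducedRegular w = #{π : Placement C Γ | ∀ c, π c 1 = 1} := by
  have hterm (π : Placement C Γ) : ∀ᶠ w in 𝓝 testConfiguration,
      (placementSign π : ℤ) * originSign (place reducedRegular π w)
        = if ∀ c, π c 1 = 1 then 1 else 0 := by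
    split_ifs with hπ
    · filter_upwards [eventually_originSign_place_eq_placementSign hπ] with w hw
      rw [hw, Int.units_coe_mul_self]
    · obtain ⟨c, hc⟩ := not_forall.1 hπ
      filter_upwards [eventually_originSign_place_eq_zero hc] with w hw
      rw [hw, mul_zero]
  filter_upwards [Filter.eventually_all.2 hterm] with w hw
  rw [degree, sum_congr rfl fun π _ => hw π, sum_boole]

lemma card_setOf_fix_one : #{π : Placement C Γ | ∀ c, π c 1 = 1}
    = (Fintype.card Γ - 1).factorial ^ Fintype.card C := by
  have hpi : ({π : Placement C Γ | ∀ c, π c 1 = 1} : Finset _)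
      = Fintype.piFinset fun _ => {σ : Equiv.Perm Γ | σ 1 = 1} := by
    ext π
    simp
  have hstab : #{σ : Equiv.Perm Γ | σ 1 = 1} = (Fintype.card Γ - 1).factorial := by
    rw [← Fintype.card_subtype, ← Set.card_ne_eq (1 : Γ), ← Fintype.card_perm]
    refine Fintype.card_congr (.trans (.subtypeEquivRight fun σ => ?_)
      (Equiv.Perm.subtypeEquivSubtypePerm fun g : Γ => g ≠ 1).symm)
    simp
  rw [hpi, Fintype.card_piFinset, prod_const, card_univ, hstab]

end TestConfiguration

/-! ### Sarkaria's transformation -/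

section Sarkaria

variable {C Γ : Type*} [Group Γ]

lemma sum_smul_tensor {κ 𝕜 : Type*} [Fintype κ] [CommRing 𝕜] (t : κ → 𝕜) (y : κ → C → 𝕜)
    (b : κ → Γ) :
    ∑ k, t k • tensor (y k) (b k) = modConst fun c g => (∑ k with b k = g, t k • y k) c := by
  simp only [tensor, ← map_smul, ← map_sum]
  congr 1
  funext c g
  simp only [Finset.sum_apply, Pi.smul_apply, Pi.single_apply, smul_eq_mul, mul_ite, mul_zero,
    sum_filter, eq_comm (a := g)]

lemma blockSum_eq_of_sum_smul_tensor_eq_zero {κ 𝕜 : Type*} [Fintype κ] [CommRing 𝕜] {t : κ → 𝕜}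
    {y : κ → C → 𝕜} {b : κ → Γ} (h : ∑ k, t k • tensor (y k) (b k) = 0) (g : Γ) :
    ∑ k with b k = g, t k • y k = ∑ k with b k = 1, t k • y k := by
  rcases eq_or_ne g 1 with rfl | hg
  · rfl
  rw [sum_smul_tensor] at h
  exact funext fun c => sub_eq_zero.1 (congrFun h (c, ⟨g, hg⟩))

/-- Sarkaria's trick: if a convex combination of tensors of homogenized points vanishes, then all
blocks have the same total weight and the same barycenter. -/
lemma nonempty_iInter_convexHull_of_zero_mem [Finite Γ] {κ 𝕜 E : Type*} [Finite κ] [Field 𝕜]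
    [LinearOrder 𝕜] [IsStrictOrderedRing 𝕜] [AddCommGroup E] [Module 𝕜 E] {L : 𝕜 × E →ₗ[𝕜] C → 𝕜}
    (hL : Function.Injective L) {x : κ → E} {b : κ → Γ}
    (h : 0 ∈ convexHull 𝕜 (Set.range fun k => tensor (L (1, x k)) (b k))) :
    (⋂ g, convexHull 𝕜 (x '' {k | b k = g})).Nonempty := by
  cases nonempty_fintype Γ
  cases nonempty_fintype κ
  obtain ⟨t, ⟨ht₀, ht₁⟩, hsum⟩ := mem_convexHull_range_iff.1 h
  obtain ⟨⟨τ, y⟩, hblock⟩ : ∃ z, ∀ g, ∑ k with b k = g, t k • ((1 : 𝕜), x k) = z := by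
    refine ⟨∑ k with b k = 1, t k • ((1 : 𝕜), x k), fun g => hL ?_⟩
    simpa only [map_sum, map_smul] using blockSum_eq_of_sum_smul_tensor_eq_zero hsum g
  have hweight (g : Γ) : ∑ k with b k = g, t k = τ := by
    simpa [Prod.fst_sum] using congrArg Prod.fst (hblock g)
  have hpoint (g : Γ) : ∑ k with b k = g, t k • x k = y := by
    simpa [Prod.snd_sum] using congrArg Prod.snd (hblock g)
  have hτ : 0 < τ := by
    have hcard : Fintype.card Γ • τ = 1 := by
      rw [← ht₁, ← sum_fiberwise univ b, sum_congr rfl fun g _ => hweight g, sum_const, card_univ]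
    exact pos_of_smul_pos_left (hcard ▸ one_pos) (Nat.zero_le _)
  refine ⟨τ⁻¹ • y, Set.mem_iInter.2 fun g => ?_⟩
  have hmem := centerMass_mem_convexHull (R := 𝕜) (s := x '' {k | b k = g}) {k | b k = g}
    (fun k _ => ht₀ k) (by rwa [hweight]) fun k hk => ⟨k, (mem_filter.1 hk).2, rfl⟩
  rwa [centerMass, hweight, hpoint] at hmem

theorem exists_placement_nonempty_iInter_convexHull [Fintype C] [Fintype Γ] {E : Type*}
    [AddCommGroup E] [Module ℝ E] [FiniteDimensional ℝ E] (hp : (Fintype.card Γ).Prime)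
    (hC : Fintype.card C = Module.finrank ℝ E + 1) (x : Option (Slot C Γ) → E) :
    ∃ π : Placement C Γ, (⋂ g, convexHull ℝ (x '' {o | block π o = g})).Nonempty := by
  have hN : ¬ (Fintype.card Γ : ℤ) ∣ (#{π : Placement C Γ | ∀ c, π c 1 = 1} : ℕ) := by
    rw [Int.natCast_dvd_natCast, card_setOf_fix_one]
    intro hdvd
    have := hp.dvd_factorial.1 (hp.dvd_of_dvd_pow hdvd)
    have := hp.pos
    lia
  let L : (ℝ × E) ≃ₗ[ℝ] (C → ℝ) := LinearEquiv.ofFinrankEq _ _ (by simp [hC, add_comm])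
  obtain ⟨π, hπ⟩ := exists_placement_zero_mem_convexHull hp hN eventually_degree_eq
    fun o => tensor (L (1, x o)) 1
  refine ⟨π, nonempty_iInter_convexHull_of_zero_mem (L := L.toLinearMap) L.injective ?_⟩
  convert hπ using 3
  funext o
  rw [place, reducedRegular_tensor, mul_one]
  rfl

end Sarkaria

/-! ### The colored Tverberg theorem -/

section Rainbow

variable {n : ℕ} {Γ : Type*} [Group Γ]

/-- The color of each point; the uncolored point `none` receives a color of its own. -/
def pointColor : Option (Slot (Fin n) Γ) → Fin (n + 1)
  | none => Fin.last n
  | some s => s.1.castSucc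

lemma eq_of_block_eq_of_pointColor_eq {π : Placement (Fin n) Γ} {o o' : Option (Slot (Fin n) Γ)}
    (hblock : block π o = block π o') (hcolor : pointColor o = pointColor o') : o = o' := by
  rcases o with _ | ⟨c, g⟩ <;> rcases o' with _ | ⟨c', g'⟩
  · rfl
  · exact absurd hcolor.symm (Fin.castSucc_ne_last _)
  · exact absurd hcolor (Fin.castSucc_ne_last _)
  · obtain rfl := Fin.castSucc_injective n hcolor
    obtain rfl := Subtype.ext ((π c).injective hblock)
    rfl

variable [Fintype Γ]

lemma card_setOf_pointColor_eq (j : Fin (n + 1)) :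
    #{o : Option (Slot (Fin n) Γ) | pointColor o = j}
      = if (j : ℕ) = n then 1 else Fintype.card Γ - 1 := by
  rw [card_filter, Fintype.sum_option, Fintype.sum_prod_type]
  cases j using Fin.lastCases with
  | last => simp [pointColor, Fin.castSucc_ne_last]
  | cast i => simp [pointColor, i.2.ne, (Fin.castSucc_ne_last i).symm]

lemma exists_equiv_pointColor_eq {α : Type*} {P : Finset α} {c : α → Fin (n + 1)}
    (hc : ∀ j : Fin (n + 1), #{x ∈ P | c x = j} = if (j : ℕ) = n then 1 else Fintype.card Γ - 1) :
    ∃ e : Option (Slot (Fin n) Γ) ≃ P, ∀ o, c (e o) = pointColor o := by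
  have hfiber (j : Fin (n + 1)) :
      Nonempty ({o : Option (Slot (Fin n) Γ) // pointColor o = j} ≃ {x : P // c x = j}) := by
    rw [← Fintype.card_eq, Fintype.card_subtype, card_setOf_pointColor_eq, ← hc,
      Fintype.card_subtype, card_filter, card_filter, ← sum_coe_sort P]
  let e (j : Fin (n + 1)) := (hfiber j).some
  exact ⟨Equiv.ofFiberEquiv (g := fun x : P => c x) e, Equiv.ofFiberEquiv_map e⟩

end Rainbow

end ColoredTverberg

open ColoredTverberg Finset in
theorem colored_tverberg_affine_general {E : Type*} [AddCommGroup E] [Module ℝ E]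
    [FiniteDimensional ℝ E] [DecidableEq E] {d r : ℕ} (hd : Module.finrank ℝ E = d)
    (hr : r.Prime) (P : Finset E) (c : E → Fin (d + 2))
    (hc : ∀ j : Fin (d + 2), #{x ∈ P | c x = j} = if (j : ℕ) = d + 1 then 1 else r - 1) :
    ∃ B : Fin r → Finset E,
      (∀ a b, a ≠ b → Disjoint (B a) (B b)) ∧
      univ.biUnion B = P ∧
      (∀ a j, #{x ∈ B a | c x = j} ≤ 1) ∧
      (⋂ a, convexHull ℝ (B a : Set E)).Nonempty := by
  let Γ := Multiplicative (ZMod r)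
  have : NeZero r := ⟨hr.ne_zero⟩
  have hcard : Fintype.card Γ = r := by rw [Fintype.card_multiplicative, ZMod.card]
  let e : Fin r ≃ Γ := (Fintype.equivFinOfCardEq hcard).symm
  obtain ⟨p, hp⟩ := exists_equiv_pointColor_eq (Γ := Γ) (hcard.symm ▸ hc)
  obtain ⟨π, hπ⟩ := exists_placement_nonempty_iInter_convexHull (Γ := Γ) (C := Fin (d + 1))
    (hcard.symm ▸ hr) (by rw [Fintype.card_fin, hd]) fun o => (p o : E)
  refine ⟨fun a => image (fun o => (p o : E)) {o | block π o = e a}, fun a b hab => ?_, ?_,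
    fun a j => ?_, ?_⟩
  · refine (disjoint_image (Subtype.val_injective.comp p.injective)).2 (disjoint_filter.2 ?_)
    exact fun o _ ha hb => hab (e.injective (ha.symm.trans hb))
  · ext z
    simp only [mem_biUnion, mem_image, mem_filter_univ, mem_univ, true_and]
    refine ⟨?_, fun hz => ⟨e.symm (block π (p.symm ⟨z, hz⟩)), p.symm ⟨z, hz⟩, by simp⟩⟩
    rintro ⟨a, o, -, rfl⟩
    exact (p o).2
  · simp only [card_le_one, mem_filter, mem_image, mem_univ, true_and]
    rintro _ ⟨⟨o, ho, rfl⟩, hoj⟩ _ ⟨⟨o', ho', rfl⟩, hoj'⟩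
    rw [hp] at hoj hoj'
    rw [eq_of_block_eq_of_pointColor_eq (ho.trans ho'.symm) (hoj.trans hoj'.symm)]
  · simpa [← e.surjective.iInter_comp] using hπ

/-- **Affine colored Tverberg theorem** (Blagojević–Matschke–Ziegler, affine case).
For `d ≥ 1`, `r ≥ 2` prime, `N = (d+1)(r-1)`, any set `P` of `N + 1` points in `ℝ^d`
colored with `d + 2` colors, with color classes `|C_0| = … = |C_d| = r - 1` and
`|C_{d+1}| = 1`, can be partitioned into `r` rainbow blocks whose convex hulls
intersect. -/
theorem colored_tverberg_affine (d r N : ℕ) (hd : 1 ≤ d) (hr : 2 ≤ r)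
    (hrp : Nat.Prime r) (hN : N = (d + 1) * (r - 1))
    (P : Finset (Fin d → ℝ)) (hP : P.card = N + 1)
    (c : (Fin d → ℝ) → Fin (d + 2))
    (hc : ∀ j : Fin (d + 2),
      (P.filter fun x => c x = j).card = if (j : ℕ) = d + 1 then 1 else r - 1) :
    ∃ B : Fin r → Finset (Fin d → ℝ),
      (∀ a b : Fin r, a ≠ b → Disjoint (B a) (B b)) ∧
      Finset.univ.biUnion B = P ∧
      (∀ a : Fin r, ∀ j : Fin (d + 2), ((B a).filter fun x => c x = j).card ≤ 1) ∧
      (⋂ a : Fin r, convexHull ℝ (B a : Set (Fin d → ℝ))).Nonempty := by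
  exact colored_tverberg_affine_general (Module.finrank_fin_fun ℝ) hrp P c hc
end
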